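/- If t > 1 and A ⊆ ℝ³ is H^t-measurable with 0 < H^t(A) < ∞, then there is a Borel set E ⊆ I with dim E ≤ (3−t)/2, such that for every H^t-measurable subset B ⊆ A with H^t(B) > 0 and every θ ∈ I ∖ E, one has H¹(ρ_θ(B)) > 0 (the same exceptional set E works simultaneously for all such B). -/

import Mathlib

open MeasureTheory Metric Set
open scoped ENNReal RealInnerProductSpace

noncomputable section

abbrev E3 : Type := EuclideanSpace ℝ (Fin 3)

/-- Orthogonal projection onto the line spanned by `γ θ`:  `ρ_θ x = ⟨x, γ θ⟩ γ θ`. -/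
def lineProj (γ : ℝ → E3) (θ : ℝ) (x : E3) : E3 := ⟪x, γ θ⟫ • γ θ

/-!
The restriction of `H^t` to `A` is, up to a null set, a countable union of compactly supported
pieces `μ` with `μ(B(x, r)) ≲ r ^ t`, so it is enough that for each of them the projected measure
`⟪·, γ θ⟫_* μ` is absolutely continuous for all `θ` outside a set of dimension at most
`(3 - t) / 2`.

If it is not, then at infinitely many frequencies `2 ^ J` the projected measure has an integral at
least `y ^ (-J)`, with `y > 1` arbitrarily close to `1`, against a test function of frequency about
`2 ^ J`. Pulled back to space, these test functions have their frequencies on the segments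
`±[1, 2] 2 ^ J γ θ` of the cone over `γ`. If the bad directions at stage `J` cannot be covered
efficiently by dyadic intervals, they carry a discrete Frostman measure `ν`; the `ν`-superposition
of the test functions with aligned phases has a large integral against the mollification of `μ` at
scale `2 ^ (-J)`, while its sixth moment is controlled by the `L⁶` decoupling inequality for the
cone. Comparing the two bounds gives covers with `(∑ s ^ j) ^ 3 ≲ (2 ^ (3 - t) s ^ 2) ^ J` up to
a factor `y ^ O(J)`, where `s = 2 ^ (-σ)`; this is summable in `J` as soon as `σ > (3 - t) / 2`.

Decoupling is proved by bilinear efficient congruencing. For separated arcs, the linear functional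
vanishing at `γ θ₀` and `γ' θ₀` separates the frequencies of the products `F_J g²`, where `g` has
frequencies near `γ θ₀`; hence these products are almost orthogonal and `F` may be split into
shorter arcs. Exchanging `F` and `g` by Cauchy-Schwarz and iterating improves any given exponent.
-/

/-! ### Bounded continuous functions -/

section BddContinuous

variable {X : Type*} [TopologicalSpace X]

/-- Bounded continuous functions: the class on which all integrals against finite measures below
are automatically finite. It is a predicate rather than the bundled `BoundedContinuousFunction`
because trigonometric polynomials are manipulated as elements of a span in `V → ℂ`. -/
def BddContinuous {F : Type*} [NormedAddCommGroup F] (f : X → F) : Prop :=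
  Continuous f ∧ ∃ C, ∀ x, ‖f x‖ ≤ C

namespace BddContinuous

section Group

variable {F : Type*} [NormedAddCommGroup F] {f g : X → F}

lemma zero : BddContinuous (0 : X → F) := ⟨continuous_zero, 0, by simp⟩

lemma add (hf : BddContinuous f) (hg : BddContinuous g) : BddContinuous (f + g) := by
  obtain ⟨hf, C, hC⟩ := hf
  obtain ⟨hg, D, hD⟩ := hg
  exact ⟨hf.add hg, C + D, fun x ↦ norm_add_le_of_le (hC x) (hD x)⟩

lemma norm (hf : BddContinuous f) : BddContinuous fun x ↦ ‖f x‖ :=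
  ⟨hf.1.norm, hf.2.imp fun _ hC x ↦ (norm_norm _).trans_le (hC x)⟩

variable [MeasurableSpace X] [OpensMeasurableSpace X] [SecondCountableTopology F]
  {m : Measure X} [IsFiniteMeasure m]

lemma memLp (hf : BddContinuous f) (p : ℝ≥0∞) : MemLp f p m :=
  hf.2.elim fun C hC ↦ .of_bound hf.1.aestronglyMeasurable C (.of_forall hC)

lemma integrable (hf : BddContinuous f) : Integrable f m := memLp_one_iff_integrable.1 (hf.memLp 1)

end Group

section Field

variable {𝕜 : Type*} [RCLike 𝕜] {f g : X → 𝕜}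

lemma mul (hf : BddContinuous f) (hg : BddContinuous g) : BddContinuous (f * g) := by
  obtain ⟨hf, C, hC⟩ := hf
  obtain ⟨hg, D, hD⟩ := hg
  refine ⟨hf.mul hg, C * D, fun x ↦ ?_⟩
  rw [Pi.mul_apply, norm_mul]
  exact mul_le_mul (hC x) (hD x) (norm_nonneg _) ((norm_nonneg _).trans (hC x))

lemma const_smul (c : 𝕜) (hf : BddContinuous f) : BddContinuous (c • f) :=
  mul (f := fun _ ↦ c) ⟨continuous_const, ‖c‖, fun _ ↦ le_rfl⟩ hf

lemma pow (hf : BddContinuous f) (n : ℕ) : BddContinuous fun x ↦ f x ^ n := by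
  obtain ⟨hf, C, hC⟩ := hf
  exact ⟨hf.pow n, C ^ n, fun x ↦ (norm_pow _ _).trans_le
    (pow_le_pow_left₀ (norm_nonneg _) (hC x) n)⟩

lemma conj (hf : BddContinuous f) : BddContinuous fun x ↦ starRingEnd 𝕜 (f x) :=
  ⟨RCLike.continuous_conj.comp hf.1, hf.2.imp fun _ hC x ↦ (RCLike.norm_conj _).trans_le (hC x)⟩

lemma norm_pow_mul_norm_pow (hf : BddContinuous f) (hg : BddContinuous g) (a b : ℕ) :
    BddContinuous fun x ↦ ‖f x‖ ^ a * ‖g x‖ ^ b :=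
  (hf.norm.pow a).mul (hg.norm.pow b)

lemma integrable_mul_conj [MeasurableSpace X] [OpensMeasurableSpace X] {m : Measure X}
    [IsFiniteMeasure m] (hf : BddContinuous f) (hg : BddContinuous g) :
    Integrable (fun x ↦ f x * starRingEnd 𝕜 (g x)) m :=
  (hf.mul hg.conj).integrable

end Field

end BddContinuous

end BddContinuous

/-! ### Trigonometric polynomials and almost orthogonality -/

section TrigPoly

variable {V : Type*} [NormedAddCommGroup V] [InnerProductSpace ℝ V]

/-- The plane wave `x ↦ exp (2πi⟨ω, x⟩)` of frequency `ω`. -/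
def planeWave (ω x : V) : ℂ := (Real.fourierChar ⟪ω, x⟫ : ℂ)

lemma norm_planeWave (ω x : V) : ‖planeWave ω x‖ = 1 := Circle.norm_coe _

lemma bddContinuous_planeWave (ω : V) : BddContinuous (planeWave ω) :=
  ⟨continuous_subtype_val.comp (Real.continuous_fourierChar.comp (by fun_prop)), 1,
    fun x ↦ (norm_planeWave ω x).le⟩

lemma planeWave_add (ω η : V) : planeWave (ω + η) = planeWave ω * planeWave η := by
  ext x
  simp [planeWave, inner_add_left, AddChar.map_add_eq_mul]

lemma planeWave_mul_conj (ω η x : V) :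
    planeWave ω x * starRingEnd ℂ (planeWave η x) = planeWave (ω - η) x := by
  simp [planeWave, inner_sub_left, AddChar.map_sub_eq_div, ← Circle.coe_inv_eq_conj,
    div_eq_mul_inv]

/-- The trigonometric polynomials with frequencies in `S`. -/
def trigPoly (S : Set V) : Submodule ℂ (V → ℂ) := Submodule.span ℂ (planeWave '' S)

lemma planeWave_mem_trigPoly {S : Set V} {ω : V} (hω : ω ∈ S) : planeWave ω ∈ trigPoly S :=
  Submodule.subset_span ⟨ω, hω, rfl⟩

lemma trigPoly_mono {S T : Set V} (h : S ⊆ T) : trigPoly S ≤ trigPoly T :=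
  Submodule.span_mono (image_mono h)

lemma bddContinuous_of_mem_trigPoly {S : Set V} {f : V → ℂ} (hf : f ∈ trigPoly S) :
    BddContinuous f := by
  induction hf using Submodule.span_induction with
  | mem f hf => obtain ⟨ω, -, rfl⟩ := hf; exact bddContinuous_planeWave ω
  | zero => exact .zero
  | add f g _ _ hf hg => exact hf.add hg
  | smul c f _ hf => exact hf.const_smul c

lemma mul_mem_trigPoly {S T : Set V} {f g : V → ℂ} (hf : f ∈ trigPoly S)
    (hg : g ∈ trigPoly T) : f * g ∈ trigPoly (image2 (· + ·) S T) := by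
  have h := Submodule.mul_mem_mul hf hg
  rw [trigPoly, trigPoly, Submodule.span_mul_span] at h
  refine Submodule.span_mono ?_ h
  rintro _ ⟨_, ⟨ω, hω, rfl⟩, _, ⟨η, hη, rfl⟩, rfl⟩
  exact ⟨ω + η, ⟨ω, hω, η, hη, rfl⟩, planeWave_add ω η⟩

variable [MeasurableSpace V]

/-- A measure whose Fourier transform vanishes outside the open ball of radius `r`. -/
def BandLimited (m : Measure V) (r : ℝ) : Prop :=
  ∀ ω : V, r ≤ ‖ω‖ → ∫ x, planeWave ω x ∂m = 0

lemma BandLimited.integral_mul_conj_eq_zero [OpensMeasurableSpace V] {m : Measure V}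
    [IsFiniteMeasure m] {r : ℝ} (hm : BandLimited m r) {S T : Set V}
    (hST : ∀ ω ∈ S, ∀ η ∈ T, r ≤ ‖ω - η‖) {f g : V → ℂ} (hf : f ∈ trigPoly S)
    (hg : g ∈ trigPoly T) : ∫ x, f x * starRingEnd ℂ (g x) ∂m = 0 := by
  have integrable {S T : Set V} {f g : V → ℂ} (hf : f ∈ trigPoly S) (hg : g ∈ trigPoly T) :
      Integrable (fun x ↦ f x * starRingEnd ℂ (g x)) m :=
    (bddContinuous_of_mem_trigPoly hf).integrable_mul_conj (bddContinuous_of_mem_trigPoly hg)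
  induction hf using Submodule.span_induction with
  | mem f hf =>
    obtain ⟨ω, hω, rfl⟩ := hf
    have hωS := planeWave_mem_trigPoly hω
    induction hg using Submodule.span_induction with
    | mem g hg =>
      obtain ⟨η, hη, rfl⟩ := hg
      simp_rw [planeWave_mul_conj]
      exact hm _ (hST ω hω η hη)
    | zero => simp
    | add g₁ g₂ h₁ h₂ ih₁ ih₂ =>
      simp_rw [Pi.add_apply, map_add, mul_add]
      rw [integral_add (integrable hωS h₁) (integrable hωS h₂), ih₁, ih₂, add_zero]
    | smul c g _ ih =>
      simp_rw [Pi.smul_apply, smul_eq_mul, map_mul, mul_left_comm _ (starRingEnd ℂ c)]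
      rw [integral_const_mul, ih, mul_zero]
  | zero => simp
  | add f₁ f₂ h₁ h₂ ih₁ ih₂ =>
    simp_rw [Pi.add_apply, add_mul]
    rw [integral_add (integrable h₁ hg) (integrable h₂ hg), ih₁, ih₂, add_zero]
  | smul c f _ ih =>
    simp_rw [Pi.smul_apply, smul_eq_mul, mul_assoc]
    rw [integral_const_mul, ih, mul_zero]

end TrigPoly

section AlmostOrthogonality

lemma integral_norm_sq_sum {X ι : Type*} [MeasurableSpace X] {m : Measure X} (s : Finset ι)
    (G : ι → X → ℂ)
    (hG : ∀ i ∈ s, ∀ j ∈ s, Integrable (fun x ↦ G i x * starRingEnd ℂ (G j x)) m) :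
    ∫ x, ‖∑ i ∈ s, G i x‖ ^ 2 ∂m =
      ∑ i ∈ s, ∑ j ∈ s, (∫ x, G i x * starRingEnd ℂ (G j x) ∂m).re := by
  have hexp : ∀ x, ((‖∑ i ∈ s, G i x‖ ^ 2 : ℝ) : ℂ) =
      ∑ i ∈ s, ∑ j ∈ s, G i x * starRingEnd ℂ (G j x) := by
    intro x
    rw [← Finset.sum_mul_sum, ← map_sum, Complex.mul_conj, Complex.normSq_eq_norm_sq]
  rw [← Complex.ofReal_re (∫ x, ‖∑ i ∈ s, G i x‖ ^ 2 ∂m), ← integral_complex_ofReal]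
  simp_rw [hexp]
  rw [integral_finsetSum _ fun i hi ↦ integrable_finsetSum _ fun j hj ↦ hG i hi j hj,
    Complex.re_sum]
  refine Finset.sum_congr rfl fun i hi ↦ ?_
  rw [integral_finsetSum _ fun j hj ↦ hG i hi j hj, Complex.re_sum]

lemma BddContinuous.re_integral_mul_conj_le {X : Type*} [TopologicalSpace X] [MeasurableSpace X]
    [OpensMeasurableSpace X] {m : Measure X} [IsFiniteMeasure m] {f g : X → ℂ}
    (hf : BddContinuous f) (hg : BddContinuous g) :
    (∫ x, f x * starRingEnd ℂ (g x) ∂m).re ≤ ((∫ x, ‖f x‖ ^ 2 ∂m) + ∫ x, ‖g x‖ ^ 2 ∂m) / 2 := by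
  have hfg := hf.integrable_mul_conj hg (m := m)
  have hf2 := (hf.norm.pow 2).integrable (m := m)
  have hg2 := (hg.norm.pow 2).integrable (m := m)
  calc (∫ x, f x * starRingEnd ℂ (g x) ∂m).re
      = ∫ x, (f x * starRingEnd ℂ (g x)).re ∂m := (integral_re hfg).symm
    _ ≤ ∫ x, (‖f x‖ ^ 2 + ‖g x‖ ^ 2) / 2 ∂m := by
      refine integral_mono hfg.re ((hf2.add hg2).div_const 2) fun x ↦ ?_
      refine (Complex.re_le_norm _).trans ?_
      rw [norm_mul, RCLike.norm_conj]
      linarith [two_mul_le_add_sq ‖f x‖ ‖g x‖]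
    _ = _ := by rw [integral_div, integral_add hf2 hg2]

lemma sum_sum_half_add_le_of_card_le {ι : Type*} (s : Finset ι) (near : ι → ι → Prop)
    [DecidableRel near] (hsymm : ∀ i j, near i j → near j i) (P : ℕ)
    (hP : ∀ i ∈ s, (s.filter (near i)).card ≤ P) {N : ι → ℝ} (hN : ∀ i, 0 ≤ N i) :
    ∑ i ∈ s, ∑ j ∈ s, (if near i j then (N i + N j) / 2 else 0) ≤ P * ∑ i ∈ s, N i := by
  have hrow : ∑ i ∈ s, ∑ j ∈ s, (if near i j then N i else 0) ≤ ∑ i ∈ s, P * N i := by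
    refine Finset.sum_le_sum fun i hi ↦ ?_
    rw [← Finset.sum_filter, Finset.sum_const, nsmul_eq_mul]
    exact mul_le_mul_of_nonneg_right (mod_cast hP i hi) (hN i)
  have hcol : ∑ i ∈ s, ∑ j ∈ s, (if near i j then N j else 0) =
      ∑ i ∈ s, ∑ j ∈ s, (if near i j then N i else 0) := by
    rw [Finset.sum_comm]
    simp only [fun i j ↦ show near i j ↔ near j i from ⟨hsymm i j, hsymm j i⟩]
  calc ∑ i ∈ s, ∑ j ∈ s, (if near i j then (N i + N j) / 2 else 0)
      = ((∑ i ∈ s, ∑ j ∈ s, if near i j then N i else 0) +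
          ∑ i ∈ s, ∑ j ∈ s, if near i j then N j else 0) / 2 := by
        simp_rw [← Finset.sum_add_distrib, Finset.sum_div]
        refine Finset.sum_congr rfl fun i _ ↦ Finset.sum_congr rfl fun j _ ↦ ?_
        split_ifs <;> simp
    _ ≤ ∑ i ∈ s, P * N i := by rw [hcol]; linarith
    _ = P * ∑ i ∈ s, N i := (Finset.mul_sum _ _ _).symm

lemma BandLimited.integral_norm_sq_sum_le {V : Type*} [NormedAddCommGroup V]
    [InnerProductSpace ℝ V] [MeasurableSpace V] [OpensMeasurableSpace V] {m : Measure V}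
    [IsFiniteMeasure m] {r : ℝ} (hm : BandLimited m r) {ι : Type*}
    (s : Finset ι) (G : ι → V → ℂ) (S : ι → Set V) (hG : ∀ i ∈ s, G i ∈ trigPoly (S i))
    (near : ι → ι → Prop) [DecidableRel near] (hsymm : ∀ i j, near i j → near j i) (P : ℕ)
    (hP : ∀ i ∈ s, (s.filter (near i)).card ≤ P)
    (hfar : ∀ i ∈ s, ∀ j ∈ s, ¬ near i j → ∀ ω ∈ S i, ∀ η ∈ S j, r ≤ ‖ω - η‖) :
    ∫ x, ‖∑ i ∈ s, G i x‖ ^ 2 ∂m ≤ P * ∑ i ∈ s, ∫ x, ‖G i x‖ ^ 2 ∂m := by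
  have hb i (hi : i ∈ s) : BddContinuous (G i) := bddContinuous_of_mem_trigPoly (hG i hi)
  rw [integral_norm_sq_sum s G fun i hi j hj ↦ (hb i hi).integrable_mul_conj (hb j hj)]
  refine le_trans (Finset.sum_le_sum fun i hi ↦ Finset.sum_le_sum fun j hj ↦ ?_)
    (sum_sum_half_add_le_of_card_le s near hsymm P hP fun i ↦
      integral_nonneg fun x ↦ sq_nonneg ‖G i x‖)
  split_ifs with hij
  · exact (hb i hi).re_integral_mul_conj_le (hb j hj)
  · rw [hm.integral_mul_conj_eq_zero (hfar i hi j hj hij) (hG i hi) (hG j hj), Complex.zero_re]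

end AlmostOrthogonality

/-! ### Dyadic intervals -/

section Dyadic

/-- The index `l` of the dyadic interval `[l / 2 ^ j, (l + 1) / 2 ^ j)` of generation `j` that
contains `θ`. -/
def dyadicIndex (j : ℕ) (θ : ℝ) : ℤ := ⌊(2 : ℝ) ^ j * θ⌋

lemma dyadicIndex_eq_iff {j : ℕ} {θ : ℝ} {l : ℤ} :
    dyadicIndex j θ = l ↔ l ≤ 2 ^ j * θ ∧ 2 ^ j * θ < l + 1 := Int.floor_eq_iff

/-- The indices of the dyadic intervals of generation `j + n` inside the interval of
generation `j` with index `l`; they do not depend on `j`. -/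
def children (n : ℕ) (l : ℤ) : Finset ℤ := Finset.Ico (l * 2 ^ n) ((l + 1) * 2 ^ n)

lemma mem_children {n : ℕ} {l l' : ℤ} : l' ∈ children n l ↔ l' / 2 ^ n = l := by
  rw [children, Finset.mem_Ico, Int.ediv_eq_iff_of_pos (by positivity), add_mul, one_mul]

lemma card_children (n : ℕ) (l : ℤ) : (children n l).card = 2 ^ n := by
  rw [children, Int.card_Ico, add_mul, one_mul, add_sub_cancel_left]
  exact_mod_cast Int.toNat_natCast (2 ^ n)

lemma children_zero (l : ℤ) : children 0 l = {l} := by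
  ext; simp [mem_children]

lemma mem_children_add {a b : ℕ} {l l₁ l₂ : ℤ} (h₁ : l₁ ∈ children a l)
    (h₂ : l₂ ∈ children b l₁) : l₂ ∈ children (a + b) l := by
  rw [mem_children] at *
  rw [add_comm a b, pow_add, ← Int.ediv_ediv_of_nonneg (by positivity), h₂, h₁]

lemma sum_children_add {M : Type*} [AddCommMonoid M] (a b : ℕ) (l : ℤ) (u : ℤ → M) :
    ∑ l' ∈ children (a + b) l, u l' = ∑ l₁ ∈ children a l, ∑ l₂ ∈ children b l₁, u l₂ := by
  rw [← Finset.sum_fiberwise_of_maps_to (g := fun l' : ℤ ↦ l' / 2 ^ b) (t := children a l)]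
  · refine Finset.sum_congr rfl fun l₁ h₁ ↦ Finset.sum_congr ?_ fun _ _ ↦ rfl
    ext l'
    rw [Finset.mem_filter, mem_children (l' := l') (l := l₁)]
    exact ⟨fun h ↦ h.2, fun h ↦ ⟨mem_children_add h₁ (mem_children.2 h), h⟩⟩
  · intro l' h
    rw [mem_children] at *
    rw [Int.ediv_ediv_of_nonneg (by positivity), ← pow_add, add_comm b a, h]

lemma dyadicIndex_add_ediv (j n : ℕ) (θ : ℝ) :
    dyadicIndex (j + n) θ / 2 ^ n = dyadicIndex j θ := by
  have h := Int.floor_div_natCast ((2 : ℝ) ^ (j + n) * θ) (2 ^ n)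
  push_cast at h
  rw [dyadicIndex, ← h, pow_add, mul_right_comm, mul_div_cancel_right₀ _ (by positivity),
    dyadicIndex]

lemma dyadicIndex_eq_of_mem_children {j n : ℕ} {l l' : ℤ} {θ : ℝ} (hl : l' ∈ children n l)
    (hθ : dyadicIndex (j + n) θ = l') : dyadicIndex j θ = l := by
  rw [← dyadicIndex_add_ediv j n, hθ, mem_children.1 hl]

lemma abs_sub_le_of_dyadicIndex_eq {j : ℕ} {θ θ' : ℝ} (h : dyadicIndex j θ = dyadicIndex j θ') :
    |θ - θ'| ≤ 1 / 2 ^ j := by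
  have h2 : (0 : ℝ) < 2 ^ j := by positivity
  rw [le_div_iff₀ h2, ← abs_of_pos h2, ← abs_mul, sub_mul, mul_comm θ, mul_comm θ']
  exact (Int.abs_sub_lt_one_of_floor_eq_floor h).le

lemma sub_one_div_le_abs_sub (j : ℕ) (θ θ' : ℝ) :
    ((|dyadicIndex j θ - dyadicIndex j θ'| : ℤ) - 1 : ℝ) / 2 ^ j ≤ |θ - θ'| := by
  obtain ⟨h₁, h₂⟩ := dyadicIndex_eq_iff.1 (rfl : dyadicIndex j θ = _)
  obtain ⟨h₁', h₂'⟩ := dyadicIndex_eq_iff.1 (rfl : dyadicIndex j θ' = _)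
  have h2 : (0 : ℝ) < 2 ^ j := by positivity
  rw [div_le_iff₀ h2, ← abs_of_pos h2, ← abs_mul, sub_le_iff_le_add, Int.cast_abs,
    Int.cast_sub, abs_le']
  have := le_abs_self ((θ - θ') * 2 ^ j)
  have := neg_le_abs ((θ - θ') * 2 ^ j)
  constructor <;> linarith

lemma add_one_div_le_of_dyadicIndex {j : ℕ} {θ θ' : ℝ}
    (h : dyadicIndex j θ + 2 ≤ dyadicIndex j θ') : θ + 1 / 2 ^ j ≤ θ' := by
  obtain ⟨-, h₂⟩ := dyadicIndex_eq_iff.1 (rfl : dyadicIndex j θ = _)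
  obtain ⟨h₁', -⟩ := dyadicIndex_eq_iff.1 (rfl : dyadicIndex j θ' = _)
  have h2 : (0 : ℝ) < 2 ^ j := by positivity
  have h' : (dyadicIndex j θ + 2 : ℝ) ≤ dyadicIndex j θ' := by exact_mod_cast h
  rw [← le_sub_iff_add_le', div_le_iff₀ h2]
  linarith

/-- The sum of the `f θ` over the `θ ∈ Θ` in the dyadic interval of generation `j` with
index `l`. -/
def arcSum {M : Type*} [AddCommMonoid M] (Θ : Finset ℝ) (f : ℝ → M) (j : ℕ) (l : ℤ) : M :=
  ∑ θ ∈ Θ with dyadicIndex j θ = l, f θ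

lemma arcSum_eq_sum_children {M : Type*} [AddCommMonoid M] (Θ : Finset ℝ) (f : ℝ → M)
    (j n : ℕ) (l : ℤ) :
    arcSum Θ f j l = ∑ l' ∈ children n l, arcSum Θ f (j + n) l' := by
  unfold arcSum
  rw [← Finset.sum_fiberwise_of_maps_to (g := dyadicIndex (j + n)) (t := children n l)]
  · refine Finset.sum_congr rfl fun l' hl' ↦ Finset.sum_congr ?_ fun _ _ ↦ rfl
    ext θ
    simp only [Finset.mem_filter, and_assoc, and_congr_right_iff, and_iff_right_iff_imp]
    exact fun _ ↦ dyadicIndex_eq_of_mem_children hl'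
  · intro θ hθ
    rw [mem_children, dyadicIndex_add_ediv, (Finset.mem_filter.1 hθ).2]

end Dyadic

/-! ### `L⁶` norms and the mixed integral -/

section Norms

variable {X : Type*} [MeasurableSpace X]

/-- The square of the `L⁶` norm, written as the `L³` norm of the square so that it is
subadditive up to constants. -/
def sqNorm (m : Measure X) (f : X → ℂ) : ℝ := lpNorm (fun x ↦ ‖f x‖ ^ 2) 3 m

/-- The mixed integral `∫ |f|² |g|⁴`, which measures the interaction of two arcs. -/
def mixedIntegral (m : Measure X) (f g : X → ℂ) : ℝ := ∫ x, ‖f x‖ ^ 2 * ‖g x‖ ^ 4 ∂m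

lemma sqNorm_nonneg (m : Measure X) (f : X → ℂ) : 0 ≤ sqNorm m f := lpNorm_nonneg

lemma mixedIntegral_nonneg (m : Measure X) (f g : X → ℂ) : 0 ≤ mixedIntegral m f g :=
  integral_nonneg fun x ↦ by positivity

lemma lpNorm_natCast_pow {m : Measure X} {n : ℕ} (hn : n ≠ 0) {u : X → ℝ}
    (hu : AEStronglyMeasurable u m) (hu0 : ∀ x, 0 ≤ u x) :
    lpNorm u n m ^ n = ∫ x, u x ^ n ∂m := by
  rw [lpNorm_eq_integral_norm_rpow_toReal (mod_cast hn) (ENNReal.natCast_ne_top n) hu]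
  simp only [ENNReal.toReal_natCast, Real.norm_of_nonneg (hu0 _), Real.rpow_natCast]
  exact Real.rpow_inv_natCast_pow (integral_nonneg fun x ↦ pow_nonneg (hu0 x) n) hn

variable [TopologicalSpace X] [OpensMeasurableSpace X]

namespace BddContinuous

variable {m : Measure X} [IsFiniteMeasure m] {f g : X → ℂ}

lemma sqNorm_pow_three (hf : BddContinuous f) : sqNorm m f ^ 3 = ∫ x, ‖f x‖ ^ 6 ∂m := by
  have h := lpNorm_natCast_pow three_ne_zero
    ((hf.norm.pow 2).memLp 1 (m := m)).aestronglyMeasurable fun x ↦ sq_nonneg ‖f x‖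
  simp only [← pow_mul] at h
  exact_mod_cast h

lemma integral_mul_sq_le (hf : BddContinuous f) (hg : BddContinuous g) (a b c d : ℕ) :
    (∫ x, ‖f x‖ ^ (a + c) * ‖g x‖ ^ (b + d) ∂m) ^ 2 ≤
      (∫ x, ‖f x‖ ^ (2 * a) * ‖g x‖ ^ (2 * b) ∂m) *
        ∫ x, ‖f x‖ ^ (2 * c) * ‖g x‖ ^ (2 * d) ∂m := by
  have hCS := integral_mul_le_Lp_mul_Lq_of_nonneg (μ := m) (p := 2) (q := 2)
    Real.HolderConjugate.two_two
    (f := fun x ↦ ‖f x‖ ^ a * ‖g x‖ ^ b) (g := fun x ↦ ‖f x‖ ^ c * ‖g x‖ ^ d)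
    (.of_forall fun x ↦ by positivity) (.of_forall fun x ↦ by positivity)
    ((hf.norm_pow_mul_norm_pow hg a b).memLp _) ((hf.norm_pow_mul_norm_pow hg c d).memLp _)
  have hmul : ∀ x, ‖f x‖ ^ a * ‖g x‖ ^ b * (‖f x‖ ^ c * ‖g x‖ ^ d) =
      ‖f x‖ ^ (a + c) * ‖g x‖ ^ (b + d) := fun x ↦ by ring
  have hsq : ∀ x (a b : ℕ), (‖f x‖ ^ a * ‖g x‖ ^ b) ^ (2 : ℝ) =
      ‖f x‖ ^ (2 * a) * ‖g x‖ ^ (2 * b) := fun x a b ↦ by rw [Real.rpow_two]; ring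
  simp_rw [hmul, hsq, ← Real.sqrt_eq_rpow] at hCS
  rw [← Real.sqrt_mul (integral_nonneg fun x ↦ by positivity)] at hCS
  refine (pow_le_pow_left₀ (integral_nonneg fun x ↦ by positivity) hCS 2).trans_eq
    (Real.sq_sqrt (mul_nonneg ?_ ?_)) <;> exact integral_nonneg fun x ↦ by positivity

lemma mixedIntegral_sq_le (hf : BddContinuous f) (hg : BddContinuous g) :
    mixedIntegral m f g ^ 2 ≤ mixedIntegral m g f * sqNorm m g ^ 3 := by
  rw [hg.sqNorm_pow_three]
  simpa [mixedIntegral, mul_comm] using hf.integral_mul_sq_le hg 2 1 0 3 (m := m)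

lemma mixedIntegral_le (hf : BddContinuous f) (hg : BddContinuous g) :
    mixedIntegral m f g ≤ sqNorm m f * sqNorm m g ^ 2 := by
  have hfg := hf.mixedIntegral_sq_le hg (m := m)
  have hgf := hg.mixedIntegral_sq_le hf (m := m)
  have hF := sqNorm_nonneg m f
  rcases (mixedIntegral_nonneg m f g).eq_or_lt with h0 | h0
  · rw [← h0]
    exact mul_nonneg hF (sq_nonneg _)
  suffices h : mixedIntegral m f g ^ 3 ≤ (sqNorm m f * sqNorm m g ^ 2) ^ 3 from
    le_of_pow_le_pow_left₀ three_ne_zero (by positivity) h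
  refine le_of_mul_le_mul_left ?_ h0
  calc mixedIntegral m f g * mixedIntegral m f g ^ 3 = (mixedIntegral m f g ^ 2) ^ 2 := by ring
    _ ≤ (mixedIntegral m g f * sqNorm m g ^ 3) ^ 2 := by gcongr
    _ = mixedIntegral m g f ^ 2 * sqNorm m g ^ 6 := by ring
    _ ≤ (mixedIntegral m f g * sqNorm m f ^ 3) * sqNorm m g ^ 6 := by gcongr
    _ = mixedIntegral m f g * (sqNorm m f * sqNorm m g ^ 2) ^ 3 := by ring

lemma lpNorm_norm_mul_norm_pow_le (hf : BddContinuous f) (hg : BddContinuous g) :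
    lpNorm (fun x ↦ ‖f x‖ * ‖g x‖) 3 m ^ 6 ≤ mixedIntegral m f g * mixedIntegral m g f := by
  have hcube := lpNorm_natCast_pow three_ne_zero
    ((hf.norm.mul hg.norm).memLp 1 (m := m)).aestronglyMeasurable
    fun x ↦ mul_nonneg (norm_nonneg (f x)) (norm_nonneg (g x))
  simp only [Pi.mul_apply, mul_pow] at hcube
  have hCS := hf.integral_mul_sq_le hg 1 2 2 1 (m := m)
  calc lpNorm (fun x ↦ ‖f x‖ * ‖g x‖) 3 m ^ 6
      = (∫ x, ‖f x‖ ^ 3 * ‖g x‖ ^ 3 ∂m) ^ 2 := by rw [← hcube, ← pow_mul]; rfl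
    _ ≤ _ := by simpa [mixedIntegral, mul_comm] using hCS

end BddContinuous

lemma sqNorm_sum_le {m : Measure X} [IsFiniteMeasure m] {ι : Type*} (s : Finset ι)
    (f : ι → X → ℂ) (hf : ∀ i ∈ s, BddContinuous (f i)) :
    sqNorm m (∑ i ∈ s, f i) ≤ s.card * ∑ i ∈ s, sqNorm m (f i) := by
  have hmem : ∀ i ∈ s, MemLp (fun x ↦ ‖f i x‖ ^ 2) 3 m := fun i hi ↦ ((hf i hi).norm.pow 2).memLp 3
  calc sqNorm m (∑ i ∈ s, f i)
      ≤ lpNorm ((s.card : ℝ) • ∑ i ∈ s, fun x ↦ ‖f i x‖ ^ 2) 3 m := by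
        refine lpNorm_mono_real ((memLp_finsetSum' s hmem).const_smul _) fun x ↦ ?_
        rw [norm_pow, norm_norm, Pi.smul_apply, Finset.sum_apply, Finset.sum_apply, smul_eq_mul]
        calc ‖∑ i ∈ s, f i x‖ ^ 2 ≤ (∑ i ∈ s, ‖f i x‖) ^ 2 := by gcongr; exact norm_sum_le _ _
          _ ≤ s.card * ∑ i ∈ s, ‖f i x‖ ^ 2 := sq_sum_le_card_mul_sum_sq
    _ ≤ s.card * ∑ i ∈ s, sqNorm m (f i) := by
        rw [lpNorm_const_smul, Real.nnnorm_natCast, NNReal.coe_natCast]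
        gcongr
        exact lpNorm_sum_le hmem (by norm_num)

end Norms

/-! ### Decoupling for the cone over a nondegenerate curve -/

section ConePiece

variable {V : Type*} [NormedAddCommGroup V] [InnerProductSpace ℝ V] {γ : ℝ → V} {U : Set ℝ}

/-- Quantitative nondegeneracy of `γ` on `U`: at each point of `U` some linear functional vanishes
to exactly second order along `γ`, the lower bound being stated for its increments. -/
def QuadNondeg (γ : ℝ → V) (U : Set ℝ) (c₁ c₂ : ℝ) : Prop :=
  ∀ θ₀ ∈ U, ∃ L : V →L[ℝ] ℝ, (∀ x, |L x| ≤ c₂ * ‖x‖) ∧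
    (∀ θ ∈ U, |L (γ θ)| ≤ c₂ * (θ - θ₀) ^ 2) ∧
    ∀ d, 0 ≤ d → ∀ θ₁ ∈ U, ∀ θ₂ ∈ U,
      (θ₀ + d ≤ θ₁ ∧ θ₀ + d ≤ θ₂ ∨ θ₁ + d ≤ θ₀ ∧ θ₂ + d ≤ θ₀) →
      c₁ * d * |θ₁ - θ₂| ≤ |L (γ θ₁) - L (γ θ₂)|

/-- The points `k • γ θ` with `k` within relative distance `κ` of `K`. -/
def rayPiece (γ : ℝ → V) (K κ θ : ℝ) : Set V := {ω | ∃ k, |k - K| ≤ κ * |K| ∧ ω = k • γ θ}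

lemma rayPiece_mono {K κ κ' θ : ℝ} (h : κ ≤ κ') : rayPiece γ K κ θ ⊆ rayPiece γ K κ' θ := by
  rintro _ ⟨k, hk, rfl⟩
  exact ⟨k, hk.trans (by gcongr), rfl⟩

/-- The part of the truncated cone over `γ` above the dyadic interval of generation `j` with
index `l`. -/
def conePiece (γ : ℝ → V) (U : Set ℝ) (K κ : ℝ) (j : ℕ) (l : ℤ) : Set V :=
  {ω | ∃ θ ∈ U, dyadicIndex j θ = l ∧ ω ∈ rayPiece γ K κ θ}

/-- The functions `f θ`, for `θ ∈ Θ ⊆ U`, are trigonometric polynomials with frequencies on the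
ray through `γ θ`, at distance comparable to `|K|` from the origin. -/
def Radial (γ : ℝ → V) (U : Set ℝ) (K κ : ℝ) (Θ : Finset ℝ) (f : ℝ → V → ℂ) : Prop :=
  ∀ θ ∈ Θ, θ ∈ U ∧ f θ ∈ trigPoly (rayPiece γ K κ θ)

namespace Radial

variable {K κ κ' : ℝ} {Θ : Finset ℝ} {f : ℝ → V → ℂ}

lemma mono (hf : Radial γ U K κ Θ f) (h : κ ≤ κ') : Radial γ U K κ' Θ f :=
  fun θ hθ ↦ ⟨(hf θ hθ).1, trigPoly_mono (rayPiece_mono h) (hf θ hθ).2⟩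

lemma arcSum_mem (hf : Radial γ U K κ Θ f) (j : ℕ) (l : ℤ) :
    arcSum Θ f j l ∈ trigPoly (conePiece γ U K κ j l) := by
  refine Submodule.sum_mem _ fun θ hθ ↦ ?_
  obtain ⟨hθ, hl⟩ := Finset.mem_filter.1 hθ
  have hsub : rayPiece γ K κ θ ⊆ conePiece γ U K κ j l := fun ω hω ↦ ⟨θ, (hf θ hθ).1, hl, hω⟩
  exact trigPoly_mono hsub (hf θ hθ).2

lemma bddContinuous_arcSum (hf : Radial γ U K κ Θ f) (j : ℕ) (l : ℤ) :
    BddContinuous (arcSum Θ f j l) :=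
  bddContinuous_of_mem_trigPoly (hf.arcSum_mem j l)

end Radial

lemma abs_map_sub_le_of_mem_rayPiece {L : V →L[ℝ] ℝ} {K κ θ B : ℝ} {ω : V}
    (hω : ω ∈ rayPiece γ K κ θ) (hB : |L (γ θ)| ≤ B) :
    |L ω - K * L (γ θ)| ≤ κ * |K| * B := by
  obtain ⟨k, hk, rfl⟩ := hω
  rw [map_smul, smul_eq_mul, ← sub_mul, abs_mul]
  exact mul_le_mul hk hB (abs_nonneg _) ((abs_nonneg _).trans hk)

lemma abs_map_le_of_mem_rayPiece {L : V →L[ℝ] ℝ} {K κ θ B : ℝ} {ω : V} (hκ : κ ≤ 1)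
    (hω : ω ∈ rayPiece γ K κ θ) (hB : |L (γ θ)| ≤ B) : |L ω| ≤ 2 * |K| * B := by
  have hB0 : 0 ≤ B := (abs_nonneg _).trans hB
  calc |L ω| ≤ |K * L (γ θ)| + |L ω - K * L (γ θ)| := by
        simpa using abs_add_le (K * L (γ θ)) (L ω - K * L (γ θ))
    _ ≤ |K| * B + 1 * |K| * B := by
        rw [abs_mul]
        gcongr
        exact (abs_map_sub_le_of_mem_rayPiece hω hB).trans (by gcongr)
    _ = 2 * |K| * B := by ring

lemma mul_sq_sub_le_of_dyadicIndex_eq {c : ℝ} (hc : 0 ≤ c) {j : ℕ} {θ θ' : ℝ}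
    (h : dyadicIndex j θ = dyadicIndex j θ') : c * (θ - θ') ^ 2 ≤ c * (1 / 4 ^ j) := by
  have h4 : ((1 : ℝ) / 2 ^ j) ^ 2 = 1 / 4 ^ j := by
    rw [div_pow, one_pow, ← pow_mul, mul_comm, pow_mul]
    norm_num
  rw [← h4, ← sq_abs (θ - θ')]
  gcongr
  exact abs_sub_le_of_dyadicIndex_eq h

lemma abs_map_le_of_mem_conePiece {L : V →L[ℝ] ℝ} {c K κ θ₀ : ℝ} {j : ℕ} {ω : V} (hc : 0 ≤ c)
    (hL : ∀ θ ∈ U, |L (γ θ)| ≤ c * (θ - θ₀) ^ 2) (hκ : κ ≤ 1)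
    (hω : ω ∈ conePiece γ U K κ j (dyadicIndex j θ₀)) : |L ω| ≤ 2 * |K| * (c * (1 / 4 ^ j)) := by
  obtain ⟨θ, hθ, hθj, hω⟩ := hω
  exact abs_map_le_of_mem_rayPiece hκ hω
    ((hL θ hθ).trans (mul_sq_sub_le_of_dyadicIndex_eq hc hθj))

lemma abs_map_sub_le_of_dyadicIndex_eq {L : V →L[ℝ] ℝ} {c K θ₀ θ : ℝ} {i b n : ℕ} {ω : V}
    (hc : 0 ≤ c) (hL : ∀ θ ∈ U, |L (γ θ)| ≤ c * (θ - θ₀) ^ 2) (hbn : b ≤ n) (hθ : θ ∈ U)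
    (hi : dyadicIndex i θ = dyadicIndex i θ₀) (hω : ω ∈ rayPiece γ K (1 / 4 ^ n) θ) :
    |L ω - K * L (γ θ)| ≤ c * |K| * (1 / 4 ^ (i + b)) := by
  have hbn4 : (1 : ℝ) / 4 ^ n ≤ 1 / 4 ^ b := by gcongr; norm_num
  calc |L ω - K * L (γ θ)| ≤ 1 / 4 ^ n * |K| * (c * (1 / 4 ^ i)) :=
        abs_map_sub_le_of_mem_rayPiece hω
          ((hL θ hθ).trans (mul_sq_sub_le_of_dyadicIndex_eq hc hi))
    _ ≤ 1 / 4 ^ b * |K| * (c * (1 / 4 ^ i)) := by gcongr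
    _ = c * |K| * (1 / 4 ^ (i + b)) := by rw [pow_add]; field_simp

-- The functional sees the separation `11 c δ` of `s` and `t` through errors of total size `10 c δ`.
lemma mul_le_norm_sub_of_separated {L : V →L[ℝ] ℝ} {c δ K s t : ℝ} (hc : 0 < c)
    (hL : ∀ x, |L x| ≤ c * ‖x‖) {ω₁ ω₂ ω₃ η₁ η₂ η₃ : V} (hst : 11 * c * δ ≤ |s - t|)
    (hω₁ : |L ω₁ - K * s| ≤ c * |K| * δ) (hη₁ : |L η₁ - K * t| ≤ c * |K| * δ)
    (hω₂ : |L ω₂| ≤ 2 * |K| * (c * δ)) (hω₃ : |L ω₃| ≤ 2 * |K| * (c * δ))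
    (hη₂ : |L η₂| ≤ 2 * |K| * (c * δ)) (hη₃ : |L η₃| ≤ 2 * |K| * (c * δ)) :
    |K| * δ ≤ ‖ω₁ + (ω₂ + ω₃) - (η₁ + (η₂ + η₃))‖ := by
  have hmain : 11 * (c * |K| * δ) ≤ |K * s - K * t| := by
    rw [← mul_sub, abs_mul]
    calc 11 * (c * |K| * δ) = |K| * (11 * c * δ) := by ring
      _ ≤ |K| * |s - t| := by gcongr
  have hmap := hL (ω₁ + (ω₂ + ω₃) - (η₁ + (η₂ + η₃)))
  simp only [map_sub, map_add] at hmap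
  rw [abs_le] at hω₁ hω₂ hω₃ hη₁ hη₂ hη₃ hmap
  refine le_of_mul_le_mul_left ?_ hc
  rcases le_abs.1 hmain with h | h <;> linarith

lemma QuadNondeg.exists_functional_separated {c₁ c₂ : ℝ} (hQ : QuadNondeg γ U c₁ c₂) {θ₀ : ℝ}
    (hθ₀ : θ₀ ∈ U) :
    ∃ L : V →L[ℝ] ℝ, (∀ x, |L x| ≤ c₂ * ‖x‖) ∧ (∀ θ ∈ U, |L (γ θ)| ≤ c₂ * (θ - θ₀) ^ 2) ∧
      ∀ (j : ℕ), ∀ θ₁ ∈ U, ∀ θ₂ ∈ U, dyadicIndex j θ₁ = dyadicIndex j θ₂ →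
        2 ≤ |dyadicIndex j θ₁ - dyadicIndex j θ₀| →
        c₁ * (1 / 2 ^ j) * |θ₁ - θ₂| ≤ |L (γ θ₁) - L (γ θ₂)| := by
  obtain ⟨L, hL, hL2, hsep⟩ := hQ θ₀ hθ₀
  refine ⟨L, hL, hL2, fun j θ₁ hθ₁ θ₂ hθ₂ h₁₂ hfar ↦
    hsep _ (by positivity) θ₁ hθ₁ θ₂ hθ₂ ?_⟩
  rcases le_abs.1 hfar with h | h
  · exact .inl ⟨add_one_div_le_of_dyadicIndex (by linarith),
      add_one_div_le_of_dyadicIndex (by linarith)⟩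
  · exact .inr ⟨add_one_div_le_of_dyadicIndex (by linarith),
      add_one_div_le_of_dyadicIndex (by linarith)⟩

lemma eleven_mul_le_of_lt_abs_sub_dyadicIndex {c₁ c₂ : ℝ} (hc₁ : 0 ≤ c₁) {i q b Λ : ℕ}
    (hΛ : 11 * c₂ * 2 ^ q ≤ c₁ * Λ) {θ θ' : ℝ}
    (h : (Λ : ℤ) < |dyadicIndex (i + 2 * b) θ - dyadicIndex (i + 2 * b) θ'|) :
    11 * c₂ * (1 / 4 ^ (i + b)) ≤ c₁ * (1 / 2 ^ (i + q)) * |θ - θ'| := by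
  have hΛθ : (Λ : ℝ) / 2 ^ (i + 2 * b) ≤ |θ - θ'| := by
    refine le_trans ?_ (sub_one_div_le_abs_sub (i + 2 * b) θ θ')
    gcongr
    exact_mod_cast (by linarith : (Λ : ℤ) ≤ |dyadicIndex (i + 2 * b) θ -
      dyadicIndex (i + 2 * b) θ'| - 1)
  calc 11 * c₂ * (1 / 4 ^ (i + b)) = 11 * c₂ * 2 ^ q * (1 / 2 ^ q * (1 / 4 ^ (i + b))) := by
        field_simp
    _ ≤ c₁ * Λ * (1 / 2 ^ q * (1 / 4 ^ (i + b))) := by gcongr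
    _ = c₁ * (1 / 2 ^ (i + q)) * (Λ / 2 ^ (i + 2 * b)) := by
        rw [show (4 : ℝ) = 2 ^ 2 by norm_num, ← pow_mul]
        field_simp
        ring
    _ ≤ c₁ * (1 / 2 ^ (i + q)) * |θ - θ'| := by gcongr

/-- The frequencies of `f_J * f_I' ^ 2`, where `f_J` and `f_I'` have frequencies above the
intervals with index `J` and `I'` and of generation `i + 2 * b` and `i + b`. -/
def productFreqs (γ : ℝ → V) (U : Set ℝ) (K κ : ℝ) (i b : ℕ) (J I' : ℤ) : Set V :=
  image2 (· + ·) (conePiece γ U K κ (i + 2 * b) J)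
    (image2 (· + ·) (conePiece γ U K κ (i + b) I') (conePiece γ U K κ (i + b) I'))

lemma QuadNondeg.le_norm_sub {c₁ c₂ r : ℝ} (hQ : QuadNondeg γ U c₁ c₂)
    (hc₁ : 0 ≤ c₁) (hc₂ : 0 < c₂) (hr : 0 ≤ r) {i q b' e n Λ : ℕ}
    (hΛ : 11 * c₂ * 2 ^ q ≤ c₁ * Λ) (he : q + e = 2 * (q + b')) (hbn : q + b' ≤ n) {K : ℝ}
    (hK : r * 4 ^ (i + n) ≤ |K|) {l c c' I' J J' : ℤ} (hc : c ∈ children q l)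
    (hc' : c' ∈ children q l) (hcc : 2 ≤ |c - c'|) (hI' : I' ∈ children b' c')
    (hJ : J ∈ children e c) (hJ' : J' ∈ children e c) (hJJ : (Λ : ℤ) < |J - J'|) {ω η : V}
    (hω : ω ∈ productFreqs γ U K (1 / 4 ^ n) i (q + b') J I')
    (hη : η ∈ productFreqs γ U K (1 / 4 ^ n) i (q + b') J' I') : r ≤ ‖ω - η‖ := by
  obtain ⟨ω₁, ⟨θ₁, hθ₁, hθ₁J, hω₁⟩, _, ⟨ω₂, hω₂, ω₃, hω₃, rfl⟩, rfl⟩ := hω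
  obtain ⟨η₁, ⟨φ₁, hφ₁, hφ₁J, hη₁⟩, _, ⟨η₂, hη₂, η₃, hη₃, rfl⟩, rfl⟩ := hη
  obtain ⟨θ₂, hθ₂, rfl, -⟩ := id hω₂
  obtain ⟨L, hL, hL2, hsep⟩ := hQ.exists_functional_separated hθ₂
  have index_c {J θ} (hJ : J ∈ children e c) (hθ : dyadicIndex (i + 2 * (q + b')) θ = J) :
      dyadicIndex (i + q) θ = c :=
    dyadicIndex_eq_of_mem_children hJ ((show i + 2 * (q + b') = i + q + e by omega) ▸ hθ)
  have hθ₁c := index_c hJ hθ₁J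
  have hφ₁c := index_c hJ' hφ₁J
  have hθ₂c : dyadicIndex (i + q) θ₂ = c' :=
    dyadicIndex_eq_of_mem_children hI' (by rw [add_assoc])
  have index_l {θ} (hθ : dyadicIndex (i + q) θ = c) : dyadicIndex i θ = dyadicIndex i θ₂ := by
    rw [dyadicIndex_eq_of_mem_children hc hθ, dyadicIndex_eq_of_mem_children hc' hθ₂c]
  have hfar {θ ω} (hθ : θ ∈ U) (hθc : dyadicIndex (i + q) θ = c)
      (hω : ω ∈ rayPiece γ K (1 / 4 ^ n) θ) :
      |L ω - K * L (γ θ)| ≤ c₂ * |K| * (1 / 4 ^ (i + (q + b'))) :=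
    abs_map_sub_le_of_dyadicIndex_eq hc₂.le hL2 hbn hθ (index_l hθc) hω
  have hnear {ω} (hω : ω ∈ conePiece γ U K (1 / 4 ^ n) _ (dyadicIndex (i + (q + b')) θ₂)) :
      |L ω| ≤ 2 * |K| * (c₂ * (1 / 4 ^ (i + (q + b')))) :=
    abs_map_le_of_mem_conePiece hc₂.le hL2
      ((div_le_one (by positivity)).2 (one_le_pow₀ (by norm_num))) hω
  have hst : 11 * c₂ * (1 / 4 ^ (i + (q + b'))) ≤ |L (γ θ₁) - L (γ φ₁)| :=
    (eleven_mul_le_of_lt_abs_sub_dyadicIndex hc₁ hΛ (by rwa [hθ₁J, hφ₁J])).trans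
      (hsep (i + q) θ₁ hθ₁ φ₁ hφ₁ (hθ₁c.trans hφ₁c.symm) (by rwa [hθ₁c, hθ₂c]))
  calc r ≤ |K| * (1 / 4 ^ (i + (q + b'))) := by
        rw [mul_one_div, le_div_iff₀ (by positivity)]
        exact hK.trans' (by gcongr; norm_num)
    _ ≤ _ := mul_le_norm_sub_of_separated hc₂ hL hst (hfar hθ₁ hθ₁c hω₁) (hfar hφ₁ hφ₁c hη₁)
        (hnear hω₂) (hnear hω₃) (hnear hη₂) (hnear hη₃)

end ConePiece

section SqSum

variable {X : Type*} [MeasurableSpace X]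

/-- The sum of the squares of the `L⁶` norms over the arcs of generation `i + n` inside an arc of
generation `i + s`. -/
def sqSum (m : Measure X) (Θ : Finset ℝ) (f : ℝ → X → ℂ) (i n s : ℕ) (J : ℤ) : ℝ :=
  ∑ J' ∈ children (n - s) J, sqNorm m (arcSum Θ f (i + n) J')

lemma sqSum_nonneg (m : Measure X) (Θ : Finset ℝ) (f : ℝ → X → ℂ) (i n s : ℕ) (J : ℤ) :
    0 ≤ sqSum m Θ f i n s J := Finset.sum_nonneg fun _ _ ↦ sqNorm_nonneg _ _

lemma sum_children_sqSum (m : Measure X) (Θ : Finset ℝ) (f : ℝ → X → ℂ) {i n s e : ℕ}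
    (h : s + e ≤ n) (J : ℤ) :
    ∑ J' ∈ children e J, sqSum m Θ f i n (s + e) J' = sqSum m Θ f i n s J := by
  unfold sqSum
  rw [show n - s = e + (n - (s + e)) by lia, sum_children_add]

/-- Decoupling below scale `q`: inside an arc of generation `i + s` with `q ≤ s ≤ n`, the arcs of
generation `i + n` decouple with constant `C y ^ (2 (n - s))`. -/
def DecouplesFrom (m : Measure X) (Θ : Finset ℝ) (f : ℝ → X → ℂ) (i n q : ℕ) (C y : ℝ) : Prop :=
  ∀ s, q ≤ s → s ≤ n → ∀ J,
    sqNorm m (arcSum Θ f (i + s) J) ≤ C * y ^ (2 * (n - s)) * sqSum m Θ f i n s J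

end SqSum

section Decoupling

variable {V : Type*} [NormedAddCommGroup V] [InnerProductSpace ℝ V] [MeasurableSpace V]
  {m : Measure V} {γ : ℝ → V} {U : Set ℝ} {c₁ c₂ r : ℝ}

lemma card_filter_abs_sub_le (s : Finset ℤ) (J : ℤ) (Λ : ℕ) :
    (s.filter fun J' ↦ |J - J'| ≤ Λ).card ≤ 2 * Λ + 1 := by
  calc (s.filter fun J' ↦ |J - J'| ≤ Λ).card ≤ (Finset.Icc (J - Λ) (J + Λ)).card := by
        refine Finset.card_le_card fun J' hJ' ↦ ?_
        have h := abs_le.1 (Finset.mem_filter.1 hJ').2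
        exact Finset.mem_Icc.2 ⟨by linarith [h.2], by linarith [h.1]⟩
    _ ≤ 2 * Λ + 1 := by rw [Int.card_Icc]; lia

lemma BandLimited.mixedIntegral_le_sum_children [OpensMeasurableSpace V] [IsFiniteMeasure m]
    (hm : BandLimited m r)
    (hQ : QuadNondeg γ U c₁ c₂) (hc₁ : 0 ≤ c₁) (hc₂ : 0 < c₂) (hr : 0 ≤ r)
    {i q a' b' e n Λ : ℕ} (hΛ : 11 * c₂ * 2 ^ q ≤ c₁ * Λ) (hae : q + a' + e = 2 * (q + b'))
    (hbn : q + b' ≤ n) {K : ℝ} (hK : r * 4 ^ (i + n) ≤ |K|) {Θ : Finset ℝ} {f : ℝ → V → ℂ}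
    (hf : Radial γ U K (1 / 4 ^ n) Θ f) {l c c' I I' : ℤ}
    (hc : c ∈ children q l) (hc' : c' ∈ children q l) (hcc : 2 ≤ |c - c'|)
    (hI : I ∈ children a' c) (hI' : I' ∈ children b' c') :
    mixedIntegral m (arcSum Θ f (i + (q + a')) I) (arcSum Θ f (i + (q + b')) I') ≤
      (2 * Λ + 1 : ℕ) * ∑ J ∈ children e I,
        mixedIntegral m (arcSum Θ f (i + 2 * (q + b')) J) (arcSum Θ f (i + (q + b')) I') := by
  set g := arcSum Θ f (i + (q + b')) I'
  set F := arcSum Θ f (i + 2 * (q + b'))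
  have hg : g ∈ trigPoly (conePiece γ U K (1 / 4 ^ n) (i + (q + b')) I') := hf.arcSum_mem _ _
  have hsum : arcSum Θ f (i + (q + a')) I = ∑ J ∈ children e I, F J := by
    rw [arcSum_eq_sum_children Θ f (i + (q + a')) e I, add_assoc i, hae]
  have key := hm.integral_norm_sq_sum_le (children e I) (fun J ↦ F J * (g * g))
    (fun J ↦ productFreqs γ U K (1 / 4 ^ n) i (q + b') J I')
    (fun J _ ↦ mul_mem_trigPoly (hf.arcSum_mem _ _) (mul_mem_trigPoly hg hg))
    (fun J J' ↦ |J - J'| ≤ Λ) (fun J J' h ↦ by rwa [abs_sub_comm]) (2 * Λ + 1)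
    (fun J _ ↦ card_filter_abs_sub_le _ J Λ)
    (fun J hJ J' hJ' hfar ω hω η hη ↦ hQ.le_norm_sub hc₁ hc₂ hr hΛ (by rw [← hae, add_assoc]) hbn
      hK hc hc' hcc hI' (mem_children_add hI hJ) (mem_children_add hI hJ') (not_le.1 hfar) hω hη)
  have hnorm (u : V → ℂ) (x : V) : ‖u x * (g x * g x)‖ ^ 2 = ‖u x‖ ^ 2 * ‖g x‖ ^ 4 := by
    rw [norm_mul, norm_mul]
    ring
  simp only [Pi.mul_apply, ← Finset.sum_mul] at key
  simpa only [mixedIntegral, hsum, ← Finset.sum_apply, hnorm] using key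

lemma DecouplesFrom.mixedIntegral_le [OpensMeasurableSpace V] [IsFiniteMeasure m] {K κ : ℝ}
    {Θ : Finset ℝ} {f : ℝ → V → ℂ} {i n q s s' : ℕ} {C y : ℝ}
    (hD : DecouplesFrom m Θ f i n q C y) (hf : Radial γ U K κ Θ f) (hC : 0 ≤ C) (hy : 1 < y)
    (hqs : q ≤ s) (hs : s ≤ n) (hqs' : q ≤ s') (hs' : s' ≤ n) (I I' : ℤ) :
    mixedIntegral m (arcSum Θ f (i + s) I) (arcSum Θ f (i + s') I') ≤
      C ^ 3 * y ^ (6 * n) * sqSum m Θ f i n s I * sqSum m Θ f i n s' I' ^ 2 := by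
  have hpow (s : ℕ) : y ^ (2 * (n - s)) ≤ y ^ (2 * n) := by gcongr <;> first | exact hy.le | lia
  have le (s I) (hqs : q ≤ s) (hs : s ≤ n) :
      sqNorm m (arcSum Θ f (i + s) I) ≤ C * y ^ (2 * n) * sqSum m Θ f i n s I :=
    (hD s hqs hs I).trans (mul_le_mul_of_nonneg_right
      (mul_le_mul_of_nonneg_left (hpow s) hC) (sqSum_nonneg ..))
  have hn := sqNorm_nonneg m (arcSum Θ f (i + s) I)
  have hn' := sqNorm_nonneg m (arcSum Θ f (i + s') I')
  calc mixedIntegral m (arcSum Θ f (i + s) I) (arcSum Θ f (i + s') I')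
      ≤ sqNorm m (arcSum Θ f (i + s) I) * sqNorm m (arcSum Θ f (i + s') I') ^ 2 :=
        (hf.bddContinuous_arcSum _ _).mixedIntegral_le (hf.bddContinuous_arcSum _ _)
    _ ≤ (C * y ^ (2 * n) * sqSum m Θ f i n s I) *
        (C * y ^ (2 * n) * sqSum m Θ f i n s' I') ^ 2 :=
      mul_le_mul (le s I hqs hs) (pow_le_pow_left₀ hn' (le s' I' hqs' hs') 2) (by positivity)
        (hn.trans (le s I hqs hs))
    _ = _ := by ring

-- Swapping the two arcs by Cauchy-Schwarz doubles the scale `b` at which the gain is measured.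
lemma DecouplesFrom.mixedIntegral_le_of_swap [OpensMeasurableSpace V] [IsFiniteMeasure m]
    {K κ : ℝ} {Θ : Finset ℝ} {f : ℝ → V → ℂ} {i n q b k : ℕ} {C y P : ℝ}
    (hD : DecouplesFrom m Θ f i n q C y) (hf : Radial γ U K κ Θ f) (hC : 0 ≤ C) (hy : 0 < y)
    (hP : 0 ≤ P) (hqb : q ≤ b) (hb : b ≤ n) {I' J : ℤ}
    (hswap : mixedIntegral m (arcSum Θ f (i + b) I') (arcSum Θ f (i + 2 * b) J) ≤
      P ^ 2 * C ^ 3 * (y ^ (6 * n) / y ^ (3 * k * (2 * b))) * sqSum m Θ f i n b I' *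
        sqSum m Θ f i n (2 * b) J ^ 2) :
    mixedIntegral m (arcSum Θ f (i + 2 * b) J) (arcSum Θ f (i + b) I') ≤
      P * C ^ 3 * (y ^ (6 * n) / y ^ (3 * (k + 1) * b)) * sqSum m Θ f i n (2 * b) J *
        sqSum m Θ f i n b I' ^ 2 := by
  have hS := sqSum_nonneg m Θ f i n b I'
  have hT := sqSum_nonneg m Θ f i n (2 * b) J
  have hn := sqNorm_nonneg m (arcSum Θ f (i + b) I')
  have hz : y ^ (2 * (n - b)) = y ^ (2 * n) / y ^ (2 * b) := by
    rw [eq_div_iff (by positivity), ← pow_add]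
    congr 1
    lia
  refine le_of_pow_le_pow_left₀ two_ne_zero (by positivity) ?_
  calc mixedIntegral m (arcSum Θ f (i + 2 * b) J) (arcSum Θ f (i + b) I') ^ 2
      ≤ mixedIntegral m (arcSum Θ f (i + b) I') (arcSum Θ f (i + 2 * b) J) *
          sqNorm m (arcSum Θ f (i + b) I') ^ 3 :=
        (hf.bddContinuous_arcSum _ _).mixedIntegral_sq_le (hf.bddContinuous_arcSum _ _)
    _ ≤ (P ^ 2 * C ^ 3 * (y ^ (6 * n) / y ^ (3 * k * (2 * b))) * sqSum m Θ f i n b I' *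
          sqSum m Θ f i n (2 * b) J ^ 2) *
          (C * y ^ (2 * (n - b)) * sqSum m Θ f i n b I') ^ 3 := by
        gcongr
        exact hD b hqb hb I'
    _ = _ := by
        rw [hz]
        field_simp
        ring

-- The induction on `k` performs `k` orthogonality steps, each at twice the scale of the last.
lemma BandLimited.mixedIntegral_le_of_separated [OpensMeasurableSpace V] [IsFiniteMeasure m]
    (hm : BandLimited m r) (hQ : QuadNondeg γ U c₁ c₂) (hc₁ : 0 ≤ c₁) (hc₂ : 0 < c₂)
    (hr : 0 ≤ r) {i q n Λ : ℕ} (hΛ : 11 * c₂ * 2 ^ q ≤ c₁ * Λ) {K : ℝ}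
    (hK : r * 4 ^ (i + n) ≤ |K|) {Θ : Finset ℝ} {f : ℝ → V → ℂ}
    (hf : Radial γ U K (1 / 4 ^ n) Θ f) {l : ℤ} {C y : ℝ} (hC : 0 ≤ C) (hy : 1 < y)
    (hD : DecouplesFrom m Θ f i n q C y) (k : ℕ) {a' b' : ℕ} {c c' I I' : ℤ}
    (hb : (q + b') * 2 ^ k ≤ n) (ha : q + a' ≤ 2 * (q + b')) (han : q + a' ≤ n)
    (hc : c ∈ children q l) (hc' : c' ∈ children q l) (hcc : 2 ≤ |c - c'|)
    (hI : I ∈ children a' c) (hI' : I' ∈ children b' c') :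
    mixedIntegral m (arcSum Θ f (i + (q + a')) I) (arcSum Θ f (i + (q + b')) I') ≤
      (2 * Λ + 1 : ℕ) ^ 2 * C ^ 3 * (y ^ (6 * n) / y ^ (3 * k * (q + b'))) *
        sqSum m Θ f i n (q + a') I * sqSum m Θ f i n (q + b') I' ^ 2 := by
  set P : ℝ := ((2 * Λ + 1 : ℕ) : ℝ)
  have hP : 1 ≤ P := Nat.one_le_cast.2 (by lia)
  induction k generalizing a' b' c c' I I' with
  | zero =>
    have hS := sqSum_nonneg m Θ f i n (q + a') I
    calc _ ≤ C ^ 3 * y ^ (6 * n) * sqSum m Θ f i n (q + a') I *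
          sqSum m Θ f i n (q + b') I' ^ 2 :=
          hD.mixedIntegral_le hf hC hy (by lia) han (by lia) (by simpa using hb) I I'
      _ ≤ P ^ 2 * (C ^ 3 * y ^ (6 * n) * sqSum m Θ f i n (q + a') I *
          sqSum m Θ f i n (q + b') I' ^ 2) :=
          le_mul_of_one_le_left (by positivity) (one_le_pow₀ hP)
      _ = _ := by
          simp only [mul_zero, zero_mul, pow_zero, div_one]
          ring
  | succ k ih =>
    obtain ⟨e, he⟩ := Nat.exists_eq_add_of_le ha
    have h2b : 2 * (q + b') * 2 ^ k ≤ n := by rwa [pow_succ, mul_comm (2 ^ k), ← mul_assoc,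
      mul_comm (q + b')] at hb
    have h2bn : 2 * (q + b') ≤ n := (Nat.le_mul_of_pos_right _ (by positivity)).trans h2b
    have hterm (J) (hJ : J ∈ children e I) :
        mixedIntegral m (arcSum Θ f (i + 2 * (q + b')) J) (arcSum Θ f (i + (q + b')) I') ≤
        P * C ^ 3 * (y ^ (6 * n) / y ^ (3 * (k + 1) * (q + b'))) *
          sqSum m Θ f i n (2 * (q + b')) J * sqSum m Θ f i n (q + b') I' ^ 2 := by
      have hswap := ih (a' := b') (b' := a' + e) (by rwa [← add_assoc, ← he]) (by lia) (by lia)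
        hc' hc (by rwa [abs_sub_comm]) hI' (mem_children_add hI hJ)
      rw [← add_assoc q a' e, ← he] at hswap
      exact hD.mixedIntegral_le_of_swap hf hC (by linarith) (by linarith) (by lia) (by lia) hswap
    calc _ ≤ P * ∑ J ∈ children e I,
          mixedIntegral m (arcSum Θ f (i + 2 * (q + b')) J) (arcSum Θ f (i + (q + b')) I') :=
          hm.mixedIntegral_le_sum_children hQ hc₁ hc₂ hr hΛ he.symm (by lia) hK hf hc hc' hcc
            hI hI'
      _ ≤ P * ∑ J ∈ children e I, P * C ^ 3 * (y ^ (6 * n) / y ^ (3 * (k + 1) * (q + b'))) *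
          sqSum m Θ f i n (2 * (q + b')) J * sqSum m Θ f i n (q + b') I' ^ 2 :=
          mul_le_mul_of_nonneg_left (Finset.sum_le_sum hterm) (by linarith)
      _ = _ := by
          rw [← Finset.sum_mul, ← Finset.mul_sum, he, sum_children_sqSum _ _ _ (by lia)]
          ring

end Decoupling

section AdjacentPairs

lemma sum_mul_adjacent_le (s : Finset ℤ) (u : ℤ → ℝ) :
    ∑ c ∈ s, ∑ c' ∈ s, (if |c - c'| ≤ 1 then u c * u c' else 0) ≤ 3 * ∑ c ∈ s, u c ^ 2 := by
  have h := sum_sum_half_add_le_of_card_le s (fun c c' ↦ |c - c'| ≤ 1)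
    (fun c c' h ↦ by rwa [abs_sub_comm]) 3 (fun c _ ↦ card_filter_abs_sub_le s c 1)
    (N := fun c ↦ u c ^ 2) fun c ↦ sq_nonneg _
  refine le_trans (Finset.sum_le_sum fun c _ ↦ Finset.sum_le_sum fun c' _ ↦ ?_) h
  split_ifs
  · linarith [two_mul_le_add_sq (u c) (u c')]
  · rfl

lemma norm_sum_sq_le_add_separated {E : Type*} [SeminormedAddCommGroup E] (s : Finset ℤ)
    (z : ℤ → E) :
    ‖∑ c ∈ s, z c‖ ^ 2 ≤ 3 * ∑ c ∈ s, ‖z c‖ ^ 2 +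
      ∑ c ∈ s, ∑ c' ∈ s, if 2 ≤ |c - c'| then ‖z c‖ * ‖z c'‖ else 0 := by
  calc ‖∑ c ∈ s, z c‖ ^ 2 ≤ (∑ c ∈ s, ‖z c‖) ^ 2 := by gcongr; exact norm_sum_le _ _
    _ = ∑ c ∈ s, ∑ c' ∈ s, (if |c - c'| ≤ 1 then ‖z c‖ * ‖z c'‖ else 0) +
        ∑ c ∈ s, ∑ c' ∈ s, (if 2 ≤ |c - c'| then ‖z c‖ * ‖z c'‖ else 0) := by
      rw [sq, Finset.sum_mul_sum]
      simp_rw [← Finset.sum_add_distrib]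
      refine Finset.sum_congr rfl fun c _ ↦ Finset.sum_congr rfl fun c' _ ↦ ?_
      by_cases h : 2 ≤ |c - c'|
      · rw [if_neg (by lia), if_pos h, zero_add]
      · rw [if_pos (by lia), if_neg h, add_zero]
    _ ≤ _ := by gcongr; exact sum_mul_adjacent_le s fun c ↦ ‖z c‖

lemma sqNorm_sum_le_of_separated {X : Type*} [TopologicalSpace X] [MeasurableSpace X]
    [OpensMeasurableSpace X] {m : Measure X} [IsFiniteMeasure m] (s : Finset ℤ)
    (F : ℤ → X → ℂ) (hF : ∀ c, BddContinuous (F c)) {T : ℝ} (hT : 0 ≤ T)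
    (hsep : ∀ c ∈ s, ∀ c' ∈ s, 2 ≤ |c - c'| → lpNorm (fun x ↦ ‖F c x‖ * ‖F c' x‖) 3 m ≤ T) :
    sqNorm m (∑ c ∈ s, F c) ≤ 3 * ∑ c ∈ s, sqNorm m (F c) + s.card ^ 2 * T := by
  set W : ℤ × ℤ → X → ℝ := fun p x ↦ if 2 ≤ |p.1 - p.2| then ‖F p.1 x‖ * ‖F p.2 x‖ else 0
  have hW (p) (_ : p ∈ s ×ˢ s) : MemLp (W p) 3 m := by
    by_cases h : 2 ≤ |p.1 - p.2|
    · simp only [W, if_pos h]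
      exact ((hF p.1).norm.mul (hF p.2).norm).memLp 3
    · simp only [W, if_neg h, MemLp.zero']
  have hWT (p) (hp : p ∈ s ×ˢ s) : lpNorm (W p) 3 m ≤ T := by
    obtain ⟨hp₁, hp₂⟩ := Finset.mem_product.1 hp
    by_cases h : 2 ≤ |p.1 - p.2|
    · simpa only [W, if_pos h] using hsep p.1 hp₁ p.2 hp₂ h
    · simpa only [W, if_neg h, ← Pi.zero_def, lpNorm_zero] using hT
  have hsq (c) (_ : c ∈ s) : MemLp (fun x ↦ ‖F c x‖ ^ 2) 3 m := ((hF c).norm.pow 2).memLp 3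
  have hsq3 : MemLp ((3 : ℝ) • ∑ c ∈ s, fun x ↦ ‖F c x‖ ^ 2) 3 m :=
    (memLp_finsetSum' s hsq).const_smul _
  calc sqNorm m (∑ c ∈ s, F c)
      ≤ lpNorm (((3 : ℝ) • ∑ c ∈ s, fun x ↦ ‖F c x‖ ^ 2) + ∑ p ∈ s ×ˢ s, W p) 3 m := by
        refine lpNorm_mono_real (hsq3.add (memLp_finsetSum' _ hW)) fun x ↦ ?_
        simpa only [norm_pow, norm_norm, Finset.sum_apply, Pi.add_apply, Pi.smul_apply, smul_eq_mul,
          Finset.sum_product] using norm_sum_sq_le_add_separated s fun c ↦ F c x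
    _ ≤ lpNorm ((3 : ℝ) • ∑ c ∈ s, fun x ↦ ‖F c x‖ ^ 2) 3 m + lpNorm (∑ p ∈ s ×ˢ s, W p) 3 m :=
        lpNorm_add_le hsq3 (by norm_num)
    _ ≤ 3 * ∑ c ∈ s, sqNorm m (F c) + ∑ _ ∈ s ×ˢ s, T := by
        rw [lpNorm_const_smul, Real.nnnorm_ofNat, NNReal.coe_ofNat]
        gcongr
        · exact lpNorm_sum_le hsq (by norm_num)
        · exact (lpNorm_sum_le hW (by norm_num)).trans (Finset.sum_le_sum hWT)
    _ = 3 * ∑ c ∈ s, sqNorm m (F c) + s.card ^ 2 * T := by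
        rw [Finset.sum_const, Finset.card_product, nsmul_eq_mul, Nat.cast_mul, sq]

end AdjacentPairs

section ExistsDecouples

variable {V : Type*} [NormedAddCommGroup V] [InnerProductSpace ℝ V] [MeasurableSpace V]
  {m : Measure V} {γ : ℝ → V} {U : Set ℝ} {c₁ c₂ r : ℝ}

/-- The `ℓ²` decoupling inequality for `L⁶`, with constant `D`, of an arc of any generation into
arcs `n` generations further down, for frequencies at the scale at which `m` can separate them. -/
def Decouples (m : Measure V) (γ : ℝ → V) (U : Set ℝ) (r : ℝ) (n : ℕ) (D : ℝ) : Prop :=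
  ∀ (i : ℕ) (K : ℝ), r * 4 ^ (i + n) ≤ |K| → ∀ (Θ : Finset ℝ) (f : ℝ → V → ℂ),
    Radial γ U K (1 / 4 ^ n) Θ f → ∀ l, sqNorm m (arcSum Θ f i l) ≤
      D * ∑ l' ∈ children n l, sqNorm m (arcSum Θ f (i + n) l')

lemma Decouples.mono {n : ℕ} {D D' : ℝ} (h : Decouples m γ U r n D) (hD : D ≤ D') :
    Decouples m γ U r n D' := fun i K hK Θ f hf l ↦
  (h i K hK Θ f hf l).trans (mul_le_mul_of_nonneg_right hD (Finset.sum_nonneg fun _ _ ↦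
    sqNorm_nonneg _ _))

lemma decouplesFrom_of_decouples {n q : ℕ} {C y : ℝ}
    (h : ∀ s, q ≤ s → s ≤ n → Decouples m γ U r (n - s) (C * y ^ (2 * (n - s)))) {i : ℕ} {K : ℝ}
    (hK : r * 4 ^ (i + n) ≤ |K|) {Θ : Finset ℝ} {f : ℝ → V → ℂ}
    (hf : Radial γ U K (1 / 4 ^ n) Θ f) : DecouplesFrom m Θ f i n q C y := by
  intro s hqs hsn J
  have hgen : i + s + (n - s) = i + n := by lia
  have hD := h s hqs hsn (i + s) K (by rwa [hgen]) Θ f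
    (hf.mono (by gcongr; exacts [by norm_num, n.sub_le s])) J
  rwa [hgen] at hD

variable [OpensMeasurableSpace V] [IsFiniteMeasure m]

lemma decouples_two_pow (r : ℝ) (n : ℕ) : Decouples m γ U r n (2 ^ n) := by
  intro i K _ Θ f hf l
  rw [arcSum_eq_sum_children Θ f i n l]
  have h := sqNorm_sum_le (m := m) (children n l) (fun l' ↦ arcSum Θ f (i + n) l')
    fun l' _ ↦ hf.bddContinuous_arcSum _ _
  rwa [card_children, Nat.cast_pow, Nat.cast_ofNat] at h

lemma BandLimited.lpNorm_mul_le_of_separated (hm : BandLimited m r) (hQ : QuadNondeg γ U c₁ c₂)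
    (hc₁ : 0 ≤ c₁) (hc₂ : 0 < c₂) (hr : 0 ≤ r) {i q n Λ : ℕ} (hΛ : 11 * c₂ * 2 ^ q ≤ c₁ * Λ)
    {K : ℝ} (hK : r * 4 ^ (i + n) ≤ |K|) {Θ : Finset ℝ} {f : ℝ → V → ℂ}
    (hf : Radial γ U K (1 / 4 ^ n) Θ f) {l : ℤ} {C y : ℝ} (hC : 0 ≤ C) (hy : 1 < y)
    (hD : DecouplesFrom m Θ f i n q C y) {k : ℕ} (hn : q * 2 ^ k ≤ n) {c c' : ℤ}
    (hc : c ∈ children q l) (hc' : c' ∈ children q l) (hcc : 2 ≤ |c - c'|) :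
    lpNorm (fun x ↦ ‖arcSum Θ f (i + q) c x‖ * ‖arcSum Θ f (i + q) c' x‖) 3 m ≤
      (2 * Λ + 1 : ℕ) * C * (y ^ (2 * n) / y ^ (k * q)) * sqSum m Θ f i n 0 l := by
  set P : ℝ := ((2 * Λ + 1 : ℕ) : ℝ)
  set S := sqSum m Θ f i n 0 l
  have hP : 1 ≤ P := Nat.one_le_cast.2 (by lia)
  have hqn : q ≤ n := (Nat.le_mul_of_pos_right _ (by positivity)).trans hn
  have hS : 0 ≤ S := sqSum_nonneg ..
  have hle {c} (hc : c ∈ children q l) : sqSum m Θ f i n q c ≤ S := by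
    have hsum := sum_children_sqSum m Θ f (i := i) (n := n) (s := 0) (e := q)
      (by rwa [zero_add]) l
    rw [zero_add] at hsum
    exact (Finset.single_le_sum (fun c _ ↦ sqSum_nonneg m Θ f i n q c) hc).trans_eq hsum
  have hmixed {c c'} (hc : c ∈ children q l) (hc' : c' ∈ children q l) (hcc : 2 ≤ |c - c'|) :
      mixedIntegral m (arcSum Θ f (i + q) c) (arcSum Θ f (i + q) c') ≤
        (P * C * (y ^ (2 * n) / y ^ (k * q)) * S) ^ 3 := by
    have h := hm.mixedIntegral_le_of_separated hQ hc₁ hc₂ hr hΛ hK hf hC hy hD k (a' := 0)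
      (b' := 0) hn (by lia) hqn hc hc' hcc (I := c) (I' := c') (by simp [children_zero])
      (by simp [children_zero])
    have hu := sqSum_nonneg m Θ f i n q c
    have hv := sqSum_nonneg m Θ f i n q c'
    calc _ ≤ P ^ 2 * C ^ 3 * (y ^ (6 * n) / y ^ (3 * k * q)) * sqSum m Θ f i n q c *
          sqSum m Θ f i n q c' ^ 2 := h
      _ ≤ P ^ 3 * C ^ 3 * (y ^ (6 * n) / y ^ (3 * k * q)) * S * S ^ 2 := by
        gcongr
        exacts [by norm_num, hle hc, hle hc']
      _ = _ := by
        rw [show 6 * n = 2 * n * 3 by ring, show 3 * k * q = k * q * 3 by ring, pow_mul y (2 * n),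
          pow_mul y (k * q)]
        ring
  refine le_of_pow_le_pow_left₀ (n := 6) (by norm_num) (by positivity) ?_
  calc _ ≤ mixedIntegral m (arcSum Θ f (i + q) c) (arcSum Θ f (i + q) c') *
        mixedIntegral m (arcSum Θ f (i + q) c') (arcSum Θ f (i + q) c) :=
      (hf.bddContinuous_arcSum _ _).lpNorm_norm_mul_norm_pow_le (hf.bddContinuous_arcSum _ _)
    _ ≤ _ := mul_le_mul (hmixed hc hc' hcc) (hmixed hc' hc (by rwa [abs_sub_comm]))
      (mixedIntegral_nonneg ..) (by positivity)
    _ = _ := by ring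

-- Adjacent arcs cost `3 y ^ (-2 q)` and separated ones `4 ^ q (2 Λ + 1) y ^ (-k q)`; `q` and then
-- `k` are chosen so that both are at most `1 / 2`, which closes the induction on `n`.
lemma BandLimited.sqNorm_arcSum_le (hm : BandLimited m r) (hQ : QuadNondeg γ U c₁ c₂)
    (hc₁ : 0 ≤ c₁) (hc₂ : 0 < c₂) (hr : 0 ≤ r) {i q n k Λ : ℕ} (hΛ : 11 * c₂ * 2 ^ q ≤ c₁ * Λ)
    {K : ℝ} (hK : r * 4 ^ (i + n) ≤ |K|) {Θ : Finset ℝ} {f : ℝ → V → ℂ}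
    (hf : Radial γ U K (1 / 4 ^ n) Θ f) {C y : ℝ} (hC : 0 ≤ C) (hy : 1 < y) (hq : 6 ≤ y ^ q)
    (hk : 4 ^ q * (2 * Λ + 1 : ℕ) * 2 ≤ y ^ (k * q)) (hn : q * 2 ^ k ≤ n)
    (hD : DecouplesFrom m Θ f i n q C y) (l : ℤ) :
    sqNorm m (arcSum Θ f i l) ≤ C * y ^ (2 * n) * sqSum m Θ f i n 0 l := by
  set P : ℝ := ((2 * Λ + 1 : ℕ) : ℝ)
  set S := sqSum m Θ f i n 0 l
  have hqn : q ≤ n := (Nat.le_mul_of_pos_right _ (by positivity)).trans hn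
  have hS : 0 ≤ S := sqSum_nonneg ..
  have hadj : 3 / y ^ (2 * q) ≤ 1 / 2 := by
    rw [div_le_iff₀ (by positivity)]
    linarith [pow_le_pow_right₀ hy.le (show q ≤ 2 * q by lia)]
  have hfar : 4 ^ q * P / y ^ (k * q) ≤ 1 / 2 := by
    rw [div_le_iff₀ (by positivity)]
    linarith
  have hz : y ^ (2 * (n - q)) = y ^ (2 * n) / y ^ (2 * q) := by
    rw [eq_div_iff (by positivity), ← pow_add]
    congr 1
    lia
  calc sqNorm m (arcSum Θ f i l)
      ≤ 3 * ∑ c ∈ children q l, sqNorm m (arcSum Θ f (i + q) c) +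
          ((children q l).card : ℝ) ^ 2 * (P * C * (y ^ (2 * n) / y ^ (k * q)) * S) := by
        rw [arcSum_eq_sum_children Θ f i q l]
        exact sqNorm_sum_le_of_separated _ _ (fun c ↦ hf.bddContinuous_arcSum _ _) (by positivity)
          fun c hc c' hc' hcc ↦ hm.lpNorm_mul_le_of_separated hQ hc₁ hc₂ hr hΛ hK hf hC hy hD hn
            hc hc' hcc
    _ ≤ 3 * ∑ c ∈ children q l, C * y ^ (2 * (n - q)) * sqSum m Θ f i n (0 + q) c +
          4 ^ q * (P * C * (y ^ (2 * n) / y ^ (k * q)) * S) := by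
        rw [card_children, Nat.cast_pow, ← pow_mul, mul_comm q 2, pow_mul, Nat.cast_ofNat,
          zero_add, show ((2 : ℝ) ^ 2) = 4 by norm_num]
        gcongr with c
        exact hD q le_rfl hqn c
    _ = C * y ^ (2 * n) * S * (3 / y ^ (2 * q) + 4 ^ q * P / y ^ (k * q)) := by
        rw [← Finset.mul_sum, sum_children_sqSum m Θ f (by rwa [zero_add]), hz]
        ring
    _ ≤ C * y ^ (2 * n) * S :=
        mul_le_of_le_one_right (by positivity) (by linarith)

theorem BandLimited.exists_decouples (hm : BandLimited m r) (hQ : QuadNondeg γ U c₁ c₂)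
    (hc₁ : 0 < c₁) (hc₂ : 0 < c₂) (hr : 0 ≤ r) {y : ℝ} (hy : 1 < y) :
    ∃ C, 0 < C ∧ ∀ n, Decouples m γ U r n (C * y ^ (2 * n)) := by
  obtain ⟨q, hq⟩ := pow_unbounded_of_one_lt 6 hy
  have hq0 : 0 < q := Nat.pos_of_ne_zero fun h ↦ by norm_num [h] at hq
  obtain ⟨Λ, hΛ⟩ := exists_nat_ge (11 * c₂ * 2 ^ q / c₁)
  rw [div_le_iff₀' hc₁] at hΛ
  obtain ⟨k, hk⟩ := pow_unbounded_of_one_lt (4 ^ q * ((2 * Λ + 1 : ℕ) : ℝ) * 2) hy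
  have hkq : 4 ^ q * (2 * Λ + 1 : ℕ) * 2 ≤ y ^ (k * q) :=
    hk.le.trans (pow_le_pow_right₀ hy.le (Nat.le_mul_of_pos_right _ hq0))
  refine ⟨2 ^ (q * 2 ^ k), by positivity, fun n ↦ ?_⟩
  induction n using Nat.strong_induction_on with
  | _ n ih =>
  by_cases hn : n < q * 2 ^ k
  · refine (decouples_two_pow r n).mono ?_
    calc (2 : ℝ) ^ n ≤ 2 ^ (q * 2 ^ k) := pow_le_pow_right₀ (by norm_num) hn.le
      _ ≤ _ := le_mul_of_one_le_right (by positivity) (one_le_pow₀ hy.le)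
  · intro i K hK Θ f hf l
    exact hm.sqNorm_arcSum_le hQ hc₁.le hc₂ hr hΛ hK hf (by positivity) hy hq.le hkq (not_lt.1 hn)
      (decouplesFrom_of_decouples (fun s hs _ ↦ ih (n - s) (by lia)) hK hf) l

end ExistsDecouples

section SixthPower

variable {V : Type*} [NormedAddCommGroup V] [InnerProductSpace ℝ V]
  {γ : ℝ → V} {U : Set ℝ} {Θ : Finset ℝ} {ν : ℝ → ℝ} {h : ℝ → V → ℂ} {c₃ r K κ s y : ℝ}

lemma Decouples.iterate [MeasurableSpace V] {m : Measure V} {n : ℕ} {D : ℝ}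
    (hD : Decouples m γ U r n D) (hD0 : 0 ≤ D) (hr : 0 ≤ r) {f : ℝ → V → ℂ}
    (hf : Radial γ U K (1 / 4 ^ n) Θ f) (l : ℤ) (j : ℕ) (hK : r * 4 ^ (j * n) ≤ |K|) :
    sqNorm m (arcSum Θ f 0 l) ≤
      D ^ j * ∑ l' ∈ children (j * n) l, sqNorm m (arcSum Θ f (j * n) l') := by
  induction j with
  | zero => simp [children_zero]
  | succ j ih =>
    rw [add_mul, one_mul] at hK ⊢
    have hK' : r * 4 ^ (j * n) ≤ |K| :=
      hK.trans' (by gcongr; exacts [by norm_num, Nat.le_add_right _ _])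
    calc _ ≤ _ := ih hK'
      _ ≤ D ^ j * ∑ l' ∈ children (j * n) l, D * ∑ l'' ∈ children n l',
          sqNorm m (arcSum Θ f (j * n + n) l'') := by
        gcongr
        exact hD (j * n) K hK Θ f hf _
      _ = _ := by rw [← Finset.mul_sum, ← sum_children_add, pow_succ, mul_assoc]

lemma le_norm_smul_sub_smul {k k' : ℝ} {u v : V} (hu : ‖u‖ = 1) (hv : ‖v‖ = 1)
    (hk : |k - K| ≤ |K| / 2) (hk' : |k' - K| ≤ |K| / 2) :
    |K| / 2 * ‖u - v‖ ≤ ‖k • u - k' • v‖ := by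
  have hnorm : ‖k • u - k' • v‖ ^ 2 = (k - k') ^ 2 + k * k' * ‖u - v‖ ^ 2 := by
    rw [norm_sub_sq_real, norm_sub_sq_real, norm_smul, norm_smul, hu, hv, inner_smul_left,
      inner_smul_right]
    simp only [mul_one, Real.norm_eq_abs, sq_abs, conj_trivial]
    ring
  have hkk' : (|K| / 2) ^ 2 ≤ k * k' := by
    rw [abs_le] at hk hk'
    rcases abs_cases K with ⟨hK, _⟩ | ⟨hK, _⟩ <;> rw [hK] at hk hk' ⊢ <;> nlinarith
  refine le_of_pow_le_pow_left₀ two_ne_zero (norm_nonneg _) ?_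
  calc (|K| / 2 * ‖u - v‖) ^ 2 = (|K| / 2) ^ 2 * ‖u - v‖ ^ 2 := mul_pow ..
    _ ≤ (k - k') ^ 2 + k * k' * ‖u - v‖ ^ 2 := by
      linarith [mul_le_mul_of_nonneg_right hkk' (sq_nonneg ‖u - v‖), sq_nonneg (k - k')]
    _ = _ := hnorm.symm

lemma le_norm_sub_of_mem_rayPiece (hU : ∀ θ ∈ U, ‖γ θ‖ = 1) (hc₃ : 0 ≤ c₃)
    (hlow : ∀ θ ∈ U, ∀ θ' ∈ U, c₃ * |θ - θ'| ≤ ‖γ θ - γ θ'‖) {Λ G : ℕ} (hΛ : 2 * r ≤ c₃ * Λ)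
    (hκ : κ ≤ 1 / 2) (hK : 2 ^ G ≤ |K|) {θ θ' : ℝ} (hθ : θ ∈ U) (hθ' : θ' ∈ U)
    (hfar : Λ < |dyadicIndex G θ - dyadicIndex G θ'|) {ω ω' : V} (hω : ω ∈ rayPiece γ K κ θ)
    (hω' : ω' ∈ rayPiece γ K κ θ') : r ≤ ‖ω - ω'‖ := by
  obtain ⟨k, hk, rfl⟩ := hω
  obtain ⟨k', hk', rfl⟩ := hω'
  have hκK : κ * |K| ≤ |K| / 2 := by linarith [mul_le_mul_of_nonneg_right hκ (abs_nonneg K)]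
  have hΛ' : (Λ : ℝ) ≤ (|dyadicIndex G θ - dyadicIndex G θ'| : ℤ) - 1 := by
    exact_mod_cast Int.le_sub_one_of_lt hfar
  calc r ≤ c₃ * Λ / 2 := by linarith
    _ = 2 ^ G / 2 * (c₃ * (Λ / 2 ^ G)) := by field_simp
    _ ≤ |K| / 2 * (c₃ * |θ - θ'|) := by
      gcongr
      exact (by gcongr : (Λ : ℝ) / 2 ^ G ≤ _).trans (sub_one_div_le_abs_sub G θ θ')
    _ ≤ |K| / 2 * ‖γ θ - γ θ'‖ := by gcongr; exact hlow θ hθ θ' hθ'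
    _ ≤ _ := le_norm_smul_sub_smul (hU θ hθ) (hU θ' hθ') (hk.trans hκK) (hk'.trans hκK)

lemma card_filter_abs_dyadicIndex_sub_le {G : ℕ} (hinj : InjOn (dyadicIndex G) Θ) (θ : ℝ)
    (Λ : ℕ) : (Θ.filter fun θ' ↦ |dyadicIndex G θ - dyadicIndex G θ'| ≤ Λ).card ≤ 2 * Λ + 1 := by
  refine le_trans (Finset.card_le_card_of_injOn (dyadicIndex G) ?_ ?_)
    (card_filter_abs_sub_le (Θ.image (dyadicIndex G)) (dyadicIndex G θ) Λ)
  · intro θ' hθ'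
    obtain ⟨hθ', hnear⟩ := Finset.mem_filter.1 hθ'
    exact Finset.mem_filter.2 ⟨Finset.mem_image_of_mem _ hθ', hnear⟩
  · exact hinj.mono fun θ' hθ' ↦ (Finset.mem_filter.1 hθ').1

lemma norm_arcSum_smul_le (hν : ∀ θ, 0 ≤ ν θ) {X : Type*} {h : ℝ → X → ℂ}
    (hh : ∀ θ ∈ Θ, ∀ x, ‖h θ x‖ ≤ 1) (j : ℕ) (l : ℤ) (x : X) :
    ‖arcSum Θ (fun θ ↦ (ν θ : ℂ) • h θ) j l x‖ ≤ arcSum Θ ν j l := by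
  unfold arcSum
  rw [Finset.sum_apply]
  refine norm_sum_le_of_le _ fun θ hθ ↦ ?_
  rw [Pi.smul_apply, norm_smul, Complex.norm_real, Real.norm_of_nonneg (hν θ)]
  exact mul_le_of_le_one_right (hν θ) (hh θ (Finset.mem_filter.1 hθ).1 x)

lemma arcSum_nonneg (hν : ∀ θ, 0 ≤ ν θ) (j : ℕ) (l : ℤ) :
    0 ≤ arcSum Θ ν j l := Finset.sum_nonneg fun θ _ ↦ hν θ

lemma Radial.smul (hh : Radial γ U K κ Θ h) (ν : ℝ → ℝ) :
    Radial γ U K κ Θ fun θ ↦ (ν θ : ℂ) • h θ :=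
  fun θ hθ ↦ ⟨(hh θ hθ).1, Submodule.smul_mem _ _ (hh θ hθ).2⟩

variable [MeasurableSpace V] {m : Measure V} [IsFiniteMeasure m]

lemma integral_norm_smul_sq_le {X : Type*} [MeasurableSpace X] {m : Measure X}
    [IsFiniteMeasure m] {g : X → ℂ} (hg : ∀ x, ‖g x‖ ≤ 1) {a B : ℝ} (ha : 0 ≤ a) (haB : a ≤ B) :
    ∫ x, ‖((a : ℂ) • g) x‖ ^ 2 ∂m ≤ m.real univ * B * a := by
  calc ∫ x, ‖((a : ℂ) • g) x‖ ^ 2 ∂m ≤ ∫ _, B * a ∂m := by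
        refine integral_mono_of_nonneg (.of_forall fun x ↦ by positivity) (integrable_const _)
          (.of_forall fun x ↦ ?_)
        dsimp only
        rw [Pi.smul_apply, norm_smul, Complex.norm_real, Real.norm_of_nonneg ha]
        calc (a * ‖g x‖) ^ 2 ≤ (a * 1) ^ 2 := by gcongr; exact hg x
          _ ≤ B * a := by rw [mul_one, sq]; gcongr
    _ = _ := by rw [integral_const, smul_eq_mul, mul_assoc]

variable [OpensMeasurableSpace V]

lemma BandLimited.integral_norm_sq_arcSum_le (hm : BandLimited m r)
    (hU : ∀ θ ∈ U, ‖γ θ‖ = 1) (hc₃ : 0 ≤ c₃)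
    (hlow : ∀ θ ∈ U, ∀ θ' ∈ U, c₃ * |θ - θ'| ≤ ‖γ θ - γ θ'‖) {Λ G : ℕ} (hΛ : 2 * r ≤ c₃ * Λ)
    (hκ : κ ≤ 1 / 2) (hK : 2 ^ G ≤ |K|) (hinj : InjOn (dyadicIndex G) Θ)
    (hν : ∀ θ, 0 ≤ ν θ) (hh : Radial γ U K κ Θ h) (hh1 : ∀ θ ∈ Θ, ∀ x, ‖h θ x‖ ≤ 1) {B : ℝ}
    (hB : ∀ θ ∈ Θ, ν θ ≤ B) (j : ℕ) (l : ℤ) :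
    ∫ x, ‖arcSum Θ (fun θ ↦ (ν θ : ℂ) • h θ) j l x‖ ^ 2 ∂m ≤
      (2 * Λ + 1 : ℕ) * (m.real univ * B) * arcSum Θ ν j l := by
  set s := Θ.filter fun θ ↦ dyadicIndex j θ = l
  have hs {θ} (hθ : θ ∈ s) : θ ∈ Θ := (Finset.mem_filter.1 hθ).1
  calc ∫ x, ‖arcSum Θ (fun θ ↦ (ν θ : ℂ) • h θ) j l x‖ ^ 2 ∂m
      = ∫ x, ‖∑ θ ∈ s, ((ν θ : ℂ) • h θ) x‖ ^ 2 ∂m := by simp_rw [arcSum, Finset.sum_apply, s]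
    _ ≤ (2 * Λ + 1 : ℕ) * ∑ θ ∈ s, ∫ x, ‖((ν θ : ℂ) • h θ) x‖ ^ 2 ∂m := by
      refine hm.integral_norm_sq_sum_le s _ (fun θ ↦ rayPiece γ K κ θ)
        (fun θ hθ ↦ (hh.smul ν θ (hs hθ)).2)
        (fun θ θ' ↦ |dyadicIndex G θ - dyadicIndex G θ'| ≤ Λ)
        (fun θ θ' h ↦ by rwa [abs_sub_comm]) (2 * Λ + 1) (fun θ _ ↦ ?_)
        fun θ hθ θ' hθ' hfar ω hω ω' hω' ↦ le_norm_sub_of_mem_rayPiece hU hc₃ hlow hΛ hκ hK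
          (hh θ (hs hθ)).1 (hh θ' (hs hθ')).1 (not_le.1 hfar) hω hω'
      exact card_filter_abs_dyadicIndex_sub_le (hinj.mono fun θ hθ ↦ hs hθ) θ Λ
    _ ≤ (2 * Λ + 1 : ℕ) * ∑ θ ∈ s, m.real univ * B * ν θ := by
      gcongr with θ hθ
      exact integral_norm_smul_sq_le (hh1 θ (hs hθ)) (hν θ) (hB θ (hs hθ))
    _ = _ := by rw [← Finset.mul_sum, ← mul_assoc, arcSum]

lemma BandLimited.integral_norm_six_arcSum_le (hm : BandLimited m r)
    (hU : ∀ θ ∈ U, ‖γ θ‖ = 1) (hc₃ : 0 ≤ c₃)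
    (hlow : ∀ θ ∈ U, ∀ θ' ∈ U, c₃ * |θ - θ'| ≤ ‖γ θ - γ θ'‖) {Λ G : ℕ} (hΛ : 2 * r ≤ c₃ * Λ)
    (hκ : κ ≤ 1 / 2) (hK : 2 ^ G ≤ |K|) (hinj : InjOn (dyadicIndex G) Θ)
    (hν : ∀ θ, 0 ≤ ν θ) (hh : Radial γ U K κ Θ h) (hh1 : ∀ θ ∈ Θ, ∀ x, ‖h θ x‖ ≤ 1)
    (hs : 0 ≤ s) (hfr : ∀ j ≤ G, ∀ l, arcSum Θ ν j l ≤ s ^ j) {g : ℕ} (hg : g ≤ G) (l : ℤ) :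
    ∫ x, ‖arcSum Θ (fun θ ↦ (ν θ : ℂ) • h θ) g l x‖ ^ 6 ∂m ≤
      (2 * Λ + 1 : ℕ) * (m.real univ * s ^ G) * s ^ (2 * g) * arcSum Θ ν g l ^ 3 := by
  set f : ℝ → V → ℂ := fun θ ↦ (ν θ : ℂ) • h θ
  have hf : BddContinuous (arcSum Θ f g l) := (hh.smul ν).bddContinuous_arcSum g l
  have hN : 0 ≤ arcSum Θ ν g l := arcSum_nonneg hν g l
  have hνG {θ} (hθ : θ ∈ Θ) : ν θ ≤ s ^ G :=
    (hfr G le_rfl (dyadicIndex G θ)).trans' <|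
      Finset.single_le_sum (f := ν) (fun θ _ ↦ hν θ) (Finset.mem_filter.2 ⟨hθ, rfl⟩)
  calc ∫ x, ‖arcSum Θ f g l x‖ ^ 6 ∂m
      ≤ ∫ x, arcSum Θ ν g l ^ 4 * ‖arcSum Θ f g l x‖ ^ 2 ∂m := by
        refine integral_mono (hf.norm.pow 6).integrable
          ((hf.norm.pow 2).integrable.const_mul _) fun x ↦ ?_
        calc ‖arcSum Θ f g l x‖ ^ 6 = ‖arcSum Θ f g l x‖ ^ 4 * ‖arcSum Θ f g l x‖ ^ 2 := by ring
          _ ≤ _ := by gcongr; exact norm_arcSum_smul_le hν hh1 g l x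
    _ = arcSum Θ ν g l ^ 4 * ∫ x, ‖arcSum Θ f g l x‖ ^ 2 ∂m := integral_const_mul _ _
    _ ≤ arcSum Θ ν g l ^ 4 * ((2 * Λ + 1 : ℕ) * (m.real univ * s ^ G) * arcSum Θ ν g l) := by
        gcongr
        exact hm.integral_norm_sq_arcSum_le hU hc₃ hlow hΛ hκ hK hinj hν hh hh1
          (fun θ hθ ↦ hνG hθ) g l
    _ = (2 * Λ + 1 : ℕ) * (m.real univ * s ^ G) * arcSum Θ ν g l ^ 2 * arcSum Θ ν g l ^ 3 := by
        ring
    _ ≤ (2 * Λ + 1 : ℕ) * (m.real univ * s ^ G) * (s ^ g) ^ 2 * arcSum Θ ν g l ^ 3 := by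
        gcongr
        exact hfr g hg l
    _ = _ := by rw [← pow_mul, mul_comm g 2]

lemma Decouples.integral_norm_six_arcSum_le {n : ℕ} {D : ℝ} (hD : Decouples m γ U r n D)
    (hD0 : 0 ≤ D) (hr : 0 ≤ r) {f : ℝ → V → ℂ} (hf : Radial γ U K (1 / 4 ^ n) Θ f) {j : ℕ}
    (hK : r * 4 ^ (j * n) ≤ |K|) (hν : ∀ θ, 0 ≤ ν θ) {A : ℝ} (hA : 0 ≤ A)
    (hpiece : ∀ l, ∫ x, ‖arcSum Θ f (j * n) l x‖ ^ 6 ∂m ≤ A * arcSum Θ ν (j * n) l ^ 3) (l : ℤ) :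
    ∫ x, ‖arcSum Θ f 0 l x‖ ^ 6 ∂m ≤ D ^ (3 * j) * A * arcSum Θ ν 0 l ^ 3 := by
  obtain ⟨X, hX0, rfl⟩ : ∃ X : ℝ, 0 ≤ X ∧ X ^ 3 = A :=
    ⟨A ^ ((3 : ℕ) : ℝ)⁻¹, by positivity, Real.rpow_inv_natCast_pow hA (by norm_num)⟩
  have hsqNorm (l') : sqNorm m (arcSum Θ f (j * n) l') ≤ X * arcSum Θ ν (j * n) l' := by
    refine le_of_pow_le_pow_left₀ (n := 3) (by norm_num)
      (mul_nonneg hX0 (arcSum_nonneg hν _ _)) ?_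
    rw [(hf.bddContinuous_arcSum _ _).sqNorm_pow_three, mul_pow]
    exact hpiece l'
  rw [← (hf.bddContinuous_arcSum 0 l).sqNorm_pow_three]
  calc sqNorm m (arcSum Θ f 0 l) ^ 3
      ≤ (D ^ j * ∑ l' ∈ children (j * n) l, X * arcSum Θ ν (j * n) l') ^ 3 := by
        refine pow_le_pow_left₀ (sqNorm_nonneg _ _) ((hD.iterate hD0 hr hf l j hK).trans ?_) 3
        gcongr
        exact hsqNorm _
    _ = D ^ (3 * j) * X ^ 3 * arcSum Θ ν 0 l ^ 3 := by
        rw [← Finset.mul_sum, arcSum_eq_sum_children Θ ν 0 (j * n) l, zero_add, mul_comm 3 j,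
          pow_mul]
        ring

-- The arc is decoupled `j` times, down to generation `j n ≈ J / 2`, the finest one that the band
-- limit of `m` resolves at frequency `|K| ≥ 2 ^ J`.
lemma Decouples.integral_norm_six_arcSum_zero_le {n : ℕ} (hn : 0 < n)
    (hD : Decouples m γ U r n (y ^ (3 * n))) (hm : BandLimited m r) (hr : 0 ≤ r)
    (hU : ∀ θ ∈ U, ‖γ θ‖ = 1) (hc₃ : 0 ≤ c₃)
    (hlow : ∀ θ ∈ U, ∀ θ' ∈ U, c₃ * |θ - θ'| ≤ ‖γ θ - γ θ'‖) (hy : 1 ≤ y)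
    (hs0 : 0 < s) (hs1 : s ≤ 1) {Λ J₀ J : ℕ} (hΛ : 2 * r ≤ c₃ * Λ) (hJ₀ : r ≤ 2 ^ J₀)
    (hJ : J₀ ≤ J) (hK : 2 ^ J ≤ |K|) (hinj : InjOn (dyadicIndex J) Θ) (hν : ∀ θ, 0 ≤ ν θ)
    (hh : Radial γ U K (1 / 4 ^ n) Θ h) (hh1 : ∀ θ ∈ Θ, ∀ x, ‖h θ x‖ ≤ 1)
    (hfr : ∀ j ≤ J, ∀ l, arcSum Θ ν j l ≤ s ^ j) (l : ℤ) :
    ∫ x, ‖arcSum Θ (fun θ ↦ (ν θ : ℂ) • h θ) 0 l x‖ ^ 6 ∂m ≤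
      (2 * Λ + 1 : ℕ) * m.real univ / s ^ (J₀ + 2 * n) * y ^ (5 * J) * s ^ (2 * J) *
        arcSum Θ ν 0 l ^ 3 := by
  have hn4 : (1 : ℝ) / 4 ^ n ≤ 1 / 2 := by
    gcongr
    exact (by norm_num : (2 : ℝ) ≤ 4 ^ 1).trans (pow_le_pow_right₀ (by norm_num) hn)
  obtain ⟨j, hjn, hjn'⟩ : ∃ j, 2 * (j * n) ≤ J - J₀ ∧ J - J₀ ≤ 2 * (j * n) + 2 * n :=
    ⟨(J - J₀) / (2 * n), by linear_combination Nat.div_mul_le_self (J - J₀) (2 * n),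
      by linear_combination (Nat.lt_div_mul_add (a := J - J₀) (b := 2 * n) (by lia)).le⟩
  have hrK : r * 4 ^ (j * n) ≤ |K| := by
    calc r * 4 ^ (j * n) ≤ 2 ^ J₀ * 2 ^ (2 * (j * n)) := by rw [pow_mul 2 2]; norm_num; gcongr
      _ = 2 ^ (J₀ + 2 * (j * n)) := by rw [pow_add]
      _ ≤ 2 ^ J := pow_le_pow_right₀ one_le_two (by lia)
      _ ≤ |K| := hK
  have hN : 0 ≤ arcSum Θ ν 0 l := arcSum_nonneg hν 0 l
  calc _ ≤ (y ^ (3 * n)) ^ (3 * j) * ((2 * Λ + 1 : ℕ) * (m.real univ * s ^ J) *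
        s ^ (2 * (j * n))) * arcSum Θ ν 0 l ^ 3 :=
        hD.integral_norm_six_arcSum_le (by positivity) hr (hh.smul ν) hrK hν (by positivity)
          (hm.integral_norm_six_arcSum_le hU hc₃ hlow hΛ hn4 hK hinj hν hh hh1 hs0.le hfr
            (by lia)) l
    _ = y ^ (9 * (j * n)) * ((2 * Λ + 1 : ℕ) * (m.real univ * s ^ J) * s ^ (2 * (j * n))) *
        arcSum Θ ν 0 l ^ 3 := by rw [← pow_mul]; ring_nf
    _ ≤ y ^ (5 * J) * ((2 * Λ + 1 : ℕ) * (m.real univ * s ^ J) * (s ^ J / s ^ (J₀ + 2 * n))) *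
        arcSum Θ ν 0 l ^ 3 := by
        gcongr ?_ * (_ * ?_) * _
        · exact pow_le_pow_right₀ hy (by lia)
        · rw [le_div_iff₀ (by positivity), ← pow_add]
          exact pow_le_pow_of_le_one hs0.le hs1 (by lia)
    _ = _ := by ring

theorem BandLimited.exists_integral_norm_six_arcSum_le (hm : BandLimited m r) {c₁ c₂ : ℝ}
    (hQ : QuadNondeg γ U c₁ c₂) (hc₁ : 0 < c₁) (hc₂ : 0 < c₂) (hr : 0 ≤ r)
    (hU : ∀ θ ∈ U, ‖γ θ‖ = 1) (hc₃ : 0 < c₃)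
    (hlow : ∀ θ ∈ U, ∀ θ' ∈ U, c₃ * |θ - θ'| ≤ ‖γ θ - γ θ'‖) (hy : 1 < y)
    (hs0 : 0 < s) (hs1 : s ≤ 1) :
    ∃ (n J₀ : ℕ) (C : ℝ), 0 < n ∧ 0 ≤ C ∧ ∀ J, J₀ ≤ J → ∀ K : ℝ, 2 ^ J ≤ |K| →
      ∀ (Θ : Finset ℝ) (ν : ℝ → ℝ) (h : ℝ → V → ℂ),
        InjOn (dyadicIndex J) Θ → (∀ θ, 0 ≤ ν θ) →
        Radial γ U K (1 / 4 ^ n) Θ h → (∀ θ ∈ Θ, ∀ x, ‖h θ x‖ ≤ 1) →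
        (∀ j ≤ J, ∀ l, arcSum Θ ν j l ≤ s ^ j) → ∀ l,
        ∫ x, ‖arcSum Θ (fun θ ↦ (ν θ : ℂ) • h θ) 0 l x‖ ^ 6 ∂m ≤
          C * y ^ (5 * J) * s ^ (2 * J) * arcSum Θ ν 0 l ^ 3 := by
  obtain ⟨C, -, hdec⟩ := hm.exists_decouples hQ hc₁ hc₂ hr hy
  obtain ⟨n, hCn, hn⟩ := ((tendsto_pow_atTop_atTop_of_one_lt hy).eventually_ge_atTop C
    |>.and (Filter.eventually_gt_atTop 0)).exists
  obtain ⟨J₀, hJ₀⟩ := pow_unbounded_of_one_lt r one_lt_two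
  obtain ⟨Λ, hΛ⟩ := exists_nat_ge (2 * r / c₃)
  rw [div_le_iff₀' hc₃] at hΛ
  have hD : Decouples m γ U r n (y ^ (3 * n)) := (hdec n).mono <| by
    rw [show 3 * n = n + 2 * n by ring, pow_add]
    exact mul_le_mul_of_nonneg_right hCn (by positivity)
  exact ⟨n, J₀, (2 * Λ + 1 : ℕ) * m.real univ / s ^ (J₀ + 2 * n), hn, by positivity,
    fun J hJ K hK Θ ν h hinj hν hh hh1 hfr l ↦ hD.integral_norm_six_arcSum_zero_le hn hm hr hU
      hc₃.le hlow hy.le hs0 hs1 hΛ hJ₀.le hJ hK hinj hν hh hh1 hfr l⟩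

end SixthPower

/-! ### Frostman's lemma on a dyadic tree -/

section Frostman

variable {T : Set ℤ} {b : ℕ → ℝ}

/-- The weights on the leaves of the dyadic tree in the proof of Frostman's lemma: starting from
`b 0` on each leaf in `T`, at stage `d` the weights below a vertex of height `d` whose total exceeds
`b d` are scaled down to total `b d`. -/
def frostmanWeight (T : Set ℤ) (b : ℕ → ℝ) : ℕ → ℤ → ℝ
  | 0 => T.indicator fun _ ↦ b 0
  | d + 1 => fun k ↦
    let S := ∑ k' ∈ children (d + 1) (k / 2 ^ (d + 1)), frostmanWeight T b d k'
    if S ≤ b (d + 1) then frostmanWeight T b d k else b (d + 1) / S * frostmanWeight T b d k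

lemma frostmanWeight_of_notMem {k : ℤ} (hk : k ∉ T) (d : ℕ) : frostmanWeight T b d k = 0 := by
  induction d with
  | zero => exact indicator_of_notMem hk _
  | succ d ih => simp only [frostmanWeight, ih, mul_zero, ite_self]

lemma frostmanWeight_succ {d : ℕ} {i k : ℤ} (hk : k ∈ children (d + 1) i) :
    frostmanWeight T b (d + 1) k =
      if ∑ k' ∈ children (d + 1) i, frostmanWeight T b d k' ≤ b (d + 1) then
        frostmanWeight T b d k
      else b (d + 1) / (∑ k' ∈ children (d + 1) i, frostmanWeight T b d k') *
        frostmanWeight T b d k := by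
  rw [← mem_children.1 hk, frostmanWeight]

lemma frostmanWeight_nonneg (hb : ∀ d, 0 ≤ b d) (d : ℕ) (k : ℤ) : 0 ≤ frostmanWeight T b d k := by
  induction d generalizing k with
  | zero => exact indicator_nonneg (fun _ _ ↦ hb 0) k
  | succ d ih =>
    rw [frostmanWeight]
    dsimp only
    split_ifs
    · exact ih k
    · exact mul_nonneg (div_nonneg (hb _) (Finset.sum_nonneg fun _ _ ↦ ih _)) (ih k)

lemma frostmanWeight_succ_le (hb : ∀ d, 0 ≤ b d) (d : ℕ) (k : ℤ) :
    frostmanWeight T b (d + 1) k ≤ frostmanWeight T b d k := by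
  rw [frostmanWeight]
  dsimp only
  split_ifs with h
  · rfl
  · exact mul_le_of_le_one_left (frostmanWeight_nonneg hb d k)
      (div_le_one_of_le₀ (not_le.1 h).le ((hb _).trans (not_le.1 h).le))

lemma sum_frostmanWeight_succ (hb : ∀ d, 0 ≤ b d) (d : ℕ) (i : ℤ) :
    ∑ k ∈ children (d + 1) i, frostmanWeight T b (d + 1) k =
      min (b (d + 1)) (∑ k ∈ children (d + 1) i, frostmanWeight T b d k) := by
  rw [Finset.sum_congr rfl fun k hk ↦ frostmanWeight_succ hk]
  split_ifs with h
  · exact (min_eq_right h).symm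
  · rw [← Finset.mul_sum, div_mul_cancel₀ _ ((hb _).trans_lt (not_le.1 h)).ne',
      min_eq_left (not_le.1 h).le]

lemma sum_frostmanWeight_le (hb : ∀ d, 0 ≤ b d) {d d' : ℕ} (hd : d' ≤ d) (i : ℤ) :
    ∑ k ∈ children d' i, frostmanWeight T b d k ≤ b d' := by
  induction d, hd using Nat.le_induction with
  | base =>
    cases d' with
    | zero =>
      rw [children_zero, Finset.sum_singleton]
      exact indicator_le_self' (fun _ _ ↦ hb 0) i
    | succ d => exact (sum_frostmanWeight_succ hb d i).trans_le (min_le_left _ _)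
  | succ d _ ih => exact (Finset.sum_le_sum fun k _ ↦ frostmanWeight_succ_le hb d k).trans ih

lemma sum_biUnion_le_sum {ι α : Type*} [DecidableEq α] (S : Finset ι) (t : ι → Finset α)
    {f : α → ℝ} (hf : ∀ p, 0 ≤ f p) :
    ∑ p ∈ S.biUnion t, f p ≤ ∑ k ∈ S, ∑ p ∈ t k, f p := by
  have himage : S.biUnion t = (S.sigma t).image Sigma.snd := by
    ext
    simp
  rw [himage, Finset.sum_sigma']
  exact Finset.sum_image_le_of_nonneg fun p _ ↦ hf p

lemma exists_cover_sum_le_sum_frostmanWeight (hb : ∀ d, 0 ≤ b d) (d : ℕ) (i : ℤ) :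
    ∃ 𝒞 : Finset (ℕ × ℤ), (∀ p ∈ 𝒞, p.1 ≤ d) ∧
      (∀ k ∈ children d i, k ∈ T → ∃ p ∈ 𝒞, k ∈ children p.1 p.2) ∧
      ∑ p ∈ 𝒞, b p.1 ≤ ∑ k ∈ children d i, frostmanWeight T b d k := by
  classical
  induction d generalizing i with
  | zero =>
    simp only [children_zero, Finset.mem_singleton, forall_eq, Finset.sum_singleton]
    by_cases hi : i ∈ T
    · exact ⟨{(0, i)}, by simp, fun _ ↦ ⟨(0, i), by simp, by simp [children_zero]⟩,
        by simp [frostmanWeight, hi]⟩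
    · exact ⟨∅, by simp, fun h ↦ absurd h hi, (frostmanWeight_of_notMem hi 0).ge⟩
  | succ d ih =>
    rw [sum_frostmanWeight_succ hb]
    rcases le_total (∑ k ∈ children (d + 1) i, frostmanWeight T b d k) (b (d + 1)) with h | h
    · choose 𝒞 hdepth hcover hcost using ih
      rw [min_eq_right h, add_comm d 1, sum_children_add]
      refine ⟨(children 1 i).biUnion 𝒞, fun p hp ↦ ?_, fun k hk hkT ↦ ?_, ?_⟩
      · obtain ⟨i', -, hp⟩ := Finset.mem_biUnion.1 hp
        exact (hdepth i' p hp).trans (by lia)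
      · have hki : k / 2 ^ d ∈ children 1 i := by
          rw [mem_children, Int.ediv_ediv_of_nonneg (by positivity), ← pow_add, add_comm d 1]
          exact mem_children.1 hk
        obtain ⟨p, hp, hkp⟩ := hcover _ k (mem_children.2 rfl) hkT
        exact ⟨p, Finset.mem_biUnion.2 ⟨_, hki, hp⟩, hkp⟩
      · exact (sum_biUnion_le_sum _ _ fun p : ℕ × ℤ ↦ hb p.1).trans
          (Finset.sum_le_sum fun i' _ ↦ hcost i')
    · rw [min_eq_left h]
      exact ⟨{(d + 1, i)}, by simp, fun k hk _ ↦ ⟨(d + 1, i), by simp, hk⟩, by simp⟩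

lemma dyadicIndex_eq_iff_mem_children {j J : ℕ} (hj : j ≤ J) {l : ℤ} {θ : ℝ} :
    dyadicIndex j θ = l ↔ dyadicIndex J θ ∈ children (J - j) l := by
  obtain ⟨n, rfl⟩ := Nat.exists_eq_add_of_le hj
  rw [Nat.add_sub_cancel_left, mem_children, dyadicIndex_add_ediv]

lemma arcSum_image {M : Type*} [AddCommMonoid M] {J : ℕ} {g : ℤ → ℝ} {S : Finset ℤ}
    (hg : ∀ k ∈ S, dyadicIndex J (g k) = k) (w : ℤ → M) {j : ℕ} (hj : j ≤ J) (l : ℤ) :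
    arcSum (S.image g) (fun θ ↦ w (dyadicIndex J θ)) j l =
      ∑ k ∈ S with k ∈ children (J - j) l, w k := by
  have hinj : InjOn g S := LeftInvOn.injOn (f₁' := dyadicIndex J) hg
  rw [arcSum, Finset.sum_filter, Finset.sum_image hinj, Finset.sum_filter]
  refine Finset.sum_congr rfl fun k hk ↦ ?_
  simp only [dyadicIndex_eq_iff_mem_children hj, hg k hk]

lemma exists_frostman_arcs (E : Set ℝ) {s : ℝ} (hs : 0 ≤ s) (J : ℕ) (l : ℤ) :
    ∃ (Θ : Finset ℝ) (ν : ℝ → ℝ) (𝒞 : Finset (ℕ × ℤ)), (∀ θ ∈ Θ, θ ∈ E) ∧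
      InjOn (dyadicIndex J) Θ ∧ (∀ θ, 0 ≤ ν θ) ∧
      (∀ j ≤ J, ∀ l', arcSum Θ ν j l' ≤ s ^ j) ∧
      (∀ θ ∈ E, dyadicIndex 0 θ = l → ∃ p ∈ 𝒞, dyadicIndex p.1 θ = p.2) ∧
      ∑ p ∈ 𝒞, s ^ p.1 ≤ arcSum Θ ν 0 l := by
  classical
  set T : Set ℤ := dyadicIndex J '' E
  set b : ℕ → ℝ := fun d ↦ s ^ (J - d)
  have hb (d) : 0 ≤ b d := pow_nonneg hs _
  set w := frostmanWeight T b J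
  have hw (k) : 0 ≤ w k := frostmanWeight_nonneg hb J k
  obtain ⟨𝒞, hdepth, hcover, hcost⟩ := exists_cover_sum_le_sum_frostmanWeight (T := T) hb J l
  set g : ℤ → ℝ := Function.invFunOn (dyadicIndex J) E
  set S : Finset ℤ := (children J l).filter (· ∈ T)
  have hgE {k} (hk : k ∈ S) : g k ∈ E := Function.invFunOn_mem (Finset.mem_filter.1 hk).2
  have hg (k) (hk : k ∈ S) : dyadicIndex J (g k) = k :=
    Function.invFunOn_eq (Finset.mem_filter.1 hk).2
  refine ⟨S.image g, fun θ ↦ w (dyadicIndex J θ), 𝒞.image fun p ↦ (J - p.1, p.2), ?_, ?_,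
    fun θ ↦ hw _, fun j hj l' ↦ ?_, fun θ hθ hθl ↦ ?_, ?_⟩
  · exact Finset.forall_mem_image.2 fun k hk ↦ hgE hk
  · rw [Finset.coe_image]
    rintro _ ⟨k, hk, rfl⟩ _ ⟨k', hk', rfl⟩ h
    rw [hg k hk, hg k' hk'] at h
    rw [h]
  · calc _ = ∑ k ∈ S with k ∈ children (J - j) l', w k := arcSum_image hg w hj l'
      _ ≤ ∑ k ∈ children (J - j) l', w k := Finset.sum_le_sum_of_subset_of_nonneg
        (fun k hk ↦ (Finset.mem_filter.1 hk).2) fun k _ _ ↦ hw k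
      _ ≤ b (J - j) := sum_frostmanWeight_le hb (J.sub_le j) l'
      _ = s ^ j := by simp only [b, Nat.sub_sub_self hj]
  · obtain ⟨p, hp, hkp⟩ := hcover _ ((dyadicIndex_eq_iff_mem_children J.zero_le).1 hθl)
      (mem_image_of_mem _ hθ)
    refine ⟨(J - p.1, p.2), Finset.mem_image_of_mem _ hp, ?_⟩
    rwa [dyadicIndex_eq_iff_mem_children (J.sub_le _), Nat.sub_sub_self (hdepth p hp)]
  · calc ∑ p ∈ 𝒞.image fun p ↦ (J - p.1, p.2), s ^ p.1 ≤ ∑ p ∈ 𝒞, s ^ (J - p.1) :=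
          Finset.sum_image_le_of_nonneg (f := fun p : ℕ × ℤ ↦ s ^ p.1) fun p _ ↦ pow_nonneg hs _
      _ ≤ ∑ k ∈ children J l, w k := hcost
      _ = ∑ k ∈ S, w k := (Finset.sum_filter_of_ne fun k _ hk ↦
          not_imp_comm.1 (frostmanWeight_of_notMem · J) hk).symm
      _ = _ := by
          rw [arcSum_image hg w J.zero_le, Nat.sub_zero, Finset.filter_true_of_mem fun k hk ↦
            (Finset.mem_filter.1 hk).1]

end Frostman

/-! ### Multipliers of trigonometric polynomials -/

/-- The character `s ↦ exp (2πi k s)`. -/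
def expChar (k : ℤ) (s : ℝ) : ℂ := (Real.fourierChar (k * s) : ℂ)

lemma expChar_eq_exp (k : ℤ) (s : ℝ) :
    expChar k s = Complex.exp (2 * Real.pi * Complex.I * k * s) := by
  rw [expChar, Real.fourierChar_apply]
  congr 1
  push_cast
  ring

lemma norm_expChar (k : ℤ) (s : ℝ) : ‖expChar k s‖ = 1 := Circle.norm_coe _

lemma continuous_expChar (k : ℤ) : Continuous (expChar k) := by
  unfold expChar
  have := Real.continuous_fourierChar
  fun_prop

lemma expChar_add_right (k : ℤ) (s u : ℝ) :
    expChar k (s + u) = expChar k s * expChar k u := by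
  simp only [expChar_eq_exp, ← Complex.exp_add]
  push_cast
  ring_nf

lemma expChar_sub_right (k : ℤ) (s u : ℝ) :
    expChar k (s - u) = expChar k s * expChar (-k) u := by
  simp only [expChar_eq_exp, ← Complex.exp_add]
  push_cast
  ring_nf

lemma expChar_add_left (k l : ℤ) (s : ℝ) :
    expChar (k + l) s = expChar k s * expChar l s := by
  simp only [expChar_eq_exp, ← Complex.exp_add]
  push_cast
  ring_nf

lemma conj_expChar (k : ℤ) (s : ℝ) : starRingEnd ℂ (expChar k s) = expChar (-k) s := by
  simp only [expChar_eq_exp, ← Complex.exp_conj]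
  simp [Complex.conj_ofNat]

lemma integral_expChar (k : ℤ) : ∫ u in (0 : ℝ)..1, expChar k u = if k = 0 then 1 else 0 := by
  split_ifs with hk
  · simp [expChar_eq_exp, hk]
  · simp only [expChar_eq_exp]
    rw [integral_exp_mul_complex]
    · have : Complex.exp (2 * Real.pi * Complex.I * k) = 1 := by
        rw [mul_comm]; exact Complex.exp_int_mul_two_pi_mul_I k
      simp [this]
    · simp [hk, Real.pi_ne_zero]

lemma hasDerivAt_expChar (k : ℤ) (s : ℝ) :
    HasDerivAt (expChar k) (2 * Real.pi * Complex.I * k * expChar k s) s := by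
  have h : HasDerivAt (fun s : ℝ ↦ (k : ℝ) * s) k s := by
    simpa using (hasDerivAt_id s).const_mul (k : ℝ)
  have := (Real.hasDerivAt_fourierChar ((k : ℝ) * s)).scomp s h
  refine this.congr_deriv ?_
  simp [expChar]
  ring

/-- The trigonometric polynomial with coefficients `c` on the spectrum `S`. -/
def trigSum (S : Finset ℤ) (c : ℤ → ℂ) (s : ℝ) : ℂ := ∑ k ∈ S, c k * expChar k s

lemma continuous_trigSum (S : Finset ℤ) (c : ℤ → ℂ) : Continuous (trigSum S c) := by
  unfold trigSum
  have := continuous_expChar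
  fun_prop

lemma trigSum_congr {S : Finset ℤ} {c d : ℤ → ℂ} (h : ∀ k ∈ S, c k = d k) :
    trigSum S c = trigSum S d := by
  ext s
  exact Finset.sum_congr rfl fun k hk ↦ by rw [h k hk]

lemma trigSum_sum {ι : Type*} (T : Finset ι) (S : Finset ℤ) (c : ι → ℤ → ℂ) (s : ℝ) :
    trigSum S (fun k ↦ ∑ i ∈ T, c i k) s = ∑ i ∈ T, trigSum S (c i) s := by
  simp only [trigSum, Finset.sum_mul]
  exact Finset.sum_comm

lemma trigSum_add (S : Finset ℤ) (c d : ℤ → ℂ) (s : ℝ) :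
    trigSum S (c + d) s = trigSum S c s + trigSum S d s := by
  simp [trigSum, add_mul, Finset.sum_add_distrib]

lemma trigSum_sub (S : Finset ℤ) (c d : ℤ → ℂ) (s : ℝ) :
    trigSum S (c - d) s = trigSum S c s - trigSum S d s := by
  simp [trigSum, sub_mul, Finset.sum_sub_distrib]

lemma trigSum_smul (S : Finset ℤ) (z : ℂ) (c : ℤ → ℂ) (s : ℝ) :
    trigSum S (z • c) s = z * trigSum S c s := by
  simp [trigSum, Finset.mul_sum, mul_assoc]

lemma trigSum_filter (S : Finset ℤ) (c : ℤ → ℂ) (P : ℤ → Prop) [DecidablePred P]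
    (h : ∀ k ∈ S, ¬ P k → c k = 0) : trigSum (S.filter P) c = trigSum S c := by
  ext s
  refine Finset.sum_subset (Finset.filter_subset _ _) fun k hk hk' ↦ ?_
  rw [h k hk fun hP ↦ hk' (Finset.mem_filter.2 ⟨hk, hP⟩), zero_mul]

lemma integral_trigSum_mul_expChar (S : Finset ℤ) (c : ℤ → ℂ) {k : ℤ} (hk : k ∈ S) :
    ∫ u in (0 : ℝ)..1, trigSum S c u * expChar (-k) u = c k := by
  have h : ∀ u, trigSum S c u * expChar (-k) u = ∑ l ∈ S, c l * expChar (l + -k) u := by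
    intro u
    simp only [trigSum, Finset.sum_mul, expChar_add_left, mul_assoc]
  simp only [h]
  rw [intervalIntegral.integral_finsetSum fun l _ ↦ by
    exact ((continuous_expChar _).const_mul _).intervalIntegrable _ _]
  simp only [intervalIntegral.integral_const_mul, integral_expChar]
  rw [Finset.sum_eq_single k]
  · simp
  · intro l _ hl
    rw [if_neg (by lia), mul_zero]
  · exact fun h ↦ absurd hk h

lemma norm_coeff_le (S : Finset ℤ) (c : ℤ → ℂ) {k : ℤ} (hk : k ∈ S) :
    ‖c k‖ ≤ ∫ u in (0 : ℝ)..1, ‖trigSum S c u‖ := by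
  rw [← integral_trigSum_mul_expChar S c hk]
  refine (intervalIntegral.norm_integral_le_integral_norm zero_le_one).trans_eq ?_
  simp [norm_expChar]

/-- `φ` is a multiplier of norm at most `B` for the supremum norm of trigonometric polynomials. -/
def IsMultiplier (φ : ℤ → ℂ) (B : ℝ) : Prop :=
  ∀ (S : Finset ℤ) (c : ℤ → ℂ) (b : ℝ), (∀ s, ‖trigSum S c s‖ ≤ b) →
    ∀ s, ‖trigSum S (φ * c) s‖ ≤ B * b

lemma IsMultiplier.sub {φ ψ : ℤ → ℂ} {B D : ℝ} (hφ : IsMultiplier φ B) (hψ : IsMultiplier ψ D) :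
    IsMultiplier (φ - ψ) (B + D) := by
  intro S c b h s
  rw [sub_mul, trigSum_sub, add_mul]
  exact norm_sub_le_of_le (hφ S c b h s) (hψ S c b h s)

lemma IsMultiplier.smul {φ : ℤ → ℂ} {B : ℝ} (hφ : IsMultiplier φ B) (z : ℂ) :
    IsMultiplier (z • φ) (‖z‖ * B) := by
  intro S c b h s
  rw [smul_mul_assoc, trigSum_smul, norm_mul, mul_assoc]
  exact mul_le_mul_of_nonneg_left (hφ S c b h s) (norm_nonneg z)

lemma IsMultiplier.mul {φ ψ : ℤ → ℂ} {B D : ℝ} (hφ : IsMultiplier φ B) (hψ : IsMultiplier ψ D) :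
    IsMultiplier (φ * ψ) (B * D) := by
  intro S c b h s
  rw [mul_assoc, mul_assoc]
  exact hφ S _ _ (hψ S c b h) s

/-- The Fejér multiplier of width `M` centred at `k₀`: a tent function of height `1`. -/
def fejerHat (k₀ : ℤ) (M : ℕ) (k : ℤ) : ℂ := ((max 0 (M - |k - k₀|) : ℤ) : ℂ) / M

lemma fejerHat_eq_zero {k₀ : ℤ} {M : ℕ} {k : ℤ} (h : M ≤ |k - k₀|) : fejerHat k₀ M k = 0 := by
  rw [fejerHat, max_eq_left (by lia)]
  simp

lemma fejerHat_eq {k₀ : ℤ} {M : ℕ} {k : ℤ} (h : |k - k₀| ≤ M) :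
    fejerHat k₀ M k = ((M - |k - k₀| : ℤ) : ℂ) / M := by
  rw [fejerHat, max_eq_right (by lia)]

lemma norm_fejerHat_le (k₀ : ℤ) (M : ℕ) (k : ℤ) : ‖fejerHat k₀ M k‖ ≤ 1 := by
  rw [fejerHat, norm_div, Complex.norm_intCast, Complex.norm_natCast]
  refine div_le_one_of_le₀ ?_ (by positivity)
  have : |max 0 (M - |k - k₀|)| ≤ (M : ℤ) := by
    rw [abs_of_nonneg (le_max_left _ _)]
    have := abs_nonneg (k - k₀)
    lia
  exact_mod_cast this

lemma sum_sum_ite_sub (M : ℕ) (d : ℤ) :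
    ∑ a ∈ Finset.Ico (0 : ℤ) M, ∑ b ∈ Finset.Ico (0 : ℤ) M,
      (if -d + (a - b) = 0 then (1 : ℂ) else 0) = ((max 0 (M - |d|) : ℤ) : ℂ) := by
  have hrow : ∀ a : ℤ, ∑ b ∈ Finset.Ico (0 : ℤ) M, (if -d + (a - b) = 0 then (1 : ℂ) else 0) =
      if a ∈ Finset.Ico d (M + d) then 1 else 0 := by
    intro a
    have hb : ∀ b : ℤ, -d + (a - b) = 0 ↔ b = a - d := fun b ↦ by lia
    simp only [hb, Finset.sum_ite_eq', Finset.mem_Ico]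
    congr 1
    rw [eq_iff_iff]
    constructor <;> rintro ⟨_, _⟩ <;> constructor <;> lia
  simp only [hrow]
  rw [← Finset.sum_filter, Finset.filter_mem_eq_inter, Finset.Ico_inter_Ico]
  simp only [Finset.sum_const, Int.card_Ico, nsmul_eq_mul, mul_one]
  rw [← Int.cast_natCast, Int.toNat_eq_max]
  congr 1
  rcases abs_cases d with ⟨h, _⟩ | ⟨h, _⟩ <;> rw [h] <;> simp only [max_def, min_def] <;>
    split_ifs <;> lia

/-- The Dirichlet kernel with spectrum `0, …, M - 1`; its squared modulus is `M` times a Fejér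
kernel. -/
def dirichletSum (M : ℕ) (u : ℝ) : ℂ := ∑ a ∈ Finset.Ico (0 : ℤ) M, expChar a u

lemma continuous_dirichletSum (M : ℕ) : Continuous (dirichletSum M) := by
  unfold dirichletSum
  have := continuous_expChar
  fun_prop

lemma dirichletSum_mul_conj (M : ℕ) (u : ℝ) :
    dirichletSum M u * starRingEnd ℂ (dirichletSum M u) =
      ∑ a ∈ Finset.Ico (0 : ℤ) M, ∑ b ∈ Finset.Ico (0 : ℤ) M, expChar (a - b) u := by
  simp only [dirichletSum, map_sum, Finset.sum_mul_sum, conj_expChar, sub_eq_add_neg,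
    expChar_add_left]

lemma integral_expChar_mul_dirichletSum (M : ℕ) (d : ℤ) :
    ∫ u in (0 : ℝ)..1, expChar (-d) u * (dirichletSum M u * starRingEnd ℂ (dirichletSum M u)) =
      ((max 0 (M - |d|) : ℤ) : ℂ) := by
  rw [← sum_sum_ite_sub]
  simp only [dirichletSum_mul_conj, Finset.mul_sum, ← expChar_add_left]
  rw [intervalIntegral.integral_finsetSum fun a _ ↦ by
    have := continuous_expChar
    exact Continuous.intervalIntegrable (by fun_prop) _ _]
  refine Finset.sum_congr rfl fun a _ ↦ ?_
  rw [intervalIntegral.integral_finsetSum fun b _ ↦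
    (continuous_expChar _).intervalIntegrable _ _]
  simp only [integral_expChar]

lemma integral_norm_sq_dirichletSum (M : ℕ) :
    ∫ u in (0 : ℝ)..1, ‖dirichletSum M u‖ ^ 2 = M := by
  have h : ∀ u, expChar (-0) u * (dirichletSum M u * starRingEnd ℂ (dirichletSum M u)) =
      ((‖dirichletSum M u‖ ^ 2 : ℝ) : ℂ) := fun u ↦ by
    simp [Complex.mul_conj, Complex.normSq_eq_norm_sq, expChar]
  have hint := integral_expChar_mul_dirichletSum M 0
  simp only [h, intervalIntegral.integral_ofReal, abs_zero, sub_zero, Nat.cast_nonneg,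
    max_eq_right] at hint
  exact_mod_cast hint

lemma trigSum_fejerHat_mul_eq_integral (S : Finset ℤ) (c : ℤ → ℂ) (k₀ : ℤ) (M : ℕ) (s : ℝ) :
    trigSum S (fejerHat k₀ M * c) s = ∫ u in (0 : ℝ)..1, trigSum S c (s - u) *
      (expChar k₀ u * (dirichletSum M u * starRingEnd ℂ (dirichletSum M u)) / M) := by
  have hprod : ∀ u, trigSum S c (s - u) *
      (expChar k₀ u * (dirichletSum M u * starRingEnd ℂ (dirichletSum M u)) / M) =
      ∑ k ∈ S, (c k * expChar k s / M) *
        (expChar (-(k - k₀)) u * (dirichletSum M u * starRingEnd ℂ (dirichletSum M u))) := by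
    intro u
    rw [trigSum, Finset.sum_mul]
    refine Finset.sum_congr rfl fun k _ ↦ ?_
    rw [expChar_sub_right, show -(k - k₀) = -k + k₀ by ring, expChar_add_left (-k) k₀ u]
    ring
  simp only [hprod]
  rw [intervalIntegral.integral_finsetSum fun k _ ↦ by
    have := continuous_expChar
    have := continuous_dirichletSum M
    exact Continuous.intervalIntegrable (by fun_prop) _ _]
  simp only [intervalIntegral.integral_const_mul, integral_expChar_mul_dirichletSum]
  refine Finset.sum_congr rfl fun k _ ↦ ?_
  rw [Pi.mul_apply, fejerHat]
  ring

lemma isMultiplier_fejerHat (k₀ : ℤ) {M : ℕ} (hM : 0 < M) : IsMultiplier (fejerHat k₀ M) 1 := by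
  intro S c b hb s
  have hD := continuous_dirichletSum M
  rw [trigSum_fejerHat_mul_eq_integral]
  calc _ ≤ ∫ u in (0 : ℝ)..1, b / M * ‖dirichletSum M u‖ ^ 2 := by
        refine intervalIntegral.norm_integral_le_of_norm_le zero_le_one ?_ ?_
        · refine .of_forall fun u _ ↦ ?_
          rw [norm_mul, norm_div, norm_mul, norm_mul, norm_expChar, RCLike.norm_conj,
            Complex.norm_natCast]
          calc _ ≤ b * (1 * (‖dirichletSum M u‖ * ‖dirichletSum M u‖) / M) :=
                mul_le_mul_of_nonneg_right (hb _) (by positivity)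
            _ = _ := by ring
        · exact Continuous.intervalIntegrable (by fun_prop) _ _
    _ = 1 * b := by
        rw [intervalIntegral.integral_const_mul, integral_norm_sq_dirichletSum]
        field_simp

lemma hasDerivAt_trigSum (S : Finset ℤ) (c : ℤ → ℂ) (x : ℝ) :
    HasDerivAt (trigSum S c) (∑ k ∈ S, c k * (2 * Real.pi * Complex.I * k * expChar k x)) x :=
  HasDerivAt.fun_sum fun k _ ↦ (hasDerivAt_expChar k x).const_mul _

-- On `|k| ≤ N` the multiplier `k / N` is a difference of two Fejér multipliers.
lemma fejerHat_sub_fejerHat_neg {N : ℕ} (hN : 0 < N) {k : ℤ} (hk : |k| ≤ N) :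
    fejerHat N (2 * N) k - fejerHat (-N) (2 * N) k = k / N := by
  have h := abs_le.1 hk
  have hN' : (N : ℂ) ≠ 0 := by exact_mod_cast hN.ne'
  rw [fejerHat_eq (abs_le.2 (by push_cast; lia)), fejerHat_eq (abs_le.2 (by push_cast; lia)),
    abs_of_nonpos (by lia), abs_of_nonneg (by lia)]
  push_cast
  field_simp
  ring

/-- **Bernstein's inequality** in Lipschitz form. -/
lemma norm_trigSum_add_sub_le {N : ℕ} (hN : 0 < N) {S : Finset ℤ} (hS : ∀ k ∈ S, |k| ≤ N)
    {c : ℤ → ℂ} {b : ℝ} (hb : ∀ s, ‖trigSum S c s‖ ≤ b) (s u : ℝ) :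
    ‖trigSum S c (s + u) - trigSum S c s‖ ≤ 4 * Real.pi * N * b * |u| := by
  have hmul := (isMultiplier_fejerHat N (M := 2 * N) (by lia)).sub
    (isMultiplier_fejerHat (-N) (M := 2 * N) (by lia))
  set d : ℤ → ℂ := (fejerHat N (2 * N) - fejerHat (-N) (2 * N)) * c
  have hderiv : ∀ x, HasDerivAt (trigSum S c)
      (2 * Real.pi * Complex.I * N * trigSum S d x) x := by
    refine fun x ↦ (hasDerivAt_trigSum S c x).congr_deriv ?_
    rw [trigSum, Finset.mul_sum]
    refine Finset.sum_congr rfl fun k hk ↦ ?_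
    have hN' : (N : ℂ) ≠ 0 := by exact_mod_cast hN.ne'
    simp only [d, Pi.mul_apply, Pi.sub_apply, fejerHat_sub_fejerHat_neg hN (hS k hk)]
    field_simp
  have hbound : ∀ x, ‖2 * Real.pi * Complex.I * N * trigSum S d x‖ ≤ 4 * Real.pi * N * b := by
    intro x
    have := hmul S c b hb x
    simp only [norm_mul, Complex.norm_I, Complex.norm_natCast, Complex.norm_real,
      Real.norm_of_nonneg Real.pi_pos.le, Complex.norm_ofNat]
    calc _ ≤ 2 * Real.pi * 1 * N * ((1 + 1) * b) := by gcongr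
      _ = _ := by ring
  simpa using Convex.norm_image_sub_le_of_norm_hasDerivWithin_le
    (fun x _ ↦ (hderiv x).hasDerivWithinAt) (fun x _ ↦ hbound x) convex_univ (mem_univ s)
    (mem_univ (s + u))

/-- Trigonometric polynomials bounded by `1` with spectrum within `M` of `K`, against which
the part of a measure at frequencies within `M` of `K` is tested. -/
def testFun (K : ℤ) (M : ℕ) : Set (ℝ → ℂ) :=
  {h | ∃ (S : Finset ℤ) (c : ℤ → ℂ), (∀ k ∈ S, |k - K| ≤ M) ∧ h = trigSum S c ∧ ∀ s, ‖h s‖ ≤ 1}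

lemma continuous_of_mem_testFun {K : ℤ} {M : ℕ} {h : ℝ → ℂ} (hh : h ∈ testFun K M) :
    Continuous h := by
  obtain ⟨S, c, -, rfl, -⟩ := hh
  exact continuous_trigSum S c

lemma norm_le_one_of_mem_testFun {K : ℤ} {M : ℕ} {h : ℝ → ℂ} (hh : h ∈ testFun K M) (s : ℝ) :
    ‖h s‖ ≤ 1 := by
  obtain ⟨S, c, -, -, hb⟩ := hh
  exact hb s

lemma integrable_trigSum (p : Measure ℝ) [IsFiniteMeasure p] (S : Finset ℤ) (c : ℤ → ℂ) :
    Integrable (trigSum S c) p := by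
  refine Integrable.of_bound (continuous_trigSum S c).aestronglyMeasurable (∑ k ∈ S, ‖c k‖)
    (.of_forall fun s ↦ ?_)
  refine norm_sum_le_of_le _ fun k _ ↦ ?_
  rw [norm_mul, norm_expChar, mul_one]

lemma integral_trigSum_add (q : Measure ℝ) [IsFiniteMeasure q] (S : Finset ℤ) (c : ℤ → ℂ)
    (s : ℝ) :
    ∫ u, trigSum S c (s + u) ∂q = trigSum S (fun k ↦ c k * ∫ u, expChar k u ∂q) s := by
  have hsum : ∀ u, trigSum S c (s + u) = ∑ k ∈ S, c k * expChar k s * expChar k u := fun u ↦ by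
    simp only [trigSum, expChar_add_right, mul_assoc]
  simp only [hsum]
  rw [integral_finsetSum]
  · rw [trigSum]
    refine Finset.sum_congr rfl fun k _ ↦ ?_
    rw [integral_const_mul]
    ring
  · intro k _
    refine Integrable.const_mul ?_ _
    exact Integrable.of_bound (continuous_expChar k).aestronglyMeasurable 1
      (.of_forall fun u ↦ (norm_expChar k u).le)

lemma norm_trigSum_sub_integral_le (q : Measure ℝ) [IsProbabilityMeasure q] {ρ : ℝ}
    (hq : ∀ᵐ u ∂q, |u| ≤ ρ) {N : ℕ} (hN : 0 < N) {S : Finset ℤ} (hS : ∀ k ∈ S, |k| ≤ N)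
    {c : ℤ → ℂ} (hb : ∀ s, ‖trigSum S c s‖ ≤ 1) (s : ℝ) :
    ‖trigSum S (c - fun k ↦ c k * ∫ u, expChar k u ∂q) s‖ ≤ 4 * Real.pi * N * ρ := by
  have hint : Integrable (fun u ↦ trigSum S c (s + u)) q :=
    Integrable.of_bound ((continuous_trigSum S c).comp
      (continuous_const.add continuous_id)).aestronglyMeasurable 1 (.of_forall fun u ↦ hb _)
  have hdiff : trigSum S (c - fun k ↦ c k * ∫ u, expChar k u ∂q) s =
      -∫ u, (trigSum S c (s + u) - trigSum S c s) ∂q := by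
    rw [integral_sub hint (integrable_const _), integral_trigSum_add, integral_const, trigSum_sub]
    simp
  have hbern : ∀ᵐ u ∂q, ‖trigSum S c (s + u) - trigSum S c s‖ ≤ 4 * Real.pi * N * ρ := by
    filter_upwards [hq] with u hu
    calc _ ≤ 4 * Real.pi * N * 1 * |u| := norm_trigSum_add_sub_le hN hS hb s u
      _ ≤ 4 * Real.pi * N * ρ := by rw [mul_one]; gcongr
  rw [hdiff, norm_neg]
  simpa using norm_integral_le_of_norm_le_const hbern

-- By Bernstein's inequality `h - h * q` is half of another test function, to which the same
-- comparison applies; iterating sums a geometric series.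
lemma norm_integral_le_of_conv (p q : Measure ℝ) [IsFiniteMeasure p] [IsProbabilityMeasure q]
    {ρ : ℝ} (hq : ∀ᵐ u ∂q, |u| ≤ ρ) {K : ℤ} {M N : ℕ} (hN : 0 < N) (hKM : |K| + M ≤ N)
    (hρ : 4 * Real.pi * N * ρ ≤ 1 / 2) {β : ℝ}
    (hβ : ∀ h ∈ testFun K M, ‖∫ s, h s ∂(p ∗ q)‖ ≤ β) {h : ℝ → ℂ} (hh : h ∈ testFun K M) :
    ‖∫ s, h s ∂p‖ ≤ 2 * β := by
  have hiter : ∀ (n : ℕ), ∀ h ∈ testFun K M,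
      ‖∫ s, h s ∂p‖ ≤ 2 * β + (1 / 2) ^ n * p.real univ := by
    intro n
    induction n with
    | zero =>
      intro h hh
      have hβ0 : 0 ≤ β := (norm_nonneg _).trans (hβ h hh)
      have := norm_integral_le_of_norm_le_const (μ := p)
        (.of_forall (norm_le_one_of_mem_testFun hh))
      rw [pow_zero]
      linarith
    | succ n ih =>
      rintro h ⟨S, c, hS, rfl, hb⟩
      set d : ℤ → ℂ := fun k ↦ c k * ∫ u, expChar k u ∂q
      have hSN : ∀ k ∈ S, |k| ≤ N := fun k hk ↦ by
        linarith [abs_sub_abs_le_abs_sub k K, hS k hk]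
      have hd : ‖∫ s, trigSum S d s ∂p‖ ≤ β := by
        have := hβ _ ⟨S, c, hS, rfl, hb⟩
        rw [integral_conv (integrable_trigSum _ S c)] at this
        simpa only [integral_trigSum_add] using this
      have hmem : trigSum S ((2 : ℂ) • (c - d)) ∈ testFun K M := by
        refine ⟨S, _, hS, rfl, fun s ↦ ?_⟩
        rw [trigSum_smul, norm_mul, Complex.norm_ofNat]
        linarith [norm_trigSum_sub_integral_le q hq hN hSN hb s]
      have hsplit : ∫ s, trigSum S c s ∂p =
          ∫ s, trigSum S d s ∂p + 1 / 2 * ∫ s, trigSum S ((2 : ℂ) • (c - d)) s ∂p := by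
        simp only [trigSum_smul, trigSum_sub]
        rw [integral_const_mul, integral_sub (integrable_trigSum p S c) (integrable_trigSum p S d)]
        ring
      calc _ ≤ ‖∫ s, trigSum S d s ∂p‖ + 1 / 2 * ‖∫ s, trigSum S ((2 : ℂ) • (c - d)) s ∂p‖ := by
            rw [hsplit]
            exact (norm_add_le _ _).trans_eq (by simp)
        _ ≤ β + 1 / 2 * (2 * β + (1 / 2) ^ n * p.real univ) := by gcongr; exact ih _ hmem
        _ = _ := by ring
  have hlim : Filter.Tendsto (fun n : ℕ ↦ 2 * β + (1 / 2 : ℝ) ^ n * p.real univ) .atTop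
      (nhds (2 * β)) := by
    simpa using ((tendsto_pow_atTop_nhds_zero_of_lt_one (by norm_num : (0 : ℝ) ≤ 1 / 2)
      (by norm_num)).mul_const (p.real univ)).const_add (2 * β)
  exact ge_of_tendsto' hlim fun n ↦ hiter n h hh

/-! ### Littlewood–Paley decomposition -/

/-- The de la Vallée-Poussin multiplier, equal to `1` for `|k| ≤ N` and to `0` for `|k| ≥ 2 * N`. -/
def valleePoussin (N : ℕ) : ℤ → ℂ := (2 : ℂ) • fejerHat 0 (2 * N) - fejerHat 0 N

lemma isMultiplier_valleePoussin {N : ℕ} (hN : 0 < N) : IsMultiplier (valleePoussin N) 3 := by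
  have := ((isMultiplier_fejerHat 0 (M := 2 * N) (by lia)).smul 2).sub (isMultiplier_fejerHat 0 hN)
  have h3 : ‖(2 : ℂ)‖ * 1 + 1 = 3 := by norm_num
  rwa [h3] at this

lemma valleePoussin_of_le {N : ℕ} (hN : 0 < N) {k : ℤ} (hk : |k| ≤ N) :
    valleePoussin N k = 1 := by
  have hN' : (N : ℂ) ≠ 0 := by exact_mod_cast hN.ne'
  rw [valleePoussin, Pi.sub_apply, Pi.smul_apply, fejerHat_eq, fejerHat_eq]
  · push_cast
    simp only [sub_zero, smul_eq_mul]
    field_simp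
    ring
  · simpa using hk
  · simp only [sub_zero]; push_cast; lia

lemma valleePoussin_of_ge {N : ℕ} {k : ℤ} (hk : 2 * N ≤ |k|) : valleePoussin N k = 0 := by
  rw [valleePoussin, Pi.sub_apply, Pi.smul_apply, fejerHat_eq_zero, fejerHat_eq_zero]
  · simp
  · simp only [sub_zero]; lia
  · simp only [sub_zero]; push_cast; lia

lemma norm_valleePoussin_le (N : ℕ) (k : ℤ) : ‖valleePoussin N k‖ ≤ 3 := by
  rw [valleePoussin, Pi.sub_apply, Pi.smul_apply]
  refine (norm_sub_le _ _).trans ?_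
  rw [norm_smul, Complex.norm_ofNat]
  linarith [norm_fejerHat_le 0 (2 * N) k, norm_fejerHat_le 0 N k]

lemma norm_trigSum_valleePoussin_le (N : ℕ) (S : Finset ℤ) (c : ℤ → ℂ) (s : ℝ) :
    ‖trigSum S (valleePoussin N * c) s‖ ≤
      (3 * (4 * N + 1)) * ∫ u in (0 : ℝ)..1, ‖trigSum S c u‖ := by
  set T : Finset ℤ := Finset.Icc (-(2 * N)) (2 * N)
  have hvanish : ∀ k ∈ S, k ∉ T → (valleePoussin N * c) k = 0 := by
    intro k _ hk
    have hk' : (2 * N : ℤ) ≤ |k| := by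
      by_contra! h
      exact hk (Finset.mem_Icc.2 (abs_le.1 h.le))
    rw [Pi.mul_apply, valleePoussin_of_ge hk', zero_mul]
  have hcard : (({k ∈ S | k ∈ T} : Finset ℤ).card : ℝ) ≤ 4 * N + 1 := by
    have : ({k ∈ S | k ∈ T} : Finset ℤ).card ≤ 4 * N + 1 :=
      (Finset.card_le_card fun k hk ↦ (Finset.mem_filter.1 hk).2).trans
        (by rw [Int.card_Icc]; lia)
    exact_mod_cast this
  rw [← trigSum_filter S _ (· ∈ T) hvanish]
  calc _ ≤ ∑ k ∈ S with k ∈ T, 3 * ∫ u in (0 : ℝ)..1, ‖trigSum S c u‖ := by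
        refine norm_sum_le_of_le _ fun k hk ↦ ?_
        rw [norm_mul, norm_expChar, mul_one, Pi.mul_apply, norm_mul]
        exact mul_le_mul (norm_valleePoussin_le N k) (norm_coeff_le S c (Finset.mem_filter.1 hk).1)
          (norm_nonneg _) (by norm_num)
    _ ≤ (4 * N + 1 : ℝ) * (3 * ∫ u in (0 : ℝ)..1, ‖trigSum S c u‖) := by
        rw [Finset.sum_const, nsmul_eq_mul]
        exact mul_le_mul_of_nonneg_right hcard (mul_nonneg (by norm_num)
          (intervalIntegral.integral_nonneg zero_le_one fun u _ ↦ norm_nonneg _))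
    _ = _ := by ring

/-- The indices `m` of the intervals centred at `m * M` of radius `M` that cover the dyadic annulus
`2 ^ l * M < |k| < 2 ^ (l + 2) * M`. -/
def annulus (l : ℕ) : Finset ℤ := {m ∈ Finset.Icc (-2 ^ (l + 2)) (2 ^ (l + 2)) | 2 ^ l ≤ |m|}

lemma fejerHat_add_fejerHat_succ {M : ℕ} {q k : ℤ} (hM : 0 < M) (h₁ : q * M ≤ k)
    (h₂ : k < (q + 1) * M) : fejerHat (q * M) M k + fejerHat ((q + 1) * M) M k = 1 := by
  have hMc : (M : ℂ) ≠ 0 := by exact_mod_cast hM.ne'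
  rw [fejerHat_eq (abs_le.2 ⟨by linarith, by linarith⟩),
    fejerHat_eq (abs_le.2 ⟨by linarith, by linarith⟩), abs_of_nonneg (by linarith),
    abs_of_nonpos (by linarith)]
  push_cast
  field_simp
  ring

lemma fejerHat_eq_zero_of_ne {M : ℕ} {q m k : ℤ} (h₁ : q * M ≤ k) (h₂ : k < (q + 1) * M)
    (hm : m ≠ q) (hm' : m ≠ q + 1) : fejerHat (m * M) M k = 0 := by
  refine fejerHat_eq_zero (le_abs.2 ?_)
  rcases lt_or_gt_of_ne hm with h | h
  · exact .inl (by nlinarith [(by lia : m + 1 ≤ q)])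
  · exact .inr (by nlinarith [(by lia : q + 2 ≤ m)])

lemma mem_annulus_of_le_of_lt {l M : ℕ} {q k : ℤ} (h₁ : q * M ≤ k) (h₂ : k < (q + 1) * M)
    (hk : 2 ^ l * M < |k|) (hk' : |k| < 2 ^ (l + 2) * M) : q ∈ annulus l ∧ q + 1 ∈ annulus l := by
  have hM : (0 : ℤ) ≤ M := M.cast_nonneg
  have hl : (1 : ℤ) ≤ 2 ^ l := one_le_pow₀ (by norm_num)
  have hl2 : (2 : ℤ) ^ (l + 2) = 4 * 2 ^ l := by ring
  simp only [annulus, Finset.mem_filter, Finset.mem_Icc]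
  rcases lt_or_ge k 0 with h | h
  · rw [abs_of_neg h] at hk hk'
    have hq : q < -2 ^ l := by by_contra! hc; nlinarith
    have hq' : -2 ^ (l + 2) ≤ q := by by_contra! hc; nlinarith
    rw [abs_of_neg (by lia), abs_of_neg (by lia)]
    lia
  · rw [abs_of_nonneg h] at hk hk'
    have hq : 2 ^ l ≤ q := by by_contra! hc; nlinarith
    have hq' : q < 2 ^ (l + 2) := by by_contra! hc; nlinarith
    rw [abs_of_pos (by lia), abs_of_pos (by lia)]
    lia

lemma sum_annulus_fejerHat {l M : ℕ} (hM : 0 < M) {k : ℤ} (hk : 2 ^ l * M < |k|)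
    (hk' : |k| < 2 ^ (l + 2) * M) : ∑ m ∈ annulus l, fejerHat (m * M) M k = 1 := by
  have hM' : (0 : ℤ) < M := by exact_mod_cast hM
  have h₁ : k / M * M ≤ k := Int.ediv_mul_le k hM'.ne'
  have h₂ : k < (k / M + 1) * M := Int.lt_ediv_add_one_mul_self k hM'
  obtain ⟨hq, hq'⟩ := mem_annulus_of_le_of_lt h₁ h₂ hk hk'
  rw [← Finset.sum_subset (s₁ := {k / (M : ℤ), k / (M : ℤ) + 1}), Finset.sum_pair (by lia),
    fejerHat_add_fejerHat_succ hM h₁ h₂]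
  · exact Finset.insert_subset hq (Finset.singleton_subset_iff.2 hq')
  · intro m _ hm
    simp only [Finset.mem_insert, Finset.mem_singleton, not_or] at hm
    exact fejerHat_eq_zero_of_ne h₁ h₂ hm.1 hm.2

lemma norm_integral_trigSum_le_mul {p : Measure ℝ} {K : ℤ} {M : ℕ} {β : ℝ}
    (hβ : ∀ h ∈ testFun K M, ‖∫ s, h s ∂p‖ ≤ β) {S : Finset ℤ} {c : ℤ → ℂ}
    (hS : ∀ k ∈ S, c k ≠ 0 → |k - K| ≤ M) {B : ℝ} (hB : 0 < B)
    (hb : ∀ s, ‖trigSum S c s‖ ≤ B) : ‖∫ s, trigSum S c s ∂p‖ ≤ B * β := by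
  classical
  have hmem : trigSum S (((B : ℂ)⁻¹) • c) ∈ testFun K M := by
    refine ⟨S.filter (c · ≠ 0), ((B : ℂ)⁻¹) • c, fun k hk ↦ ?_, ?_, fun s ↦ ?_⟩
    · exact hS k (Finset.mem_filter.1 hk).1 (Finset.mem_filter.1 hk).2
    · rw [trigSum_filter]
      intro k _ hk
      simp [not_not.1 hk]
    · rw [trigSum_smul, norm_mul, norm_inv, Complex.norm_real, Real.norm_of_nonneg hB.le]
      exact inv_mul_le_one_of_le₀ (hb s) hB.le
  have := hβ _ hmem
  simp only [trigSum_smul] at this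
  rw [integral_const_mul, norm_mul, norm_inv, Complex.norm_real, Real.norm_of_nonneg hB.le] at this
  rwa [inv_mul_le_iff₀ hB] at this

/-- The Littlewood–Paley multiplier of the frequencies of size about `2 ^ J`. -/
def littlewoodPaley (J : ℕ) : ℤ → ℂ := valleePoussin (2 ^ (J + 1)) - valleePoussin (2 ^ J)

lemma isMultiplier_littlewoodPaley (J : ℕ) : IsMultiplier (littlewoodPaley J) 6 := by
  have h := (isMultiplier_valleePoussin (N := 2 ^ (J + 1)) (by positivity)).sub
    (isMultiplier_valleePoussin (N := 2 ^ J) (by positivity))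
  rwa [show (3 + 3 : ℝ) = 6 by norm_num] at h

lemma littlewoodPaley_of_le {J : ℕ} {k : ℤ} (hk : |k| ≤ 2 ^ J) : littlewoodPaley J k = 0 := by
  rw [littlewoodPaley, Pi.sub_apply, valleePoussin_of_le (by positivity),
    valleePoussin_of_le (by positivity), sub_self]
  · exact_mod_cast hk
  · push_cast
    exact hk.trans (pow_le_pow_right₀ (by norm_num) (by lia))

lemma littlewoodPaley_of_ge {J : ℕ} {k : ℤ} (hk : 2 ^ (J + 2) ≤ |k|) : littlewoodPaley J k = 0 := by
  rw [pow_add] at hk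
  have : (0 : ℤ) < 2 ^ J := by positivity
  rw [littlewoodPaley, Pi.sub_apply, valleePoussin_of_ge, valleePoussin_of_ge, sub_self] <;>
    push_cast <;> (try rw [pow_succ]) <;> linarith

lemma sum_annulus_fejerHat_mul_littlewoodPaley {l J : ℕ} (hl : l ≤ J) (k : ℤ) :
    ∑ m ∈ annulus l, fejerHat (m * (2 ^ (J - l) : ℕ)) (2 ^ (J - l)) k * littlewoodPaley J k =
      littlewoodPaley J k := by
  have hM : (2 : ℤ) ^ l * (2 ^ (J - l) : ℕ) = 2 ^ J := by
    push_cast; rw [← pow_add, Nat.add_sub_cancel' hl]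
  rcases le_or_gt |k| (2 ^ J) with hk | hk
  · simp [littlewoodPaley_of_le hk]
  rcases le_or_gt (2 ^ (J + 2)) |k| with hk' | hk'
  · simp [littlewoodPaley_of_ge hk']
  rw [← Finset.sum_mul, sum_annulus_fejerHat (by positivity) (by rwa [hM]), one_mul]
  rwa [pow_add, mul_right_comm, hM, ← pow_add]

lemma trigSum_eq_add_sum_littlewoodPaley {S : Finset ℤ} {J n : ℕ}
    (hS : ∀ k ∈ S, |k| ≤ (2 ^ (n + J) : ℕ)) (c : ℤ → ℂ) (s : ℝ) :
    trigSum S c s = trigSum S (valleePoussin (2 ^ J) * c) s +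
      ∑ i ∈ Finset.range n, trigSum S (littlewoodPaley (i + J) * c) s := by
  rw [← trigSum_sum, ← trigSum_add]
  refine congrFun (trigSum_congr fun k hk ↦ ?_) s
  have htel := Finset.sum_range_sub (fun i ↦ valleePoussin (2 ^ (i + J)) k) n
  simp only [Nat.add_right_comm _ 1 J, zero_add] at htel
  simp only [Pi.add_apply, Pi.mul_apply, littlewoodPaley, Pi.sub_apply]
  rw [← Finset.sum_mul, ← add_mul, htel, add_sub_cancel,
    valleePoussin_of_le (by positivity) (hS k hk), one_mul]

lemma norm_integral_trigSum_littlewoodPaley_le (p : Measure ℝ) [IsFiniteMeasure p] {l J : ℕ}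
    (hl : l ≤ J) {β : ℝ}
    (hp : ∀ m ∈ annulus l, ∀ h ∈ testFun (m * (2 ^ (J - l) : ℕ)) (2 ^ (J - l)), ‖∫ s, h s ∂p‖ ≤ β)
    (S : Finset ℤ) (c : ℤ → ℂ) {B : ℝ} (hB : 0 < B) (hb : ∀ s, ‖trigSum S c s‖ ≤ B) :
    ‖∫ s, trigSum S (littlewoodPaley J * c) s ∂p‖ ≤ 6 * (annulus l).card * B * β := by
  set M := 2 ^ (J - l)
  have hdecomp : trigSum S (littlewoodPaley J * c) =
      trigSum S (fun k ↦ ∑ m ∈ annulus l, (fejerHat (m * M) M * littlewoodPaley J * c) k) := by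
    refine trigSum_congr fun k _ ↦ ?_
    simp only [Pi.mul_apply]
    rw [← Finset.sum_mul, sum_annulus_fejerHat_mul_littlewoodPaley hl]
  simp only [hdecomp, trigSum_sum]
  rw [integral_finsetSum _ fun m _ ↦ integrable_trigSum p S _]
  calc _ ≤ ∑ _m ∈ annulus l, 6 * B * β := by
        refine norm_sum_le_of_le _ fun m hm ↦ norm_integral_trigSum_le_mul (hp m hm)
          (fun k _ hk ↦ ?_) (by positivity) fun s ↦ ?_
        · by_contra! hfar
          simp [fejerHat_eq_zero hfar.le] at hk
        · linarith [((isMultiplier_fejerHat (m * M) (M := M) (by positivity)).mul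
            (isMultiplier_littlewoodPaley J)) S c B hb s]
    _ = _ := by
        rw [Finset.sum_const, nsmul_eq_mul]
        ring

lemma exists_forall_abs_le_two_pow (S : Finset ℤ) (J : ℕ) :
    ∃ n : ℕ, ∀ k ∈ S, |k| ≤ (2 ^ (n + J) : ℕ) := by
  refine ⟨∑ k ∈ S, k.natAbs, fun k hk ↦ ?_⟩
  have hle : k.natAbs ≤ ∑ k ∈ S, k.natAbs :=
    Finset.single_le_sum (f := Int.natAbs) (fun _ _ ↦ Nat.zero_le _) hk
  have hpow := (Nat.lt_two_pow_self (n := ∑ k ∈ S, k.natAbs + J)).le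
  rw [Int.abs_eq_natAbs]
  exact_mod_cast (by lia : k.natAbs ≤ 2 ^ (∑ k ∈ S, k.natAbs + J))

lemma norm_integral_trigSum_le_tsum (p : Measure ℝ) [IsFiniteMeasure p] {l J₁ : ℕ} (hl : l ≤ J₁)
    {a : ℕ → ℝ} (ha0 : ∀ J, 0 ≤ a J) (ha : Summable a)
    (hp : ∀ J, J₁ ≤ J → ∀ m ∈ annulus l, ∀ h ∈ testFun (m * (2 ^ (J - l) : ℕ)) (2 ^ (J - l)),
      ‖∫ s, h s ∂p‖ ≤ a J)
    (S : Finset ℤ) (c : ℤ → ℂ) {B : ℝ} (hB : 0 < B) (hb : ∀ s, ‖trigSum S c s‖ ≤ B) :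
    ‖∫ s, trigSum S c s ∂p‖ ≤
      p.real univ * (3 * (4 * (2 ^ J₁ : ℕ) + 1)) * (∫ u in (0 : ℝ)..1, ‖trigSum S c u‖) +
        6 * (annulus l).card * B * ∑' i, a (i + J₁) := by
  obtain ⟨n, hn⟩ := exists_forall_abs_le_two_pow S J₁
  rw [integral_congr_ae (.of_forall (trigSum_eq_add_sum_littlewoodPaley hn c)),
    integral_add (integrable_trigSum p S _)
      (integrable_finsetSum _ fun i _ ↦ integrable_trigSum p S _),
    integral_finsetSum _ fun i _ ↦ integrable_trigSum p S _]
  refine (norm_add_le _ _).trans (add_le_add ?_ ?_)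
  · have := norm_integral_le_of_norm_le_const (μ := p)
      (.of_forall (norm_trigSum_valleePoussin_le (2 ^ J₁) S c))
    linarith
  · calc _ ≤ ∑ i ∈ Finset.range n, 6 * (annulus l).card * B * a (i + J₁) :=
          norm_sum_le_of_le _ fun i _ ↦ norm_integral_trigSum_littlewoodPaley_le p
            (hl.trans (by lia)) (hp (i + J₁) (by lia)) S c hB hb
      _ ≤ _ := by
          rw [← Finset.mul_sum]
          gcongr
          exact ((summable_nat_add_iff J₁).2 ha).sum_le_tsum _ fun i _ ↦ ha0 _

lemma volume_image_coe_unitAddCircle_eq_zero {Z : Set ℝ} (hZ : IsCompact Z)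
    (hZ0 : volume Z = 0) : volume ((fun s : ℝ ↦ (s : UnitAddCircle)) '' Z) = 0 := by
  have hsub : (QuotientAddGroup.mk ⁻¹' ((fun s : ℝ ↦ (s : UnitAddCircle)) '' Z) : Set ℝ) ⊆
      ⋃ n : ℤ, (fun s ↦ (n : ℝ) + s) '' Z := by
    rintro s ⟨z, hz, hzs⟩
    obtain ⟨n, hn⟩ := QuotientAddGroup.eq.1 hzs
    simp only [zsmul_eq_mul, mul_one] at hn
    exact mem_iUnion.2 ⟨n, z, hz, by simp only [hn]; ring⟩
  refine (AddCircle.add_projection_respects_measure (1 : ℝ) 0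
    (hZ.image (AddCircle.continuous_mk' 1)).measurableSet).trans ?_
  refine measure_mono_null (inter_subset_left.trans hsub) (measure_iUnion_null fun n ↦ ?_)
  rwa [image_add_left, measure_preimage_add]

lemma exists_trigSum_norm_sub_le (F : C(UnitAddCircle, ℂ)) {ε : ℝ} (hε : 0 < ε) :
    ∃ (S : Finset ℤ) (c : ℤ → ℂ), ∀ s : ℝ, ‖F s - trigSum S c s‖ ≤ ε := by
  have hF : F ∈ closure (Submodule.span ℂ (range (fourier (T := 1))) :
      Set C(UnitAddCircle, ℂ)) := by
    rw [← Submodule.topologicalClosure_coe, span_fourier_closure_eq_top]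
    trivial
  obtain ⟨G, hG, hFG⟩ := Metric.mem_closure_iff.1 hF ε hε
  obtain ⟨c, hc⟩ := Finsupp.mem_span_range_iff_exists_finsupp.1 hG
  refine ⟨c.support, c, fun s ↦ ?_⟩
  have hGs : trigSum c.support c s = G s := by
    rw [← hc, Finsupp.sum, ContinuousMap.sum_apply, trigSum]
    refine Finset.sum_congr rfl fun k _ ↦ ?_
    rw [ContinuousMap.smul_apply, fourier_coe_apply, expChar_eq_exp, smul_eq_mul]
    simp
  rw [dist_eq_norm] at hFG
  rw [hGs]
  exact ((F - G).norm_coe_le_norm s).trans hFG.le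

lemma integral_unitAddCircle_add_le {W : Set UnitAddCircle} (hW : MeasurableSet W) {ε : ℝ}
    (hε : 0 ≤ ε) (hWε : volume W ≤ ENNReal.ofReal ε) {f : C(UnitAddCircle, ℝ)}
    (hf1 : ∀ x, f x ≤ 1) (hf0 : ∀ x ∉ W, f x = 0) : ∫ s in (0 : ℝ)..1, (f s + ε) ≤ 2 * ε := by
  have hint : ∀ g : C(UnitAddCircle, ℝ), Integrable g := fun g ↦
    g.continuous.integrable_of_hasCompactSupport (HasCompactSupport.of_compactSpace _)
  have hcircle := UnitAddCircle.intervalIntegral_preimage 0 (fun x ↦ f x + ε)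
  rw [zero_add] at hcircle
  have hle : ∫ x, f x ≤ ∫ x, W.indicator (1 : UnitAddCircle → ℝ) x := by
    refine integral_mono (hint f)
      ((integrable_indicator_iff hW).2 (integrableOn_const (by finiteness))) fun x ↦ ?_
    by_cases hx : x ∈ W
    · simpa only [indicator_of_mem hx, Pi.one_apply] using hf1 x
    · simp only [indicator_of_notMem hx, hf0 x hx, le_refl]
  rw [integral_indicator_one hW] at hle
  rw [hcircle, integral_add (hint f) (integrable_const _), integral_const]
  have hW' : volume.real W ≤ ε := ENNReal.toReal_le_of_le_ofReal hε hWε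
  simp only [Measure.real, UnitAddCircle.measure_univ, ENNReal.toReal_one, one_smul] at hle hW' ⊢
  linarith

lemma exists_trigSum_of_isCompact {Z : Set ℝ} (hZ : IsCompact Z) (hZ0 : volume Z = 0) {ε : ℝ}
    (hε : 0 < ε) (hε1 : ε ≤ 1) : ∃ (S : Finset ℤ) (c : ℤ → ℂ), (∀ s, ‖trigSum S c s‖ ≤ 2) ∧
      (∀ s, Z.indicator 1 s - ε ≤ (trigSum S c s).re) ∧
      ∫ u in (0 : ℝ)..1, ‖trigSum S c u‖ ≤ 2 * ε := by
  set Y : Set UnitAddCircle := (fun s : ℝ ↦ (s : UnitAddCircle)) '' Z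
  have hY : IsCompact Y := hZ.image (AddCircle.continuous_mk' 1)
  obtain ⟨W, hYW, hWo, hW⟩ := hY.exists_isOpen_lt_of_lt (μ := volume) (ENNReal.ofReal ε)
    (by rw [volume_image_coe_unitAddCircle_eq_zero hZ hZ0]; exact ENNReal.ofReal_pos.2 hε)
  obtain ⟨f, hf1, hf0, -, hf01⟩ := exists_continuous_one_zero_of_isCompact hY hWo.isClosed_compl
    (disjoint_compl_right_iff_subset.2 hYW)
  obtain ⟨S, c, hc⟩ : ∃ (S : Finset ℤ) (c : ℤ → ℂ), ∀ s : ℝ, ‖(f s : ℂ) - trigSum S c s‖ ≤ ε :=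
    exists_trigSum_norm_sub_le ⟨fun x ↦ (f x : ℂ), by fun_prop⟩ hε
  have hnorm : ∀ s : ℝ, ‖trigSum S c s‖ ≤ f s + ε := fun s ↦ by
    have h := (norm_sub_norm_le (trigSum S c s) (f s)).trans_eq (norm_sub_rev _ _)
    rw [Complex.norm_real, Real.norm_of_nonneg (hf01 s).1] at h
    linarith [hc s]
  refine ⟨S, c, fun s ↦ by linarith [hnorm s, (hf01 s).2], fun s ↦ ?_, ?_⟩
  · have hre : f s - ε ≤ (trigSum S c s).re := by
      have := (abs_le.1 ((Complex.abs_re_le_norm _).trans (hc s))).2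
      simp only [Complex.sub_re, Complex.ofReal_re] at this
      linarith
    have hind : Z.indicator 1 s ≤ f s := by
      by_cases hs : s ∈ Z
      · rw [indicator_of_mem hs]
        exact (hf1 ⟨s, hs, rfl⟩).ge
      · rw [indicator_of_notMem hs]
        exact (hf01 s).1
    linarith
  · refine le_trans (intervalIntegral.integral_mono_on zero_le_one
      (continuous_trigSum S c).norm.continuousOn.intervalIntegrable ?_ fun s _ ↦ hnorm s)
      (integral_unitAddCircle_add_le hWo.measurableSet hε.le hW.le (fun x ↦ (hf01 x).2)
        fun x hx ↦ hf0 hx)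
    exact Continuous.intervalIntegrable
      ((f.continuous.comp (AddCircle.continuous_mk' 1)).add continuous_const) _ _

lemma measureReal_le_norm_integral_trigSum_add (p : Measure ℝ) [IsFiniteMeasure p] {Z : Set ℝ}
    (hZ : MeasurableSet Z) {ε : ℝ} {S : Finset ℤ} {c : ℤ → ℂ}
    (h : ∀ s, Z.indicator 1 s - ε ≤ (trigSum S c s).re) :
    p.real Z ≤ ‖∫ s, trigSum S c s ∂p‖ + ε * p.real univ := by
  have hZi : Integrable (Z.indicator 1 : ℝ → ℝ) p :=
    (integrable_indicator_iff hZ).2 (integrableOn_const (by finiteness))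
  rw [← sub_le_iff_le_add]
  calc p.real Z - ε * p.real univ = ∫ s, (Z.indicator 1 s - ε) ∂p := by
        rw [integral_sub hZi (integrable_const _), integral_indicator_one hZ, integral_const,
          smul_eq_mul, mul_comm]
    _ ≤ ∫ s, (trigSum S c s).re ∂p :=
        integral_mono (hZi.sub (integrable_const _)) (integrable_trigSum p S c).re h
    _ = (∫ s, trigSum S c s ∂p).re := integral_re (integrable_trigSum p S c)
    _ ≤ _ := Complex.re_le_norm _

-- Test `p` against a trigonometric polynomial which is at least about `1` on a compact null set
-- and small in `L¹`: the low frequencies see only its `L¹` norm, and the rest is a tail of `∑ a`.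
lemma absolutelyContinuous_of_summable (p : Measure ℝ) [IsFiniteMeasure p] {l J₀ : ℕ}
    {a : ℕ → ℝ} (ha0 : ∀ J, 0 ≤ a J) (ha : Summable a)
    (hp : ∀ J, J₀ ≤ J → ∀ m ∈ annulus l, ∀ h ∈ testFun (m * (2 ^ (J - l) : ℕ)) (2 ^ (J - l)),
      ‖∫ s, h s ∂p‖ ≤ a J) : p ≪ volume := by
  refine Measure.AbsolutelyContinuous.mk fun Z hZm hZ0 ↦ ?_
  rw [hZm.measure_eq_iSup_isCompact]
  simp only [ENNReal.iSup_eq_zero]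
  intro Y hYZ hY
  have hY0 : volume Y = 0 := measure_mono_null hYZ hZ0
  suffices hreal : p.real Y ≤ 0 from
    (measureReal_eq_zero_iff (by finiteness)).1 (le_antisymm hreal measureReal_nonneg)
  refine le_of_forall_pos_le_add fun δ hδ ↦ ?_
  set C := 6 * ((annulus l).card : ℝ) * 2
  have htail : Filter.Tendsto (fun n ↦ C * ∑' i, a (i + n)) .atTop (nhds 0) := by
    simpa using (tendsto_sum_nat_add a).const_mul C
  obtain ⟨J₁, hJ₁, hJ₁'⟩ := ((htail.eventually (gt_mem_nhds (half_pos hδ))).and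
    (Filter.eventually_ge_atTop (max l J₀))).exists
  set A := p.real univ * (3 * (4 * (2 ^ J₁ : ℕ) + 1))
  set D := A * 2 + p.real univ with hD
  have hD0 : 0 ≤ D := by positivity
  obtain ⟨ε, hε0, hε1, hεD⟩ : ∃ ε > 0, ε ≤ 1 ∧ ε * D ≤ δ / 2 := by
    refine ⟨min 1 (δ / 2 / (D + 1)), lt_min one_pos (by positivity), min_le_left _ _, ?_⟩
    calc _ ≤ δ / 2 / (D + 1) * (D + 1) := by
          gcongr
          · exact min_le_right _ _
          · linarith
      _ = δ / 2 := by field_simp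
  obtain ⟨S, c, hbound, hbelow, hL1⟩ := exists_trigSum_of_isCompact hY hY0 hε0 hε1
  calc p.real Y ≤ ‖∫ s, trigSum S c s ∂p‖ + ε * p.real univ :=
        measureReal_le_norm_integral_trigSum_add p hY.measurableSet hbelow
    _ ≤ A * (2 * ε) + C * ∑' i, a (i + J₁) + ε * p.real univ := by
        gcongr
        refine (norm_integral_trigSum_le_tsum p ((le_max_left _ _).trans hJ₁') ha0 ha
          (fun J hJ ↦ hp J (((le_max_right _ _).trans hJ₁').trans hJ)) S c two_pos hbound).trans ?_
        gcongr
    _ = ε * D + C * ∑' i, a (i + J₁) := by rw [hD]; ring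
    _ ≤ 0 + δ := by linarith

/-! ### Hausdorff measure of limsup sets -/

lemma hausdorffMeasure_setOf_infinite_eq_zero {ι X : Type*} [Countable ι] [EMetricSpace X]
    [MeasurableSpace X] [BorelSpace X] {σ : ℝ} (hσ : 0 < σ) (A : ι → Set X)
    (hA : ∑' i, ediam (A i) ^ σ ≠ ∞) : μH[σ] {x | {i | x ∈ A i}.Infinite} = 0 := by
  have htail := ENNReal.tendsto_tsum_compl_atTop_zero hA
  have hr := htail.ennrpow_const σ⁻¹
  rw [ENNReal.zero_rpow_of_pos (by positivity)] at hr
  refine le_antisymm ((Measure.hausdorffMeasure_le_liminf_tsum σ _ _ hr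
    (fun (F : Finset ι) (i : {i // i ∉ F}) ↦ A i) (.of_forall fun F i ↦ ?_)
    (.of_forall fun F x hx ↦ ?_)).trans_eq htail.liminf_eq) zero_le
  · rw [ENNReal.le_rpow_inv_iff hσ]
    exact ENNReal.le_tsum (f := fun i : {i // i ∉ F} ↦ ediam (A i) ^ σ) i
  · obtain ⟨i, hi, hiF⟩ := hx.exists_notMem_finset F
    exact mem_iUnion.2 ⟨⟨i, hiF⟩, hi⟩

lemma ediam_setOf_dyadicIndex_eq_le (j : ℕ) (l : ℤ) :
    ediam {θ : ℝ | dyadicIndex j θ = l} ≤ ENNReal.ofReal (1 / 2 ^ j) := by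
  refine ediam_le fun θ hθ θ' hθ' ↦ ?_
  rw [edist_dist, Real.dist_eq]
  exact ENNReal.ofReal_le_ofReal (abs_sub_le_of_dyadicIndex_eq (hθ.trans hθ'.symm))

lemma hausdorffMeasure_eq_zero_of_dyadic_covers {σ : ℝ} (hσ : 0 < σ) {X : Set ℝ}
    {𝒞 : ℕ → Finset (ℕ × ℤ)} {a : ℕ → ℝ} (ha : Summable a)
    (hsum : ∀ J, ∑ p ∈ 𝒞 J, ((2 : ℝ) ^ (-σ)) ^ p.1 ≤ a J)
    (hX : ∀ θ ∈ X, ∀ N, ∃ J, N ≤ J ∧ ∃ p ∈ 𝒞 J, dyadicIndex p.1 θ = p.2) : μH[σ] X = 0 := by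
  have hdiam : ∀ p : ℕ × ℤ, ediam {θ : ℝ | dyadicIndex p.1 θ = p.2} ^ σ ≤
      ENNReal.ofReal (((2 : ℝ) ^ (-σ)) ^ p.1) := fun p ↦ by
    refine (ENNReal.rpow_le_rpow (ediam_setOf_dyadicIndex_eq_le _ _) hσ.le).trans_eq ?_
    rw [one_div, ENNReal.ofReal_rpow_of_nonneg (by positivity) hσ.le, Real.inv_rpow (by positivity),
      ← Real.rpow_natCast_mul (by positivity), Real.rpow_neg (by positivity), inv_pow,
      ← Real.rpow_mul_natCast (by positivity), mul_comm σ]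
  refine measure_mono_null (fun θ hθ ↦ ?_) (hausdorffMeasure_setOf_infinite_eq_zero hσ
    (fun q : Σ J, 𝒞 J ↦ {θ : ℝ | dyadicIndex q.2.1.1 θ = q.2.1.2}) (ne_top_of_le_ne_top
      (ENNReal.ofReal_ne_top (r := ∑' J, a J)) ?_))
  · refine Infinite.of_image Sigma.fst (infinite_of_not_bddAbove fun ⟨N, hN⟩ ↦ ?_)
    obtain ⟨J, hJ, p, hp, hpθ⟩ := hX θ hθ (N + 1)
    exact absurd (hN ⟨⟨J, p, hp⟩, hpθ, rfl⟩) (by lia)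
  · have ha0 : ∀ J, 0 ≤ a J := fun J ↦
      (Finset.sum_nonneg fun p _ ↦ by positivity).trans (hsum J)
    rw [ENNReal.tsum_sigma', ENNReal.ofReal_tsum_of_nonneg ha0 ha]
    refine ENNReal.tsum_le_tsum fun J ↦ ?_
    calc ∑' p : 𝒞 J, ediam {θ : ℝ | dyadicIndex p.1.1 θ = p.1.2} ^ σ
        ≤ ∑' p : 𝒞 J, ENNReal.ofReal (((2 : ℝ) ^ (-σ)) ^ p.1.1) :=
          ENNReal.tsum_le_tsum fun p ↦ hdiam p
      _ = ENNReal.ofReal (∑ p ∈ 𝒞 J, ((2 : ℝ) ^ (-σ)) ^ p.1) := by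
          rw [Finset.tsum_subtype (𝒞 J) fun p ↦ ENNReal.ofReal (((2 : ℝ) ^ (-σ)) ^ p.1),
            ENNReal.ofReal_sum_of_nonneg fun p _ ↦ by positivity]
      _ ≤ ENNReal.ofReal (a J) := ENNReal.ofReal_le_ofReal (hsum J)

/-! ### Mollification by balls -/

section Mollification

variable {V : Type*} [NormedAddCommGroup V] [InnerProductSpace ℝ V] [FiniteDimensional ℝ V]
  [MeasurableSpace V] [BorelSpace V]

variable (V) in
/-- The uniform probability measure on the ball of radius `ρ` centred at the origin, used as a
mollifier; it is the zero measure for `ρ ≤ 0`. -/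
def uniformBall (ρ : ℝ) : Measure V := ProbabilityTheory.cond volume (ball (0 : V) ρ)

instance (ρ : ℝ) : IsZeroOrProbabilityMeasure (uniformBall V ρ) :=
  inferInstanceAs (IsZeroOrProbabilityMeasure (ProbabilityTheory.cond _ _))

lemma isProbabilityMeasure_uniformBall {ρ : ℝ} (hρ : 0 < ρ) :
    IsProbabilityMeasure (uniformBall V ρ) :=
  ProbabilityTheory.cond_isProbabilityMeasure_of_finite (measure_ball_pos _ _ hρ).ne'
    measure_ball_lt_top.ne

lemma uniformBall_compl_ball (ρ : ℝ) : uniformBall V ρ (ball (0 : V) ρ)ᶜ = 0 := by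
  rw [uniformBall, ProbabilityTheory.cond_apply measurableSet_ball, inter_compl_self,
    measure_empty, mul_zero]

lemma ae_abs_le_map_inner_uniformBall {v : V} (hv : ‖v‖ = 1) (ρ : ℝ) :
    ∀ᵐ u ∂(uniformBall V ρ).map (fun x ↦ ⟪x, v⟫), |u| ≤ ρ := by
  rw [ae_map_iff (by fun_prop) (measurableSet_le (by fun_prop) measurable_const)]
  filter_upwards [mem_ae_iff.2 (uniformBall_compl_ball (V := V) ρ)] with x hx
  refine (abs_real_inner_le_norm x v).trans ?_
  rw [hv, mul_one]
  exact (mem_ball_zero_iff.1 hx).le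

lemma lintegral_measure_ball_comm {X : Type*} [PseudoMetricSpace X] [SecondCountableTopology X]
    [MeasurableSpace X] [OpensMeasurableSpace X] (μ ν : Measure X) [SFinite μ] [SFinite ν]
    (ρ : ℝ) : ∫⁻ x, ν (ball x ρ) ∂μ = ∫⁻ y, μ (ball y ρ) ∂ν := by
  have hS : MeasurableSet {p : X × X | dist p.2 p.1 < ρ} :=
    measurableSet_lt (measurable_snd.dist measurable_fst) measurable_const
  calc ∫⁻ x, ν (ball x ρ) ∂μ = μ.prod ν {p | dist p.2 p.1 < ρ} := (Measure.prod_apply hS).symm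
    _ = ∫⁻ y, μ {x | dist y x < ρ} ∂ν := Measure.prod_apply_symm hS
    _ = ∫⁻ y, μ (ball y ρ) ∂ν := by simp only [dist_comm, ball]

lemma conv_uniformBall_apply (μ : Measure V) [SFinite μ] {ρ : ℝ} (hρ : 0 < ρ) {A : Set V}
    (hA : MeasurableSet A) :
    (μ ∗ uniformBall V ρ) A = (volume (ball (0 : V) ρ))⁻¹ * ∫⁻ y in A, μ (ball y ρ) := by
  have htranslate : ∀ x : V, uniformBall V ρ (Prod.mk x ⁻¹' ((fun p : V × V ↦ p.1 + p.2) ⁻¹' A)) =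
      (volume (ball (0 : V) ρ))⁻¹ * volume.restrict A (ball x ρ) := fun x ↦ by
    rw [uniformBall, ProbabilityTheory.cond_apply measurableSet_ball,
      Measure.restrict_apply measurableSet_ball, ← measure_preimage_add volume x (ball x ρ ∩ A),
      preimage_inter, preimage_add_ball, sub_self]
    rfl
  rw [Measure.conv, Measure.map_apply (by fun_prop) hA,
    Measure.prod_apply (measurable_add hA)]
  simp only [htranslate]
  rw [lintegral_const_mul' _ _ (ENNReal.inv_ne_top.2 (measure_ball_pos _ _ hρ).ne'),
    lintegral_measure_ball_comm]

lemma conv_uniformBall_le (μ : Measure V) [SFinite μ] {ρ : ℝ} (hρ : 0 < ρ) {b : ℝ≥0∞}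
    (hμ : ∀ y, μ (ball y ρ) ≤ b) :
    μ ∗ uniformBall V ρ ≤ ((volume (ball (0 : V) ρ))⁻¹ * b) • (volume : Measure V) := by
  refine Measure.le_iff.2 fun A hA ↦ ?_
  rw [conv_uniformBall_apply μ hρ hA, Measure.smul_apply, smul_eq_mul, mul_assoc]
  gcongr
  calc ∫⁻ y in A, μ (ball y ρ) ≤ ∫⁻ _ in A, b := lintegral_mono hμ
    _ = b * volume A := setLIntegral_const A b

lemma conv_compl_ball (μ ν : Measure V) [SFinite ν] {R ρ : ℝ} (hμ : μ (ball 0 R)ᶜ = 0)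
    (hν : ν (ball 0 ρ)ᶜ = 0) : (μ ∗ ν) (ball 0 (R + ρ))ᶜ = 0 := by
  rw [Measure.conv, Measure.map_apply (by fun_prop) measurableSet_ball.compl]
  refine measure_mono_null (t := (ball 0 R)ᶜ ×ˢ univ ∪ univ ×ˢ (ball 0 ρ)ᶜ) ?_ ?_
  · rintro ⟨x, u⟩ hx
    simp only [mem_preimage, mem_compl_iff, mem_ball, dist_zero_right, not_lt] at hx
    simp only [mem_union, mem_prod, mem_compl_iff, mem_ball, dist_zero_right, mem_univ, and_true,
      true_and, not_lt]
    by_contra! hc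
    linarith [norm_add_le x u]
  · rw [measure_union_null_iff, Measure.prod_prod, Measure.prod_prod, hμ, hν, zero_mul, mul_zero]
    exact ⟨rfl, rfl⟩

lemma inv_volume_ball_mul_ofReal {C t ρ : ℝ} (hρ : 0 < ρ) :
    (volume (ball (0 : V) ρ))⁻¹ * ENNReal.ofReal (C * ρ ^ t) =
      ENNReal.ofReal (C / volume.real (ball (0 : V) 1) * ρ ^ (t - Module.finrank ℝ V)) := by
  have hv : 0 < volume.real (ball (0 : V) 1) :=
    ENNReal.toReal_pos (measure_ball_pos _ _ one_pos).ne' measure_ball_lt_top.ne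
  rw [Measure.addHaar_ball_of_pos _ _ hρ, ← ofReal_measureReal (s := ball (0 : V) 1)
    measure_ball_lt_top.ne, ← ENNReal.ofReal_mul (by positivity),
    ← ENNReal.ofReal_inv_of_pos (by positivity), ← ENNReal.ofReal_mul (by positivity),
    Real.rpow_sub hρ, Real.rpow_natCast]
  congr 1
  field_simp

lemma conv_uniformBall_le_smul (μ m : Measure V) [SFinite μ] {C t R : ℝ}
    (hμ : ∀ y, ∀ ρ, 0 < ρ → ρ ≤ 1 → μ (closedBall y ρ) ≤ ENNReal.ofReal (C * ρ ^ t))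
    (hμR : μ (ball 0 R)ᶜ = 0) (hm : (volume : Measure V).restrict (ball 0 (R + 1)) ≤ m)
    {ρ : ℝ} (hρ : 0 < ρ) (hρ1 : ρ ≤ 1) :
    μ ∗ uniformBall V ρ ≤ ENNReal.ofReal
      (C / volume.real (ball (0 : V) 1) * ρ ^ (t - Module.finrank ℝ V)) • m := by
  have hsupp : (μ ∗ uniformBall V ρ) (ball 0 (R + 1))ᶜ = 0 := measure_mono_null
    (compl_subset_compl.2 (ball_subset_ball (by gcongr)))
    (conv_compl_ball μ _ hμR (uniformBall_compl_ball ρ))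
  have hle := conv_uniformBall_le μ hρ fun y ↦
    (measure_mono ball_subset_closedBall).trans (hμ y ρ hρ hρ1)
  rw [inv_volume_ball_mul_ofReal hρ] at hle
  rw [← Measure.restrict_eq_self_of_ae_mem (mem_ae_iff.2 hsupp)]
  calc (μ ∗ uniformBall V ρ).restrict (ball 0 (R + 1))
      ≤ (_ • volume).restrict (ball 0 (R + 1)) := Measure.restrict_mono le_rfl hle
    _ = _ • volume.restrict (ball 0 (R + 1)) := Measure.restrict_smul ..
    _ ≤ _ • m := by gcongr

lemma integral_map_inner_conv (μ ν : Measure V) [SFinite μ] [SFinite ν] (v : V) {h : ℝ → ℂ}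
    (hh : Continuous h) :
    ∫ s, h s ∂(μ.map (fun x ↦ ⟪x, v⟫) ∗ ν.map (fun x ↦ ⟪x, v⟫)) = ∫ x, h ⟪x, v⟫ ∂(μ ∗ ν) := by
  have hL : (fun x : V ↦ ⟪x, v⟫) = innerSL ℝ v := by
    ext x
    rw [innerSL_apply_apply, real_inner_comm]
  rw [hL, ← Measure.map_conv_continuousLinearMap, integral_map (by fun_prop)
    hh.aestronglyMeasurable]
  simp only [innerSL_apply_apply, real_inner_comm]

end Mollification

/-! ### Covering the bad directions at one scale -/

lemma norm_integral_pow_le {X E : Type*} [MeasurableSpace X] [NormedAddCommGroup E]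
    [NormedSpace ℝ E] (q : Measure X) [IsFiniteMeasure q] {F : X → E} (n : ℕ) (hF : Integrable F q)
    (hFn : Integrable (fun x ↦ ‖F x‖ ^ (n + 1)) q) :
    ‖∫ x, F x ∂q‖ ^ (n + 1) ≤ q.real univ ^ n * ∫ x, ‖F x‖ ^ (n + 1) ∂q := by
  rcases eq_zero_or_neZero q with rfl | hq
  · simp
  have hq0 : 0 < q.real univ := measureReal_univ_pos
  have hjensen := (convexOn_pow (𝕜 := ℝ) (n + 1)).map_average_le
    (by fun_prop) isClosed_Ici (.of_forall fun x ↦ norm_nonneg (F x)) hF.norm hFn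
  rw [average_eq, average_eq, smul_eq_mul, smul_eq_mul, mul_pow, inv_pow,
    inv_mul_le_iff₀ (by positivity)] at hjensen
  calc ‖∫ x, F x ∂q‖ ^ (n + 1) ≤ (∫ x, ‖F x‖ ∂q) ^ (n + 1) := by
        gcongr
        exact norm_integral_le_integral_norm _
    _ ≤ q.real univ ^ (n + 1) * ((q.real univ)⁻¹ * ∫ x, ‖F x‖ ^ (n + 1) ∂q) := hjensen
    _ = q.real univ ^ n * ∫ x, ‖F x‖ ^ (n + 1) ∂q := by
        rw [pow_succ, mul_assoc, mul_inv_cancel_left₀ hq0.ne']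

lemma BddContinuous.norm_integral_pow_le_of_le_smul {X E : Type*} [TopologicalSpace X]
    [MeasurableSpace X] [OpensMeasurableSpace X] [NormedAddCommGroup E] [NormedSpace ℝ E]
    [SecondCountableTopology E] {q m : Measure X} [IsFiniteMeasure q] [IsFiniteMeasure m] {D : ℝ}
    (hD : 0 ≤ D) (hq : q ≤ ENNReal.ofReal D • m) {F : X → E} (hF : BddContinuous F) (n : ℕ) :
    ‖∫ x, F x ∂q‖ ^ (n + 1) ≤ q.real univ ^ n * (D * ∫ x, ‖F x‖ ^ (n + 1) ∂m) := by
  have hFn := hF.norm.pow (n + 1)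
  refine (norm_integral_pow_le q n hF.integrable hFn.integrable).trans ?_
  gcongr
  have hmono := integral_mono_measure hq (.of_forall fun x ↦ by positivity)
    (hFn.integrable.smul_measure ENNReal.ofReal_ne_top)
  rwa [integral_smul_measure, ENNReal.toReal_ofReal hD, smul_eq_mul] at hmono

section Cover

variable {V : Type*} [NormedAddCommGroup V] [InnerProductSpace ℝ V] {γ : ℝ → V}

lemma comp_inner_mem_trigPoly {θ : ℝ} {K : ℤ} {M : ℕ} {κ : ℝ} (hKM : (M : ℝ) ≤ κ * |(K : ℝ)|)
    {h : ℝ → ℂ} (hh : h ∈ testFun K M) :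
    (fun x ↦ h ⟪x, γ θ⟫) ∈ trigPoly (rayPiece γ K κ θ) := by
  obtain ⟨S, c, hS, rfl, -⟩ := hh
  have hsum : (fun x ↦ trigSum S c ⟪x, γ θ⟫) = ∑ k ∈ S, c k • planeWave ((k : ℝ) • γ θ) := by
    ext x
    simp [trigSum, planeWave, expChar, Finset.sum_apply, inner_smul_left, real_inner_comm]
  rw [hsum]
  refine Submodule.sum_mem _ fun k hk ↦ Submodule.smul_mem _ _ (Submodule.subset_span ?_)
  have hkM : |(k : ℝ) - K| ≤ M := by exact_mod_cast hS k hk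
  exact ⟨_, ⟨k, hkM.trans hKM, rfl⟩, rfl⟩

variable [MeasurableSpace V] {q : Measure V}

lemma exists_mem_trigPoly_integral_eq_norm {θ : ℝ} {K : ℤ} {M : ℕ} {κ : ℝ}
    (hKM : (M : ℝ) ≤ κ * |(K : ℝ)|) {h : ℝ → ℂ} (hh : h ∈ testFun K M) :
    ∃ g ∈ trigPoly (rayPiece γ K κ θ), (∀ x, ‖g x‖ ≤ 1) ∧
      ∫ x, g x ∂q = ‖∫ x, h ⟪x, γ θ⟫ ∂q‖ := by
  set I := ∫ x, h ⟪x, γ θ⟫ ∂q with hI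
  refine ⟨(starRingEnd ℂ I / ‖I‖) • fun x ↦ h ⟪x, γ θ⟫,
    Submodule.smul_mem _ _ (comp_inner_mem_trigPoly hKM hh), fun x ↦ ?_, ?_⟩
  · rw [Pi.smul_apply, norm_smul, norm_div, RCLike.norm_conj, Complex.norm_real, norm_norm]
    exact mul_le_one₀ (div_self_le_one _) (norm_nonneg _) (norm_le_one_of_mem_testFun hh _)
  · simp only [Pi.smul_apply, smul_eq_mul]
    rw [integral_const_mul, ← hI, div_mul_eq_mul_div, mul_comm, Complex.mul_conj,
      Complex.normSq_eq_norm_sq, Complex.ofReal_pow, sq, mul_self_div_self]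

lemma mul_arcSum_le_norm_integral_arcSum {X : Type*} [MeasurableSpace X] {q : Measure X}
    {Θ : Finset ℝ} {ν : ℝ → ℝ} {g : ℝ → X → ℂ} {β : ℝ} (hν : ∀ θ, 0 ≤ ν θ)
    (hg : ∀ θ ∈ Θ, Integrable (g θ) q) (hβ : ∀ θ ∈ Θ, β ≤ (∫ x, g θ x ∂q).re) (j : ℕ) (l : ℤ) :
    β * arcSum Θ ν j l ≤ ‖∫ x, arcSum Θ (fun θ ↦ (ν θ : ℂ) • g θ) j l x ∂q‖ := by
  have hint : ∫ x, arcSum Θ (fun θ ↦ (ν θ : ℂ) • g θ) j l x ∂q =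
      ∑ θ ∈ Θ with dyadicIndex j θ = l, (ν θ : ℂ) * ∫ x, g θ x ∂q := by
    simp only [arcSum, Finset.sum_apply, Pi.smul_apply, smul_eq_mul]
    rw [integral_finsetSum _ fun θ hθ ↦ (hg θ (Finset.mem_filter.1 hθ).1).const_mul _]
    exact Finset.sum_congr rfl fun θ _ ↦ integral_const_mul _ _
  refine le_trans ?_ (Complex.re_le_norm _)
  rw [hint, Complex.re_sum, arcSum, Finset.mul_sum]
  refine Finset.sum_le_sum fun θ hθ ↦ ?_
  rw [Complex.re_ofReal_mul, mul_comm]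
  exact mul_le_mul_of_nonneg_left (hβ θ (Finset.mem_filter.1 hθ).1) (hν θ)

-- The phases of the test functions are aligned, so that the Frostman superposition of them has a
-- large integral against `q`; the sixth moment bound then limits the Frostman mass.
lemma exists_finset_cover [OpensMeasurableSpace V] {m : Measure V} [IsFiniteMeasure q]
    [IsFiniteMeasure m] {D : ℝ} (hD : 0 ≤ D) (hq : q ≤ ENNReal.ofReal D • m)
    {U E : Set ℝ} (hEU : E ⊆ U) {K : ℤ} {M : ℕ} {κ β s G : ℝ} (hKM : (M : ℝ) ≤ κ * |(K : ℝ)|)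
    (hβ : 0 < β) (hE : ∀ θ ∈ E, ∃ h ∈ testFun K M, β < ‖∫ x, h ⟪x, γ θ⟫ ∂q‖) (hs : 0 ≤ s)
    (J : ℕ) (z : ℤ) (hG0 : 0 ≤ G)
    (hG : ∀ (Θ : Finset ℝ) (ν : ℝ → ℝ) (h : ℝ → V → ℂ),
      InjOn (dyadicIndex J) Θ → (∀ θ, 0 ≤ ν θ) → Radial γ U K κ Θ h →
      (∀ θ ∈ Θ, ∀ x, ‖h θ x‖ ≤ 1) → (∀ j ≤ J, ∀ l, arcSum Θ ν j l ≤ s ^ j) →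
      ∫ x, ‖arcSum Θ (fun θ ↦ (ν θ : ℂ) • h θ) 0 z x‖ ^ 6 ∂m ≤ G * arcSum Θ ν 0 z ^ 3) :
    ∃ 𝒞 : Finset (ℕ × ℤ),
      (∀ θ ∈ E, dyadicIndex 0 θ = z → ∃ p ∈ 𝒞, dyadicIndex p.1 θ = p.2) ∧
      (∑ p ∈ 𝒞, s ^ p.1) ^ 3 ≤ q.real univ ^ 5 * D * G / β ^ 6 := by
  obtain ⟨Θ, ν, 𝒞, hΘE, hinj, hν, hfr, hcov, hsum⟩ := exists_frostman_arcs E hs J z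
  refine ⟨𝒞, hcov, ?_⟩
  have htest : ∀ θ, ∃ g : V → ℂ, θ ∈ E → g ∈ trigPoly (rayPiece γ K κ θ) ∧ (∀ x, ‖g x‖ ≤ 1) ∧
      β ≤ (∫ x, g x ∂q).re := fun θ ↦ by
    by_cases hθ : θ ∈ E
    · obtain ⟨h, hh, hb⟩ := hE θ hθ
      obtain ⟨g, hg, hg1, hgI⟩ := exists_mem_trigPoly_integral_eq_norm (γ := γ) (q := q) hKM hh
      exact ⟨g, fun _ ↦ ⟨hg, hg1, by rw [hgI, Complex.ofReal_re]; exact hb.le⟩⟩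
    · exact ⟨0, fun h ↦ absurd h hθ⟩
  choose h hh using htest
  have hrad : Radial γ U K κ Θ h := fun θ hθ ↦ ⟨hEU (hΘE θ hθ), (hh θ (hΘE θ hθ)).1⟩
  set W := arcSum Θ ν 0 z
  set F := arcSum Θ (fun θ ↦ (ν θ : ℂ) • h θ) 0 z
  have hlow : β * W ≤ ‖∫ x, F x ∂q‖ := mul_arcSum_le_norm_integral_arcSum hν
    (fun θ hθ ↦ (bddContinuous_of_mem_trigPoly (hrad θ hθ).2).integrable)
    (fun θ hθ ↦ (hh θ (hΘE θ hθ)).2.2) 0 z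
  have hW : 0 ≤ W := arcSum_nonneg hν 0 z
  refine (pow_le_pow_left₀ (Finset.sum_nonneg fun p _ ↦ by positivity) hsum 3).trans ?_
  rcases hW.eq_or_lt with hW0 | hW0
  · rw [← hW0, zero_pow three_ne_zero]
    positivity
  rw [le_div_iff₀ (by positivity)]
  refine le_of_mul_le_mul_right ?_ (pow_pos hW0 3)
  calc W ^ 3 * β ^ 6 * W ^ 3 = (β * W) ^ 6 := by ring
    _ ≤ ‖∫ x, F x ∂q‖ ^ 6 := by gcongr
    _ ≤ q.real univ ^ 5 * (D * ∫ x, ‖F x‖ ^ 6 ∂m) :=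
        ((hrad.smul ν).bddContinuous_arcSum 0 z).norm_integral_pow_le_of_le_smul hD hq 5
    _ ≤ q.real univ ^ 5 * (D * (G * W ^ 3)) := by
        gcongr
        exact hG Θ ν h hinj hν hrad (fun θ hθ ↦ (hh θ (hΘE θ hθ)).2.1) hfr
    _ = q.real univ ^ 5 * D * G * W ^ 3 := by ring

end Cover

/-! ### Exceptional directions of a single measure -/

/-- The scale at which a measure is mollified at stage `J`, so small that at frequencies below
`5 * 2 ^ J` the mollification can be undone. -/
def mollificationRadius (J : ℕ) : ℝ := (40 * Real.pi * 2 ^ J)⁻¹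

lemma mollificationRadius_pos (J : ℕ) : 0 < mollificationRadius J := by
  unfold mollificationRadius
  positivity

lemma mollificationRadius_le_one (J : ℕ) : mollificationRadius J ≤ 1 := by
  have hpow : (1 : ℝ) ≤ 2 ^ J := one_le_pow₀ one_le_two
  refine inv_le_one_of_one_le₀ ?_
  nlinarith [Real.pi_gt_three]

lemma mollificationRadius_rpow (J : ℕ) (u : ℝ) :
    mollificationRadius J ^ u = (40 * Real.pi) ^ (-u) * ((2 : ℝ) ^ (-u)) ^ J := by
  rw [mollificationRadius, Real.inv_rpow (by positivity), ← Real.rpow_neg (by positivity),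
    Real.mul_rpow (by positivity) (by positivity), ← Real.rpow_natCast_mul (by positivity),
    ← Real.rpow_mul_natCast (by positivity), mul_comm (J : ℝ)]

section Exceptional

variable {V : Type*} [NormedAddCommGroup V] [InnerProductSpace ℝ V] [FiniteDimensional ℝ V]
  [MeasurableSpace V] [BorelSpace V] {γ : ℝ → V} {U : Set ℝ}

/-- The directions in `U` along which the mollification of `μ` at stage `J` has an integral larger
than `β` against some test function with spectrum within `2 ^ (J - l)` of `k * 2 ^ (J - l)`. -/
def badDirections (γ : ℝ → V) (U : Set ℝ) (μ : Measure V) (β : ℝ) (l J : ℕ) (k : ℤ) : Set ℝ :=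
  {θ ∈ U | ∃ h ∈ testFun (k * (2 ^ (J - l) : ℕ)) (2 ^ (J - l)),
    β < ‖∫ x, h ⟪x, γ θ⟫ ∂(μ ∗ uniformBall V (mollificationRadius J))‖}

lemma abs_mul_two_pow_add_le {l J : ℕ} (hlJ : l ≤ J) {k : ℤ} (hk : k ∈ annulus l) :
    |k * (2 ^ (J - l) : ℕ)| + (2 ^ (J - l) : ℕ) ≤ (5 * 2 ^ J : ℕ) := by
  simp only [annulus, Finset.mem_filter, Finset.mem_Icc, ← abs_le] at hk
  have hpow : (2 : ℤ) ^ l * 2 ^ (J - l) = 2 ^ J := by rw [← pow_add, Nat.add_sub_cancel' hlJ]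
  have hl : (1 : ℤ) ≤ 2 ^ l := one_le_pow₀ one_le_two
  have hJl : (0 : ℤ) < 2 ^ (J - l) := by positivity
  push_cast
  rw [abs_mul, abs_of_pos hJl]
  calc |k| * 2 ^ (J - l) + 2 ^ (J - l)
      ≤ 2 ^ (l + 2) * 2 ^ (J - l) + 2 ^ l * 2 ^ (J - l) := by
        gcongr
        · exact hk.1
        · exact le_mul_of_one_le_left hJl.le hl
    _ = 5 * 2 ^ J := by rw [← hpow]; ring

lemma absolutelyContinuous_of_forall_notMem_badDirections (μ : Measure V) [IsFiniteMeasure μ]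
    {θ : ℝ} (hθ : θ ∈ U) (hU : ‖γ θ‖ = 1) {a : ℕ → ℝ} (ha0 : ∀ J, 0 ≤ a J) (ha : Summable a)
    {l N : ℕ} (hN : ∀ J, N ≤ J → ∀ k ∈ annulus l, θ ∉ badDirections γ U μ (a J) l J k) :
    μ.map (fun x ↦ ⟪x, γ θ⟫) ≪ volume := by
  refine absolutelyContinuous_of_summable _ (l := l) (J₀ := max N l) (a := fun J ↦ 2 * a J)
    (fun J ↦ mul_nonneg zero_le_two (ha0 J)) (ha.mul_left 2) fun J hJ k hk h hh ↦ ?_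
  have := isProbabilityMeasure_uniformBall (V := V) (mollificationRadius_pos J)
  have : IsProbabilityMeasure
      ((uniformBall V (mollificationRadius J)).map fun x ↦ ⟪x, γ θ⟫) :=
    Measure.isProbabilityMeasure_map (by fun_prop)
  refine norm_integral_le_of_conv _ ((uniformBall V (mollificationRadius J)).map fun x ↦ ⟪x, γ θ⟫)
    (ae_abs_le_map_inner_uniformBall hU _) (N := 5 * 2 ^ J) (by positivity)
    (abs_mul_two_pow_add_le ((le_max_right _ _).trans hJ) hk) ?_ (fun g hg ↦ ?_) hh
  · rw [mollificationRadius]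
    push_cast
    field_simp
    norm_num
  · rw [integral_map_inner_conv _ _ _ (continuous_of_mem_testFun hg)]
    by_contra! hlt
    exact hN J ((le_max_left _ _).trans hJ) k hk ⟨hθ, g, hg, hlt⟩

lemma measureReal_conv_univ (μ ν : Measure V) [SFinite μ] [IsProbabilityMeasure ν] :
    (μ ∗ ν).real univ = μ.real univ := by
  rw [Measure.conv, map_measureReal_apply (by fun_prop) MeasurableSet.univ, preimage_univ,
    ← univ_prod_univ, measureReal_prod_prod, probReal_univ (μ := ν), mul_one]

variable {m μ : Measure V} [IsFiniteMeasure m] [IsFiniteMeasure μ] {r c₁ c₂ c₃ C t R s y : ℝ}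

lemma BandLimited.exists_cover_badDirections (hm : BandLimited m r) (hr : 0 ≤ r)
    (hQ : QuadNondeg γ U c₁ c₂) (hc₁ : 0 < c₁) (hc₂ : 0 < c₂) (hU : ∀ θ ∈ U, ‖γ θ‖ = 1)
    (hc₃ : 0 < c₃) (hlow : ∀ θ ∈ U, ∀ θ' ∈ U, c₃ * |θ - θ'| ≤ ‖γ θ - γ θ'‖) (hC : 0 ≤ C)
    (hμ : ∀ y, ∀ ρ, 0 < ρ → ρ ≤ 1 → μ (closedBall y ρ) ≤ ENNReal.ofReal (C * ρ ^ t))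
    (hμR : μ (ball 0 R)ᶜ = 0) (hmR : (volume : Measure V).restrict (ball 0 (R + 1)) ≤ m)
    (hy : 1 < y) (hs0 : 0 < s) (hs1 : s ≤ 1) :
    ∃ (l J₀ : ℕ) (Q : ℝ), 0 ≤ Q ∧ ∀ J, J₀ ≤ J → ∀ k ∈ annulus l, ∀ z : ℤ,
      ∃ 𝒞 : Finset (ℕ × ℤ), (∀ θ ∈ badDirections γ U μ (y⁻¹ ^ J) l J k,
          dyadicIndex 0 θ = z → ∃ p ∈ 𝒞, dyadicIndex p.1 θ = p.2) ∧
        (∑ p ∈ 𝒞, s ^ p.1) ^ 3 ≤ Q * (y ^ 11 * (2 ^ (Module.finrank ℝ V - t) * s ^ 2)) ^ J := by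
  obtain ⟨n, J₀, C', -, hC', hsix⟩ :=
    hm.exists_integral_norm_six_arcSum_le hQ hc₁ hc₂ hr hU hc₃ hlow hy hs0 hs1
  set A : ℝ := C / volume.real (ball (0 : V) 1) * (40 * Real.pi) ^ (Module.finrank ℝ V - t)
  refine ⟨2 * n, max J₀ (2 * n), μ.real univ ^ 5 * A * C', by positivity, fun J hJ k hk z ↦ ?_⟩
  have hnJ : 2 * n ≤ J := (le_max_right _ _).trans hJ
  have hk' : (4 : ℝ) ^ n ≤ |(k : ℝ)| := by
    have h4 : (4 : ℤ) ^ n = 2 ^ (2 * n) := by rw [pow_mul]; norm_num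
    exact_mod_cast h4.le.trans (Finset.mem_filter.1 hk).2
  have hK : |((k * (2 ^ (J - 2 * n) : ℕ) : ℤ) : ℝ)| = |(k : ℝ)| * 2 ^ (J - 2 * n) := by
    push_cast
    rw [abs_mul, abs_of_pos (by positivity : (0 : ℝ) < 2 ^ (J - 2 * n))]
  have := isProbabilityMeasure_uniformBall (V := V) (mollificationRadius_pos J)
  have hle := conv_uniformBall_le_smul μ m hμ hμR hmR (mollificationRadius_pos J)
    (mollificationRadius_le_one J)
  rw [mollificationRadius_rpow, neg_sub, ← mul_assoc] at hle
  have : 0 < y := one_pos.trans hy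
  obtain ⟨𝒞, hcov, hsum⟩ := exists_finset_cover (by positivity) hle (γ := γ) (U := U)
    (E := badDirections γ U μ (y⁻¹ ^ J) (2 * n) J k) (fun θ hθ ↦ hθ.1) (κ := 1 / 4 ^ n)
    (G := C' * y ^ (5 * J) * s ^ (2 * J))
    (by
      rw [hK, one_div, le_inv_mul_iff₀ (by positivity)]
      push_cast
      gcongr)
    (by positivity) (fun θ hθ ↦ hθ.2) hs0.le J z (by positivity)
    (fun Θ ν h hinj hν hrad h1 hfr ↦ hsix J ((le_max_left _ _).trans hJ) _
      (by
        have hpow : (2 : ℝ) ^ J = 4 ^ n * 2 ^ (J - 2 * n) := by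
          rw [← Nat.add_sub_cancel' hnJ, pow_add, pow_mul, Nat.add_sub_cancel_left]
          norm_num
        rw [hK, hpow]
        gcongr) Θ ν h hinj hν hrad h1 hfr z)
  refine ⟨𝒞, hcov, hsum.trans_eq ?_⟩
  rw [measureReal_conv_univ]
  simp only [inv_pow, div_inv_eq_mul, mul_pow, pow_mul]
  ring

lemma le_rpow_mul_pow_of_pow_three_le {X Q w : ℝ} (hQ : 0 ≤ Q) (hw : 0 ≤ w) {J : ℕ}
    (h : X ^ 3 ≤ Q * w ^ J) : X ≤ Q ^ (3⁻¹ : ℝ) * (w ^ (3⁻¹ : ℝ)) ^ J := by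
  refine le_of_pow_le_pow_left₀ three_ne_zero (by positivity) (h.trans_eq ?_)
  rw [mul_pow, ← pow_mul, mul_comm J, pow_mul, ← Real.rpow_mul_natCast hQ,
    ← Real.rpow_mul_natCast hw]
  norm_num

lemma exists_one_lt_pow_mul_lt_one {w : ℝ} (hw : w < 1) (n : ℕ) : ∃ y, 1 < y ∧ y ^ n * w < 1 := by
  have hlim : Filter.Tendsto (fun y : ℝ ↦ y ^ n * w) (nhdsWithin 1 (Ioi 1)) (nhds (1 ^ n * w)) :=
    (Continuous.tendsto (by fun_prop) 1).mono_left nhdsWithin_le_nhds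
  rw [one_pow, one_mul] at hlim
  obtain ⟨y, hyw, hy⟩ := ((hlim.eventually (gt_mem_nhds hw)).and self_mem_nhdsWithin).exists
  exact ⟨y, hy, hyw⟩

lemma hausdorffMeasure_eq_zero_of_cover_badDirections {σ : ℝ} (hσ : 0 < σ) {a : ℕ → ℝ}
    (ha0 : ∀ J, 0 ≤ a J) (ha : Summable a) {b : ℕ → ℝ} (hb : Summable b) {l J₀ : ℕ}
    (hU : ∀ θ ∈ U, ‖γ θ‖ = 1) {z : ℤ}
    (hcov : ∀ J, J₀ ≤ J → ∀ k ∈ annulus l, ∃ 𝒞 : Finset (ℕ × ℤ),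
      (∀ θ ∈ badDirections γ U μ (a J) l J k,
        dyadicIndex 0 θ = z → ∃ p ∈ 𝒞, dyadicIndex p.1 θ = p.2) ∧
      ∑ p ∈ 𝒞, ((2 : ℝ) ^ (-σ)) ^ p.1 ≤ b J) :
    μH[σ] {θ ∈ U | ¬ μ.map (fun x ↦ ⟪x, γ θ⟫) ≪ volume ∧ dyadicIndex 0 θ = z} = 0 := by
  classical
  choose! 𝒞 h𝒞 hsum using hcov
  refine hausdorffMeasure_eq_zero_of_dyadic_covers hσ
    (𝒞 := fun J ↦ (annulus l).biUnion (𝒞 (J₀ + J)))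
    (a := fun J ↦ (annulus l).card * b (J₀ + J)) ?_ (fun J ↦ ?_) ?_
  · simp only [add_comm J₀]
    exact ((summable_nat_add_iff J₀).2 hb).mul_left _
  · calc ∑ p ∈ (annulus l).biUnion (𝒞 (J₀ + J)), ((2 : ℝ) ^ (-σ)) ^ p.1
        ≤ ∑ k ∈ annulus l, ∑ p ∈ 𝒞 (J₀ + J) k, ((2 : ℝ) ^ (-σ)) ^ p.1 :=
          sum_biUnion_le_sum _ _ fun p ↦ by positivity
      _ ≤ ∑ _ ∈ annulus l, b (J₀ + J) :=
          Finset.sum_le_sum fun k hk ↦ hsum _ le_self_add k hk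
      _ = (annulus l).card * b (J₀ + J) := by rw [Finset.sum_const, nsmul_eq_mul]
  · rintro θ ⟨hθU, hθ, hθz⟩ N
    have hbad : ¬ ∀ J, J₀ + N ≤ J → ∀ k ∈ annulus l, θ ∉ badDirections γ U μ (a J) l J k :=
      fun h ↦ hθ (absolutelyContinuous_of_forall_notMem_badDirections μ hθU (hU θ hθU) ha0 ha h)
    push Not at hbad
    obtain ⟨J, hJ, k, hk, hθB⟩ := hbad
    obtain ⟨p, hp, hpθ⟩ := h𝒞 J (by lia) k hk θ hθB hθz
    refine ⟨J - J₀, by lia, p, Finset.mem_biUnion.2 ⟨k, hk, ?_⟩, hpθ⟩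
    rwa [Nat.add_sub_cancel' (by lia)]

theorem BandLimited.hausdorffMeasure_not_absolutelyContinuous (hm : BandLimited m r) (hr : 0 ≤ r)
    (hQ : QuadNondeg γ U c₁ c₂) (hc₁ : 0 < c₁) (hc₂ : 0 < c₂) (hU : ∀ θ ∈ U, ‖γ θ‖ = 1)
    (hc₃ : 0 < c₃) (hlow : ∀ θ ∈ U, ∀ θ' ∈ U, c₃ * |θ - θ'| ≤ ‖γ θ - γ θ'‖) (hC : 0 ≤ C)
    (hμ : ∀ y, ∀ ρ, 0 < ρ → ρ ≤ 1 → μ (closedBall y ρ) ≤ ENNReal.ofReal (C * ρ ^ t))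
    (hμR : μ (ball 0 R)ᶜ = 0) (hmR : (volume : Measure V).restrict (ball 0 (R + 1)) ≤ m)
    {σ : ℝ} (hσ : 0 < σ) (hσt : (Module.finrank ℝ V - t) / 2 < σ) :
    μH[σ] {θ ∈ U | ¬ μ.map (fun x ↦ ⟪x, γ θ⟫) ≪ volume} = 0 := by
  have hs1 : (2 : ℝ) ^ (-σ) < 1 := Real.rpow_lt_one_of_one_lt_of_neg one_lt_two (by linarith)
  have hw : (2 : ℝ) ^ (Module.finrank ℝ V - t) * (2 ^ (-σ)) ^ 2 < 1 := by
    rw [← Real.rpow_mul_natCast zero_le_two, ← Real.rpow_add zero_lt_two]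
    refine Real.rpow_lt_one_of_one_lt_of_neg one_lt_two ?_
    push_cast
    linarith
  obtain ⟨y, hy, hyw⟩ := exists_one_lt_pow_mul_lt_one hw 11
  have : 0 < y := one_pos.trans hy
  obtain ⟨l, J₀, Q, hQ0, hcov⟩ := hm.exists_cover_badDirections hr hQ hc₁ hc₂ hU hc₃ hlow hC hμ
    hμR hmR hy (by positivity) hs1.le
  set w := y ^ 11 * ((2 : ℝ) ^ (Module.finrank ℝ V - t) * (2 ^ (-σ)) ^ 2)
  have hw0 : 0 ≤ w := by positivity
  have ha : Summable fun J ↦ y⁻¹ ^ J :=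
    summable_geometric_of_lt_one (by positivity) (inv_lt_one_of_one_lt₀ hy)
  have hb : Summable fun J ↦ Q ^ (3⁻¹ : ℝ) * (w ^ (3⁻¹ : ℝ)) ^ J := (summable_geometric_of_lt_one
    (by positivity) (Real.rpow_lt_one hw0 hyw (by norm_num))).mul_left _
  refine measure_mono_null
    (t := ⋃ z : ℤ, {θ ∈ U | ¬ μ.map (fun x ↦ ⟪x, γ θ⟫) ≪ volume ∧ dyadicIndex 0 θ = z})
    (fun θ hθ ↦ mem_iUnion.2 ⟨dyadicIndex 0 θ, hθ.1, hθ.2, rfl⟩)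
    (measure_iUnion_null fun z ↦ hausdorffMeasure_eq_zero_of_cover_badDirections (l := l)
      (J₀ := J₀) hσ (fun J ↦ by positivity) ha hb hU fun J hJ k hk ↦ ?_)
  obtain ⟨𝒞, h𝒞, hsum⟩ := hcov J hJ k hk z
  exact ⟨𝒞, h𝒞, le_rpow_mul_pow_of_pow_three_le hQ0 hw0 hsum⟩

end Exceptional

/-! ### Band-limited majorants of Lebesgue measure -/

section Majorant

open scoped FourierTransform SchwartzMap

variable {V : Type*} [NormedAddCommGroup V] [InnerProductSpace ℝ V] [FiniteDimensional ℝ V]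
  [MeasurableSpace V] [BorelSpace V]

lemma fourier_compSubConstCLM (g : 𝓢(V, ℂ)) (ω x : V) :
    𝓕 (g.compSubConstCLM ℂ (-ω)) x = planeWave ω x * 𝓕 g x := by
  have h := congrFun (VectorFourier.fourierIntegral_comp_add_right Real.fourierChar
    (volume : Measure V) (innerₗ V) g ω) x
  have hshift : ⇑(g.compSubConstCLM ℂ (-ω)) = g ∘ fun v ↦ v + ω := by
    ext v
    simp
  rw [SchwartzMap.fourier_coe, SchwartzMap.fourier_coe, hshift]
  exact h

/-- The spectrum of `‖𝓕 g‖ ^ 2` is the autocorrelation of `g`, which lives in the difference set of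
the support of `g`. -/
lemma integral_planeWave_mul_norm_fourier_sq (g : 𝓢(V, ℂ)) {δ : ℝ}
    (hg : ∀ v, δ ≤ ‖v‖ → g v = 0) {ω : V} (hω : 2 * δ ≤ ‖ω‖) :
    ∫ x, planeWave ω x * (‖𝓕 g x‖ ^ 2 : ℝ) = 0 := by
  have hfourier x : planeWave ω x * (‖𝓕 g x‖ ^ 2 : ℝ) =
      inner ℂ (𝓕 g x) (𝓕 (g.compSubConstCLM ℂ (-ω)) x) := by
    rw [fourier_compSubConstCLM, RCLike.inner_apply, mul_assoc, Complex.mul_conj,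
      Complex.normSq_eq_norm_sq]
  simp_rw [hfourier]
  rw [SchwartzMap.integral_inner_fourier_fourier]
  refine integral_eq_zero_of_ae (.of_forall fun v ↦ ?_)
  simp only [SchwartzMap.compSubConstCLM_apply, sub_neg_eq_add, Pi.zero_apply]
  rcases le_or_gt δ ‖v‖ with hv | hv
  · rw [hg v hv, inner_zero_left]
  · have hsub := norm_sub_le (v + ω) v
    rw [add_sub_cancel_left] at hsub
    rw [hg (v + ω) (by linarith), inner_zero_right]

lemma re_fourier_ofReal {f : V → ℝ} (hf : Integrable f) (x : V) :
    (𝓕 (fun v ↦ (f v : ℂ)) x).re = ∫ v, Real.cos (2 * Real.pi * ⟪v, x⟫) * f v := by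
  have hint : Integrable fun v ↦ Real.fourierChar (-⟪v, x⟫) • (f v : ℂ) :=
    (Real.fourierIntegral_convergent_iff x).2 hf.ofReal
  rw [Real.fourier_eq, ← RCLike.re_eq_complex_re, ← integral_re hint]
  congr 1 with v
  simp [Circle.smul_def, Real.fourierChar_apply, Complex.exp_re]

lemma integral_div_two_le_norm_fourier {f : V → ℝ} (hf : Integrable f) (hf0 : ∀ v, 0 ≤ f v) {δ : ℝ}
    (hfδ : ∀ v, δ ≤ ‖v‖ → f v = 0) {x : V} (hx : 2 * Real.pi * (δ * ‖x‖) ≤ 1) :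
    (∫ v, f v) / 2 ≤ ‖𝓕 (fun v ↦ (f v : ℂ)) x‖ := by
  refine le_trans ?_ (Complex.re_le_norm _)
  rw [re_fourier_ofReal hf, ← integral_div]
  refine integral_mono (hf.div_const _) (hf.bdd_mul (c := 1)
    (Continuous.aestronglyMeasurable (by fun_prop))
    (.of_forall fun v ↦ Real.abs_cos_le_one _)) fun v ↦ ?_
  rcases le_or_gt δ ‖v‖ with hv | hv
  · simp [hfδ v hv]
  have harg : |2 * Real.pi * ⟪v, x⟫| ≤ 1 := by
    rw [abs_mul, abs_of_pos (by positivity)]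
    refine le_trans ?_ hx
    gcongr
    exact (abs_real_inner_le_norm v x).trans (by gcongr)
  have hcos : 1 / 2 ≤ Real.cos (2 * Real.pi * ⟪v, x⟫) := by
    linarith [Real.one_sub_sq_div_two_le_cos (x := 2 * Real.pi * ⟪v, x⟫),
      (sq_le_one_iff_abs_le_one _).2 harg]
  calc f v / 2 = 1 / 2 * f v := by ring
    _ ≤ Real.cos (2 * Real.pi * ⟪v, x⟫) * f v := by
      gcongr
      exact hf0 v

lemma bandLimited_withDensity_norm_fourier_sq (g : 𝓢(V, ℂ)) {δ : ℝ}
    (hg : ∀ v, δ ≤ ‖v‖ → g v = 0) {c : ℝ} (hc : 0 ≤ c) :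
    BandLimited (volume.withDensity fun x ↦ ENNReal.ofReal (‖𝓕 g x‖ ^ 2 / c)) (2 * δ) := by
  intro ω hω
  have := (𝓕 g).continuous
  rw [integral_withDensity_eq_integral_toReal_smul (by fun_prop) (by simp)]
  have hweight x : (ENNReal.ofReal (‖𝓕 g x‖ ^ 2 / c)).toReal • planeWave ω x =
      (c : ℂ)⁻¹ * (planeWave ω x * (‖𝓕 g x‖ ^ 2 : ℝ)) := by
    rw [ENNReal.toReal_ofReal (by positivity), Complex.real_smul, Complex.ofReal_div]
    ring
  simp_rw [hweight]
  rw [integral_const_mul, integral_planeWave_mul_norm_fourier_sq g hg hω, mul_zero]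

lemma exists_bandLimited (R : ℝ) : ∃ m : Measure V, IsFiniteMeasure m ∧
    (∃ r, 0 ≤ r ∧ BandLimited m r) ∧ (volume : Measure V).restrict (ball 0 R) ≤ m := by
  set δ : ℝ := (2 * Real.pi * (|R| + 1))⁻¹ with hδ
  have hδ0 : 0 < δ := by positivity
  let φ : ContDiffBump (0 : V) := ⟨δ / 2, δ, half_pos hδ0, half_lt_self hδ0⟩
  have hφ v (hv : δ ≤ ‖v‖) : φ v = 0 := φ.zero_of_le_dist (by rwa [dist_zero_right])
  have hcs : HasCompactSupport fun v ↦ (φ v : ℂ) :=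
    φ.hasCompactSupport.comp_left (g := fun z : ℝ ↦ (z : ℂ)) Complex.ofReal_zero
  let g : 𝓢(V, ℂ) := hcs.toSchwartzMap (Complex.ofRealCLM.contDiff.comp φ.contDiff)
  have hg v (hv : δ ≤ ‖v‖) : g v = 0 := congrArg Complex.ofReal (hφ v hv)
  have hφ0 : 0 < ∫ v, φ v := φ.integral_pos
  set c : ℝ := ((∫ v, φ v) / 2) ^ 2 with hc
  have hintg : Integrable (fun x ↦ ‖𝓕 g x‖ ^ 2 / c) (volume : Measure V) :=
    (((𝓕 g).memLp 2 volume).integrable_norm_pow two_ne_zero).div_const c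
  refine ⟨_, isFiniteMeasure_withDensity_ofReal hintg.2,
    ⟨2 * δ, by positivity, bandLimited_withDensity_norm_fourier_sq g hg (by positivity)⟩, ?_⟩
  rw [← withDensity_indicator_one measurableSet_ball]
  refine withDensity_mono (.of_forall (indicator_le fun x hx ↦ ?_))
  rw [Pi.one_apply, ENNReal.one_le_ofReal, one_le_div (by positivity), hc]
  gcongr
  refine integral_div_two_le_norm_fourier φ.integrable (fun _ ↦ φ.nonneg) hφ ?_
  have hxR : ‖x‖ ≤ |R| + 1 := by linarith [mem_ball_zero_iff.1 hx, le_abs_self R]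
  calc 2 * Real.pi * (δ * ‖x‖) ≤ 2 * Real.pi * (δ * (|R| + 1)) := by gcongr
    _ = 1 := by rw [hδ]; field_simp

end Majorant

/-! ### Curves of nonvanishing torsion are nondegenerate -/

section Nondegenerate

lemma mul_abs_sub_le_of_le_abs_deriv {f f' : ℝ → ℝ} (hf : ∀ x, HasDerivAt f (f' x) x) {c x y : ℝ}
    (hc : ∀ ξ ∈ uIcc x y, c ≤ |f' ξ|) : c * |x - y| ≤ |f x - f y| := by
  wlog hxy : x < y generalizing x y
  · rcases (not_lt.1 hxy).eq_or_lt with rfl | hlt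
    · simp
    · rw [abs_sub_comm x, abs_sub_comm (f x)]
      exact this (uIcc_comm x y ▸ hc) hlt
  obtain ⟨ξ, hξ, hslope⟩ := exists_hasDerivAt_eq_slope f f' hxy
    (fun z _ ↦ (hf z).continuousAt.continuousWithinAt) fun z _ ↦ hf z
  have hcξ := hc ξ (uIcc_of_le hxy.le ▸ Ioo_subset_Icc_self hξ)
  rwa [hslope, abs_div, le_div_iff₀ (abs_pos.2 (sub_pos.2 hxy).ne'), abs_sub_comm y,
    abs_sub_comm (f y)] at hcξ

lemma abs_sub_le_of_abs_deriv_le {f f' : ℝ → ℝ} (hf : ∀ x, HasDerivAt f (f' x) x) {c x y : ℝ}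
    (hc : ∀ ξ ∈ uIcc x y, |f' ξ| ≤ c) : |f x - f y| ≤ c * |x - y| :=
  (convex_uIcc x y).norm_image_sub_le_of_norm_hasDerivWithin_le
    (fun ξ _ ↦ (hf ξ).hasDerivWithinAt) hc right_mem_uIcc left_mem_uIcc

variable {V : Type*} [NormedAddCommGroup V] [InnerProductSpace ℝ V] {γ γ' γ'' n : ℝ → V}
  {U W : Set ℝ} {c₁ c₂ : ℝ}

lemma QuadNondeg.mono (h : QuadNondeg γ W c₁ c₂) (hUW : U ⊆ W) : QuadNondeg γ U c₁ c₂ := by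
  intro θ₀ hθ₀
  obtain ⟨L, hL, hL2, hsep⟩ := h θ₀ (hUW hθ₀)
  exact ⟨L, hL, fun θ hθ ↦ hL2 θ (hUW hθ),
    fun d hd θ₁ hθ₁ θ₂ hθ₂ ↦ hsep d hd θ₁ (hUW hθ₁) θ₂ (hUW hθ₂)⟩

lemma quadNondeg_of_normal (hγ : ∀ θ, HasDerivAt γ (γ' θ) θ)
    (hγ' : ∀ θ, HasDerivAt γ' (γ'' θ) θ) (hU : U.OrdConnected) (hc₁ : 0 ≤ c₁)
    (hn : ∀ θ ∈ U, ‖n θ‖ ≤ c₂) (hnγ : ∀ θ, ⟪n θ, γ θ⟫ = 0) (hnγ' : ∀ θ, ⟪n θ, γ' θ⟫ = 0)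
    (hlow : ∀ θ₀ ∈ U, ∀ θ ∈ U, c₁ ≤ |⟪n θ₀, γ'' θ⟫|)
    (hup : ∀ θ₀ ∈ U, ∀ θ ∈ U, |⟪n θ₀, γ'' θ⟫| ≤ c₂) : QuadNondeg γ U c₁ c₂ := by
  intro θ₀ hθ₀
  have hd θ : HasDerivAt (fun θ ↦ ⟪n θ₀, γ θ⟫) ⟪n θ₀, γ' θ⟫ θ := by
    simpa using (hasDerivAt_const θ (n θ₀)).inner ℝ (hγ θ)
  have hd' θ : HasDerivAt (fun θ ↦ ⟪n θ₀, γ' θ⟫) ⟪n θ₀, γ'' θ⟫ θ := by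
    simpa using (hasDerivAt_const θ (n θ₀)).inner ℝ (hγ' θ)
  have hderiv ξ (hξ : ξ ∈ U) :
      c₁ * |ξ - θ₀| ≤ |⟪n θ₀, γ' ξ⟫| ∧ |⟪n θ₀, γ' ξ⟫| ≤ c₂ * |ξ - θ₀| := by
    have hsub := hU.uIcc_subset hξ hθ₀
    have h₁ := mul_abs_sub_le_of_le_abs_deriv hd' fun ζ hζ ↦ hlow θ₀ hθ₀ ζ (hsub hζ)
    have h₂ := abs_sub_le_of_abs_deriv_le hd' fun ζ hζ ↦ hup θ₀ hθ₀ ζ (hsub hζ)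
    rw [hnγ', sub_zero] at h₁ h₂
    exact ⟨h₁, h₂⟩
  refine ⟨innerSL ℝ (n θ₀), fun x ↦ ?_, fun θ hθ ↦ ?_, fun d _ θ₁ hθ₁ θ₂ hθ₂ hsep ↦ ?_⟩ <;>
    simp only [innerSL_apply_apply]
  · exact (abs_real_inner_le_norm _ _).trans (by gcongr; exact hn θ₀ hθ₀)
  · have hc₂ : 0 ≤ c₂ := (norm_nonneg _).trans (hn θ₀ hθ₀)
    have h := abs_sub_le_of_abs_deriv_le (x := θ) (y := θ₀) (c := c₂ * |θ - θ₀|) hd fun ξ hξ ↦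
      (hderiv ξ (hU.uIcc_subset hθ hθ₀ hξ)).2.trans
        (mul_le_mul_of_nonneg_left (abs_sub_left_of_mem_uIcc (uIcc_comm θ θ₀ ▸ hξ)) hc₂)
    rwa [hnγ, sub_zero, mul_assoc, abs_mul_abs_self, ← sq] at h
  · refine mul_abs_sub_le_of_le_abs_deriv hd fun ξ hξ ↦
      le_trans ?_ (hderiv ξ (hU.uIcc_subset hθ₁ hθ₂ hξ)).1
    gcongr
    rw [mem_uIcc] at hξ
    rw [le_abs]
    rcases hsep with hsep | hsep
    · left; rcases hξ with hξ | hξ <;> linarith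
    · right; rcases hξ with hξ | hξ <;> linarith

lemma exists_quadNondeg_ball_of_normal (hγ : ContDiff ℝ 2 γ) (hn : Continuous n)
    (hnγ : ∀ θ, ⟪n θ, γ θ⟫ = 0) (hnγ' : ∀ θ, ⟪n θ, deriv γ θ⟫ = 0) {p : ℝ}
    (hp : ⟪n p, deriv (deriv γ) p⟫ ≠ 0) :
    ∃ ε c₁ c₂ : ℝ, 0 < ε ∧ 0 < c₁ ∧ 0 < c₂ ∧ QuadNondeg γ (ball p ε) c₁ c₂ := by
  have hγ₁ : ContDiff ℝ 1 (deriv γ) :=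
    (contDiff_succ_iff_deriv.1 (hγ.of_le one_add_one_eq_two.le : ContDiff ℝ (1 + 1) γ)).2.2
  have : Continuous (deriv (deriv γ)) := hγ₁.continuous_deriv le_rfl
  have hH : Continuous fun q : ℝ × ℝ ↦ |⟪n q.1, deriv (deriv γ) q.2⟫| := by fun_prop
  have hN : Continuous fun q : ℝ × ℝ ↦ ‖n q.1‖ := by fun_prop
  have hpos := abs_pos.2 hp
  obtain ⟨c₂, hc₂⟩ := exists_gt (max |⟪n p, deriv (deriv γ) p⟫| ‖n p‖)
  obtain ⟨hHc₂, hNc₂⟩ := max_lt_iff.1 hc₂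
  obtain ⟨ε, hε, hball⟩ := Metric.eventually_nhds_iff_ball.1 <|
    (hH.continuousAt.eventually (lt_mem_nhds (half_lt_self hpos))).and <|
    (hH.continuousAt.eventually (gt_mem_nhds hHc₂)).and <|
    hN.continuousAt (x := (p, p)).eventually (gt_mem_nhds hNc₂)
  rw [← ball_prod_same] at hball
  have hball x (hx : x ∈ ball p ε) y (hy : y ∈ ball p ε) := hball (x, y) (mk_mem_prod hx hy)
  exact ⟨ε, _, c₂, hε, half_pos hpos, hpos.trans hHc₂, quadNondeg_of_normal
    (fun θ ↦ (hγ.differentiable two_ne_zero θ).hasDerivAt)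
    (fun θ ↦ (hγ₁.differentiable one_ne_zero θ).hasDerivAt) (convex_ball p ε).ordConnected
    (half_pos hpos).le (fun θ hθ ↦ (hball θ hθ θ hθ).2.2.le) hnγ hnγ'
    (fun θ₀ hθ₀ θ hθ ↦ (hball θ₀ hθ₀ θ hθ).1.le)
    fun θ₀ hθ₀ θ hθ ↦ (hball θ₀ hθ₀ θ hθ).2.1.le⟩

end Nondegenerate

/-- Mathlib's cross product on `Fin 3 → ℝ`, transported to Euclidean space. -/
def cross (u v : E3) : E3 := WithLp.toLp 2 (crossProduct u.ofLp v.ofLp)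

lemma continuous_cross : Continuous fun q : E3 × E3 ↦ cross q.1 q.2 := by
  simp only [cross, cross_apply]
  fun_prop

lemma inner_cross (u v x : E3) : ⟪cross u v, x⟫ = Matrix.det ![u.ofLp, v.ofLp, x.ofLp] := by
  rw [← triple_product_eq_det, ← triple_product_permutation]
  simp [cross, EuclideanSpace.inner_eq_star_dotProduct]

lemma inner_cross_self_left (u v : E3) : ⟪cross u v, u⟫ = 0 := by
  simp [cross, EuclideanSpace.inner_eq_star_dotProduct]

lemma inner_cross_self_right (u v : E3) : ⟪cross u v, v⟫ = 0 := by
  simp [cross, EuclideanSpace.inner_eq_star_dotProduct]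

lemma inner_cross_ne_zero {u v x : E3} (h : LinearIndependent ℝ ![u, v, x]) :
    ⟪cross u v, x⟫ ≠ 0 := by
  have hrows : LinearIndependent ℝ (Matrix.of ![u.ofLp, v.ofLp, x.ofLp]).row := by
    have hmap := h.map' (WithLp.linearEquiv 2 ℝ (Fin 3 → ℝ)).toLinearMap (LinearEquiv.ker _)
    have hrow : (Matrix.of ![u.ofLp, v.ofLp, x.ofLp]).row =
        (WithLp.linearEquiv 2 ℝ (Fin 3 → ℝ)).toLinearMap ∘ ![u, v, x] := by
      ext i j
      fin_cases i <;> rfl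
    rwa [hrow]
  rw [inner_cross]
  exact ((Matrix.isUnit_iff_isUnit_det _).1
    (Matrix.linearIndependent_rows_iff_isUnit.1 hrows)).ne_zero

lemma exists_quadNondeg_ball {γ : ℝ → E3} (hγ : ContDiff ℝ 2 γ) {p : ℝ}
    (hp : LinearIndependent ℝ ![γ p, deriv γ p, deriv (deriv γ) p]) :
    ∃ ε c₁ c₂ : ℝ, 0 < ε ∧ 0 < c₁ ∧ 0 < c₂ ∧ QuadNondeg γ (ball p ε) c₁ c₂ := by
  refine exists_quadNondeg_ball_of_normal hγ (n := fun θ ↦ cross (γ θ) (deriv γ θ)) ?_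
    (fun θ ↦ inner_cross_self_left _ _) (fun θ ↦ inner_cross_self_right _ _)
    (inner_cross_ne_zero hp)
  exact continuous_cross.comp (hγ.continuous.prodMk (hγ.continuous_deriv one_le_two))

lemma exists_mul_abs_sub_le_norm_sub {F : Type*} [NormedAddCommGroup F] [NormedSpace ℝ F]
    {γ : ℝ → F} {v : F} {p : ℝ} (hγ : HasStrictDerivAt γ v p) (hv : v ≠ 0) :
    ∃ ε c : ℝ, 0 < ε ∧ 0 < c ∧
      ∀ θ ∈ ball p ε, ∀ θ' ∈ ball p ε, c * |θ - θ'| ≤ ‖γ θ - γ θ'‖ := by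
  have hv0 := half_pos (norm_pos_iff.2 hv)
  obtain ⟨ε, hε, hball⟩ :=
    Metric.eventually_nhds_iff_ball.1 (hγ.hasStrictFDerivAt.isLittleO.def hv0)
  rw [← ball_prod_same] at hball
  refine ⟨ε, ‖v‖ / 2, hε, hv0, fun θ hθ θ' hθ' ↦ ?_⟩
  have hlin := hball (θ, θ') (mk_mem_prod hθ hθ')
  simp only [ContinuousLinearMap.toSpanSingleton_apply] at hlin
  have htri := norm_sub_norm_le ((θ - θ') • v) (γ θ - γ θ')
  rw [norm_sub_rev _ (γ θ - γ θ'), norm_smul] at htri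
  rw [← Real.norm_eq_abs]
  linarith

/-! ### Pieces of bounded Hausdorff density -/

section Density

variable {X : Type*} [MetricSpace X] [MeasurableSpace X]

/-- The points around which the balls of radius at most one have `μ`-measure at most `k` times
their radius to the power `t`. -/
def boundedDensity (μ : Measure X) (t : ℝ) (k : ℕ) : Set X :=
  {x | ∀ r, 0 < r → r ≤ 1 → μ (closedBall x r) ≤ k * ENNReal.ofReal r ^ t}

lemma monotone_boundedDensity (μ : Measure X) (t : ℝ) : Monotone (boundedDensity μ t) :=
  fun k l hkl x hx r hr hr1 ↦ (hx r hr hr1).trans (by gcongr)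

lemma ediam_closedBall_five_mul_rpow_le (μ : Measure X) [IsFiniteMeasure μ] {t : ℝ} (ht : 0 < t)
    {k : ℕ} {x : X} {r : ℝ} (hr : k * ENNReal.ofReal r ^ t < μ (closedBall x r)) :
    ediam (closedBall x (5 * r)) ^ t ≤ 10 ^ t * (μ (closedBall x r) / k) := by
  have hr0 : 0 ≤ r := by
    by_contra! hneg
    simp [closedBall_eq_empty.2 hneg] at hr
  calc ediam (closedBall x (5 * r)) ^ t ≤ (10 * ENNReal.ofReal r) ^ t := by
        refine ENNReal.rpow_le_rpow ?_ ht.le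
        rw [← closedEBall_ofReal (by positivity), ENNReal.ofReal_mul (by norm_num)]
        refine ediam_closedEBall_le.trans_eq ?_
        rw [← mul_assoc]
        norm_num
    _ = 10 ^ t * ENNReal.ofReal r ^ t := ENNReal.mul_rpow_of_nonneg _ _ ht.le
    _ ≤ 10 ^ t * (μ (closedBall x r) / k) := by
        gcongr
        rw [ENNReal.le_div_iff_mul_le (.inr (bot_le.trans_lt hr).ne')
          (.inr (measure_ne_top _ _)), mul_comm]
        exact hr.le

variable [BorelSpace X] (μ : Measure X) [IsFiniteMeasure μ] {t : ℝ}

lemma exists_disjoint_closedBall_cover (t : ℝ) (k : ℕ) :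
    ∃ (u : Set X) (r : X → ℝ), u.Countable ∧ u.PairwiseDisjoint (fun x ↦ closedBall x (r x)) ∧
      (∀ x ∈ u, k * ENNReal.ofReal (r x) ^ t < μ (closedBall x (r x))) ∧
      (⋃ k, boundedDensity μ t k)ᶜ ⊆ ⋃ x : u, closedBall x.1 (5 * r x) := by
  have hdense x (hx : x ∈ (⋃ k, boundedDensity μ t k)ᶜ) :
      ∃ r, 0 < r ∧ r ≤ 1 ∧ k * ENNReal.ofReal r ^ t < μ (closedBall x r) := by
    have hk : x ∉ boundedDensity μ t k := fun h ↦ hx (mem_iUnion.2 ⟨k, h⟩)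
    simpa [boundedDensity] using hk
  choose! r hr0 hr1 hr using hdense
  obtain ⟨u, hu, hdisj, hcov⟩ := Vitali.exists_disjoint_subfamily_covering_enlargement_closedBall
    (⋃ k, boundedDensity μ t k)ᶜ id r 1 hr1 5 (by norm_num)
  refine ⟨u, r, ?_, hdisj, fun x hx ↦ hr x (hu hx), fun x hx ↦ ?_⟩
  · have hcount := Measure.countable_meas_pos_of_disjoint_iUnion (μ := μ)
      (As := fun x : u ↦ closedBall x.1 (r x)) (fun x ↦ measurableSet_closedBall)
      fun x y hxy ↦ hdisj x.2 y.2 (Subtype.coe_injective.ne hxy)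
    have hpos : {x : u | 0 < μ (closedBall x.1 (r x))} = univ :=
      eq_univ_of_forall fun x ↦ bot_le.trans_lt (hr x.1 (hu x.2))
    rwa [hpos, countable_univ_iff] at hcount
  · obtain ⟨y, hy, hxy⟩ := hcov x hx
    exact mem_iUnion.2 ⟨⟨y, hy⟩, hxy (mem_closedBall_self (hr0 x hx).le)⟩

lemma hausdorffMeasure_compl_iUnion_boundedDensity (ht : 0 < t) :
    μH[t] (⋃ k, boundedDensity μ t k)ᶜ = 0 := by
  choose u r hcount hdisj hr hcov using exists_disjoint_closedBall_cover μ t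
  have : ∀ k, Countable (u k) := fun k ↦ (hcount k).to_subtype
  have hlim : Filter.Tendsto (fun k : ℕ ↦ 10 ^ t * (μ univ / k)) .atTop (nhds 0) := by
    have h := ENNReal.Tendsto.const_mul (a := 10 ^ t) (ENNReal.Tendsto.const_div
      ENNReal.tendsto_nat_nhds_top (.inr (measure_ne_top μ univ))) (.inr (by simp))
    rwa [ENNReal.div_top, mul_zero] at h
  have hdiam k (x : u k) : ediam (closedBall x.1 (5 * r k x)) ≤
      (10 ^ t * (μ univ / k)) ^ t⁻¹ := by
    rw [ENNReal.le_rpow_inv_iff ht]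
    refine (ediam_closedBall_five_mul_rpow_le μ ht (hr k x x.2)).trans ?_
    gcongr
    exact subset_univ _
  have hsum k : ∑' x : u k, ediam (closedBall x.1 (5 * r k x)) ^ t ≤ 10 ^ t * (μ univ / k) :=
    calc ∑' x : u k, ediam (closedBall x.1 (5 * r k x)) ^ t
        ≤ ∑' x : u k, 10 ^ t * (μ (closedBall x.1 (r k x)) / k) := ENNReal.tsum_le_tsum fun x ↦
          ediam_closedBall_five_mul_rpow_le μ ht (hr k x x.2)
      _ = 10 ^ t * ((∑' x : u k, μ (closedBall x.1 (r k x))) / k) := by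
        simp only [div_eq_mul_inv, ENNReal.tsum_mul_left, ENNReal.tsum_mul_right]
      _ ≤ 10 ^ t * (μ univ / k) := by
        gcongr
        exact (tsum_meas_le_meas_iUnion_of_disjoint μ (As := fun x : u k ↦ closedBall x.1 (r k x))
          (fun x ↦ measurableSet_closedBall)
          fun x y hxy ↦ hdisj k x.2 y.2 (Subtype.coe_injective.ne hxy)).trans
          (measure_mono (subset_univ _))
  have hlim' := hlim.ennrpow_const t⁻¹
  rw [ENNReal.zero_rpow_of_pos (inv_pos.2 ht)] at hlim'
  refine le_antisymm ?_ bot_le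
  calc μH[t] (⋃ k, boundedDensity μ t k)ᶜ
      ≤ Filter.liminf (fun k ↦ ∑' x : u k, ediam (closedBall x.1 (5 * r k x)) ^ t) .atTop :=
        Measure.hausdorffMeasure_le_liminf_tsum t _ _ hlim' _ (.of_forall hdiam) (.of_forall hcov)
    _ ≤ Filter.liminf (fun k : ℕ ↦ 10 ^ t * (μ univ / k)) .atTop :=
        Filter.liminf_le_liminf (.of_forall hsum)
    _ = 0 := hlim.liminf_eq

end Density

section DensityPiece

variable {V : Type*} [NormedAddCommGroup V] [MeasurableSpace V] [BorelSpace V]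

/-- The restriction of `μ` to its points of `t`-density at most `k` in the ball of radius `k`. -/
def densityPiece (μ : Measure V) (t : ℝ) (k : ℕ) : Measure V :=
  μ.restrict (boundedDensity μ t k ∩ ball 0 k)

instance (μ : Measure V) [IsFiniteMeasure μ] (t : ℝ) (k : ℕ) :
    IsFiniteMeasure (densityPiece μ t k) :=
  inferInstanceAs (IsFiniteMeasure (μ.restrict _))

lemma densityPiece_compl_ball (μ : Measure V) (t : ℝ) (k : ℕ) :
    densityPiece μ t k (ball 0 k)ᶜ = 0 := by
  rw [densityPiece, Measure.restrict_apply measurableSet_ball.compl]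
  exact measure_mono_null (fun x hx ↦ hx.1 hx.2.2) measure_empty

lemma densityPiece_closedBall_le (μ : Measure V) [IsFiniteMeasure μ] {t : ℝ} (ht : 0 < t) (k : ℕ)
    (y : V) {ρ : ℝ} (hρ : 0 < ρ) : densityPiece μ t k (closedBall y ρ) ≤
      ENNReal.ofReal ((k + μ.real univ) * 2 ^ t * ρ ^ t) := by
  rw [densityPiece, Measure.restrict_apply measurableSet_closedBall, mul_assoc,
    ← Real.mul_rpow zero_le_two hρ.le, ENNReal.ofReal_mul (by positivity),
    ENNReal.ofReal_add (by positivity) measureReal_nonneg, ENNReal.ofReal_natCast,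
    ofReal_measureReal, ← ENNReal.ofReal_rpow_of_nonneg (by positivity) ht.le]
  rcases le_or_gt (2 * ρ) 1 with hρ2 | hρ2
  · obtain h | ⟨x, hx⟩ :=
      (closedBall y ρ ∩ (boundedDensity μ t k ∩ ball 0 k)).eq_empty_or_nonempty
    · simp [h]
    calc μ (closedBall y ρ ∩ (boundedDensity μ t k ∩ ball 0 k))
        ≤ μ (closedBall x (2 * ρ)) := by
          refine measure_mono (inter_subset_left.trans (closedBall_subset_closedBall' ?_))
          linarith [mem_closedBall'.1 hx.1]
      _ ≤ k * ENNReal.ofReal (2 * ρ) ^ t := hx.2.1 _ (by positivity) hρ2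
      _ ≤ (k + μ univ) * ENNReal.ofReal (2 * ρ) ^ t := by
          gcongr
          exact le_self_add
  · calc μ (closedBall y ρ ∩ (boundedDensity μ t k ∩ ball 0 k)) ≤ μ univ :=
          measure_mono (subset_univ _)
      _ ≤ (k + μ univ) * 1 := by rw [mul_one]; exact le_add_self
      _ ≤ (k + μ univ) * ENNReal.ofReal (2 * ρ) ^ t := by
          gcongr
          exact ENNReal.one_le_rpow (ENNReal.one_le_ofReal.2 hρ2.le) ht

lemma exists_densityPiece_pos {t : ℝ} (ht : 0 < t) {A B : Set V} (hA : μH[t] A < ∞) (hBA : B ⊆ A)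
    (hB : 0 < μH[t] B) : ∃ k, 0 < densityPiece ((μH[t]).restrict A) t k B := by
  set μ := (μH[t] : Measure V).restrict A
  have : IsFiniteMeasure μ := ⟨by rwa [Measure.restrict_apply_univ]⟩
  by_contra! h
  refine hB.ne' (measure_mono_null (t := (⋃ k, boundedDensity μ t k)ᶜ ∪
    ⋃ k, B ∩ (boundedDensity μ t k ∩ ball 0 k)) (fun x hx ↦ ?_) (measure_union_null
      (hausdorffMeasure_compl_iUnion_boundedDensity μ ht) (measure_iUnion_null fun k ↦ ?_)))
  · by_cases hxk : x ∈ ⋃ k, boundedDensity μ t k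
    · obtain ⟨k, hk⟩ := mem_iUnion.1 hxk
      obtain ⟨n, hn⟩ := exists_nat_gt ‖x‖
      refine .inr (mem_iUnion.2
        ⟨max k n, hx, monotone_boundedDensity μ t (le_max_left _ _) hk, ?_⟩)
      exact mem_ball_zero_iff.2 (hn.trans_le (by exact_mod_cast le_max_right k n))
    · exact .inl hxk
  · refine le_antisymm ?_ bot_le
    calc μH[t] (B ∩ (boundedDensity μ t k ∩ ball 0 k))
        = μ (B ∩ (boundedDensity μ t k ∩ ball 0 k)) :=
          (Measure.restrict_eq_self _ (inter_subset_left.trans hBA)).symm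
      _ ≤ densityPiece μ t k B := Measure.le_restrict_apply _ _
      _ ≤ 0 := h k

end DensityPiece

/-! ### Exceptional directions -/

section Exceptional

/-- The directions in `I` along which some piece of `μ` of bounded density has a projection that
is not absolutely continuous. -/
def singularDirections (γ : ℝ → E3) (I : Set ℝ) (μ : Measure E3) (t : ℝ) : Set ℝ :=
  ⋃ k, {θ ∈ I | ¬ (densityPiece μ t k).map (fun x ↦ ⟪x, γ θ⟫) ≪ volume}

lemma exists_ball_hausdorffMeasure_not_absolutelyContinuous {γ : ℝ → E3} {I : Set ℝ}
    (hγ : ContDiff ℝ 2 γ) (hsphere : ∀ θ ∈ I, ‖γ θ‖ = 1) {p : ℝ}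
    (hp : LinearIndependent ℝ ![γ p, deriv γ p, deriv (deriv γ) p])
    (μ : Measure E3) [IsFiniteMeasure μ] {t σ : ℝ} (ht : 0 < t) (hσ : 0 < σ)
    (hσt : (3 - t) / 2 < σ) (k : ℕ) : ∃ ε, 0 < ε ∧
      μH[σ] {θ ∈ ball p ε ∩ I |
        ¬ (densityPiece μ t k).map (fun x ↦ ⟪x, γ θ⟫) ≪ volume} = 0 := by
  obtain ⟨ε₁, c₁, c₂, hε₁, hc₁, hc₂, hQ⟩ := exists_quadNondeg_ball hγ hp
  obtain ⟨ε₂, c₃, hε₂, hc₃, hlow⟩ := exists_mul_abs_sub_le_norm_sub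
    (hγ.contDiffAt.hasStrictDerivAt two_ne_zero) (hp.ne_zero 1)
  obtain ⟨m, hm, ⟨r, hr, hband⟩, hmR⟩ := exists_bandLimited (V := E3) (k + 1)
  have hsub₁ : ball p (min ε₁ ε₂) ∩ I ⊆ ball p ε₁ :=
    inter_subset_left.trans (ball_subset_ball (min_le_left _ _))
  have hsub₂ : ball p (min ε₁ ε₂) ∩ I ⊆ ball p ε₂ :=
    inter_subset_left.trans (ball_subset_ball (min_le_right _ _))
  exact ⟨min ε₁ ε₂, lt_min hε₁ hε₂,
    hband.hausdorffMeasure_not_absolutelyContinuous hr (hQ.mono hsub₁) hc₁ hc₂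
      (fun θ hθ ↦ hsphere θ hθ.2) hc₃
      (fun θ hθ θ' hθ' ↦ hlow θ (hsub₂ hθ) θ' (hsub₂ hθ'))
      (by positivity : 0 ≤ ((k : ℝ) + μ.real univ) * 2 ^ t)
      (fun y ρ hρ _ ↦ densityPiece_closedBall_le μ ht k y hρ)
      (densityPiece_compl_ball μ t k) hmR hσ (by rwa [finrank_euclideanSpace_fin])⟩

lemma hausdorffMeasure_singularDirections {γ : ℝ → E3} {I : Set ℝ} (hγ : ContDiff ℝ 2 γ)
    (hsphere : ∀ θ ∈ I, ‖γ θ‖ = 1)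
    (hnondeg : ∀ θ ∈ I, LinearIndependent ℝ ![γ θ, deriv γ θ, deriv (deriv γ) θ])
    (μ : Measure E3) [IsFiniteMeasure μ] {t σ : ℝ} (ht : 0 < t) (hσ : 0 < σ)
    (hσt : (3 - t) / 2 < σ) : μH[σ] (singularDirections γ I μ t) = 0 := by
  refine measure_iUnion_null fun k ↦ measure_null_of_locally_null _ fun p hp ↦ ?_
  obtain ⟨ε, hε, hnull⟩ := exists_ball_hausdorffMeasure_not_absolutelyContinuous hγ hsphere
    (hnondeg p hp.1) μ ht hσ hσt k
  refine ⟨_, ?_, hnull⟩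
  filter_upwards [self_mem_nhdsWithin, mem_nhdsWithin_of_mem_nhds (ball_mem_nhds p hε)]
    with θ hθ hθp
  exact ⟨⟨hθp, hθ.1⟩, hθ.2⟩

lemma hausdorffMeasure_lineProj_image {γ : ℝ → E3} {θ : ℝ} (hθ : ‖γ θ‖ = 1) (B : Set E3) :
    μH[1] (lineProj γ θ '' B) = volume ((fun x ↦ ⟪x, γ θ⟫) '' B) := by
  have hiso : Isometry fun s : ℝ ↦ s • γ θ := Isometry.of_dist_eq fun s s' ↦ by
    rw [dist_eq_norm, ← sub_smul, norm_smul, hθ, mul_one, dist_eq_norm]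
  have himage : lineProj γ θ '' B = (fun s : ℝ ↦ s • γ θ) '' ((fun x ↦ ⟪x, γ θ⟫) '' B) := by
    rw [image_image]
    rfl
  rw [himage, hiso.hausdorffMeasure_image (.inl zero_le_one), hausdorffMeasure_real]

lemma exists_measurableSet_dimH_le {X : Type*} [EMetricSpace X] [MeasurableSpace X] [BorelSpace X]
    {S : Set X} {s : ℝ} (hS : ∀ σ, 0 < σ → s < σ → μH[σ] S = 0) :
    ∃ E, MeasurableSet E ∧ S ⊆ E ∧ dimH E ≤ ENNReal.ofReal s := by
  obtain ⟨σ, -, hσ, hlim⟩ := exists_seq_strictAnti_tendsto (max s 0)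
  refine ⟨⋂ n, toMeasurable μH[σ n] S, .iInter fun n ↦ measurableSet_toMeasurable _ _,
    subset_iInter fun n ↦ subset_toMeasurable _ _, ?_⟩
  have hle n : dimH (⋂ n, toMeasurable μH[σ n] S) ≤ ENNReal.ofReal (σ n) := by
    have hσ0 : 0 < σ n := (le_max_right s 0).trans_lt (hσ n)
    refine (dimH_mono (iInter_subset _ n)).trans (dimH_le_of_hausdorffMeasure_ne_top ?_)
    rw [Real.coe_toNNReal _ hσ0.le, measure_toMeasurable,
      hS _ hσ0 ((le_max_left s 0).trans_lt (hσ n))]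
    exact ENNReal.zero_ne_top
  refine (ge_of_tendsto' (ENNReal.tendsto_ofReal hlim) hle).trans_eq ?_
  rw [ENNReal.ofReal_max, ENNReal.ofReal_zero, max_eq_left zero_le]

theorem uniform_exceptional_set_for_positive_measure_subsets_general {I : Set ℝ}
    (hI : MeasurableSet I) {γ : ℝ → E3} (hγ : ContDiff ℝ 2 γ) (hsphere : ∀ θ ∈ I, ‖γ θ‖ = 1)
    (hnondeg : ∀ θ ∈ I, LinearIndependent ℝ ![γ θ, deriv γ θ, deriv (deriv γ) θ])
    {t : ℝ} (ht : 0 < t) {A : Set E3} (hA : μH[t] A < ∞) :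
    ∃ E ⊆ I, MeasurableSet E ∧ dimH E ≤ ENNReal.ofReal ((3 - t) / 2) ∧
      ∀ B ⊆ A, 0 < μH[t] B → ∀ θ ∈ I \ E, 0 < μH[1] (lineProj γ θ '' B) := by
  set μ := (μH[t] : Measure E3).restrict A
  have : IsFiniteMeasure μ := ⟨by rwa [Measure.restrict_apply_univ]⟩
  obtain ⟨E, hEm, hE, hdim⟩ := exists_measurableSet_dimH_le fun σ hσ hσt ↦
    hausdorffMeasure_singularDirections hγ hsphere hnondeg μ ht hσ hσt
  refine ⟨I ∩ E, inter_subset_left, hI.inter hEm, (dimH_mono inter_subset_right).trans hdim,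
    fun B hBA hB θ hθ ↦ ?_⟩
  obtain ⟨k, hk⟩ := exists_densityPiece_pos ht hA hBA hB
  have hac : (densityPiece μ t k).map (fun x ↦ ⟪x, γ θ⟫) ≪ volume := by
    by_contra hsing
    exact hθ.2 ⟨hθ.1, hE (mem_iUnion.2 ⟨k, hθ.1, hsing⟩)⟩
  rw [hausdorffMeasure_lineProj_image (hsphere θ hθ.1), pos_iff_ne_zero]
  exact fun hnull ↦ hk.ne' (le_antisymm
    ((Measure.le_map_apply_image (by fun_prop) B).trans_eq (hac hnull)) bot_le)

end Exceptional

/-!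
STATEMENT 6: if `t > 1` and `A ⊆ ℝ³` is `H^t`-measurable with `0 < H^t(A) < ∞`,
then there is a Borel set `E ⊆ I` with `dim E ≤ (3-t)/2` such that for every
`H^t`-measurable `B ⊆ A` with `H^t(B) > 0` and every `θ ∈ I \ E`, the
projection `ρ_θ(B)` has positive length; the same `E` works for all such `B`.
-/

theorem uniform_exceptional_set_for_positive_measure_subsets
    -- the compact interval `I = [a, b]`
    (a b : ℝ) (hab : a ≤ b)
    -- `γ : I → S²` is a `C²` curve with `det(γ, γ', γ'') ≠ 0` on `I`
    (γ : ℝ → E3) (hγC2 : ContDiff ℝ 2 γ)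
    (hsphere : ∀ θ ∈ Icc a b, ‖γ θ‖ = 1)
    (hnondeg : ∀ θ ∈ Icc a b,
      LinearIndependent ℝ ![γ θ, deriv γ θ, deriv (deriv γ) θ])
    (t : ℝ) (ht : 1 < t)
    (A : Set E3) (hAmeas : NullMeasurableSet A μH[t])
    (hA0 : 0 < μH[t] A) (hAfin : μH[t] A < ∞) :
    ∃ E : Set ℝ, MeasurableSet E ∧ E ⊆ Icc a b ∧
      dimH E ≤ ENNReal.ofReal ((3 - t) / 2) ∧
      ∀ B : Set E3, B ⊆ A → NullMeasurableSet B μH[t] → 0 < μH[t] B →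
        ∀ θ ∈ Icc a b \ E, 0 < μH[1] (lineProj γ θ '' B) := by
  obtain ⟨E, hE, hEm, hdim, hB⟩ := uniform_exceptional_set_for_positive_measure_subsets_general
    measurableSet_Icc hγC2 hsphere hnondeg (zero_lt_one.trans ht) hAfin
  exact ⟨E, hEm, hE, hdim, fun B hBA _ ↦ hB B hBA⟩
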